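/- For every n ≥ 4, writing m = ⌊n/2⌋, the covering type of the special orthogonal group SO(n) satisfies ct(SO(n)) ≥ (4m³ + 3m² + 5m + 12)/6; that is, for every topological space Y homotopy equivalent to SO(n) and every good cover U of Y, U has at least (4m³ + 3m² + 5m + 12)/6 members. -/

import Mathlib

/-- A good cover of `Y`: a finite family of open subsets covering `Y` such that every
nonempty intersection of (finitely many) members is contractible. -/
def IsGoodCover {Y : Type*} [TopologicalSpace Y] (U : Finset (Set Y)) : Prop :=
  (∀ s ∈ U, IsOpen s) ∧ (⋃₀ (U : Set (Set Y)) = Set.univ) ∧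
    ∀ T ⊆ U, T.Nonempty → (⋂₀ (T : Set (Set Y))).Nonempty →
      ContractibleSpace ↥(⋂₀ (T : Set (Set Y)))

/-!
Mod 2 Alexander–Spanier cochains behave well on arbitrary closed sets, so the whole argument can be
run on closed subsets of matrix spaces and simplices.

Mapping a matrix to its last column fibres `SO(k + 1)` over `Sᵏ` with fibre `SO(k)`, and over each
closed hemisphere the preimage retracts onto the fibre. By Mayer–Vietoris the classes of `SO(k)` of
degree below `k` extend to `SO(k + 1)`, and a class of degree `dim SO(k)` whose product with the
class pulled back from `Sᵏ` is zero vanishes on the fibre. Inductively `SO(n)` has classes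
`y₁, …, yₙ₋₁` with `deg yᵢ = i` and nonzero product.

A space homotopy equivalent to `SO(n)` with a good cover is dominated by the polyhedron of the
nerve, which therefore also carries classes of degrees `1, …, j` with nonzero product, `j = n - 1`.
Such a polyhedron has a simplex of dimension at least `1 + ⋯ + j`. The class of degree `j` vanishes
on the simplex, so the product of the other classes survives on the polyhedron spanned by the
remaining vertices. Removing simplices one after the other and counting their vertices gives
`∑ i ≤ j, ((i + 1).choose 2 + 1) = (n + 1).choose 3 + n`.
-/

open Topology Set Filter

/-! ### Cochains -/

namespace AlexanderSpanier

/-- Mod 2 cochains on a set, of all degrees at once: a `p`-cochain is a function of `p + 1` points,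
encoded as a function of a whole sequence which depends on its first `p + 1` terms only
(see `HasDegree`). This keeps the degree out of the types. -/
abbrev Cochain (X : Type*) := (ℕ → X) → ZMod 2

variable {X Y Z : Type*}

/-- A cochain has degree `p` if it depends on the terms `t 0, …, t p` of a sequence only; being
read off an encoding, this is monotone in `p`. -/
def HasDegree (p : ℕ) (φ : Cochain X) : Prop :=
  ∀ t t' : ℕ → X, (∀ i ≤ p, t i = t' i) → φ t = φ t'

/-- The increasing enumeration of `ℕ \ {i}`; precomposition with it omits the `i`-th term of a
sequence. -/
def coface (i : ℕ) : ℕ → ℕ := fun k => if k < i then k else k + 1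

/-- The coboundary `δ` on cochains of degree `p`. -/
def delta (p : ℕ) (φ : Cochain X) : Cochain X :=
  fun t => ∑ i ∈ Finset.range (p + 2), φ (t ∘ coface i)

/-- The coboundary with values in degree `p`, that is `δ` from degree `p - 1`; it is `0` for
`p = 0`, where truncated subtraction would give the wrong degree. -/
def deltaTo (p : ℕ) (φ : Cochain X) : Cochain X := if p = 0 then 0 else delta (p - 1) φ

/-- The cup product of a cochain of degree `p` with a cochain of any degree. -/
def cup (p : ℕ) (φ ψ : Cochain X) : Cochain X := fun t => φ t * ψ (fun k => t (k + p))

/-- The pullback of cochains along an arbitrary map. -/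
def pullback (f : X → Y) (φ : Cochain Y) : Cochain X := fun t => φ (f ∘ t)

/-- The sequence `f t₀, …, f tᵢ, g tᵢ, g tᵢ₊₁, …`, an ordered simplex of the prism between the
images of `t` under `f` and `g`. -/
def prismVertex (f g : X → Y) (i : ℕ) (t : ℕ → X) : ℕ → Y :=
  fun k => if k ≤ i then f (t k) else g (t (k - 1))

/-- The prism operator on cochains of degree `p`, a chain homotopy between the pullbacks along `f`
and `g`. -/
def prism (p : ℕ) (f g : X → Y) (φ : Cochain Y) : Cochain X :=
  fun t => ∑ i ∈ Finset.range p, φ (prismVertex f g i t)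

section Coboundary

@[simp]
theorem deltaTo_zero_left (φ : Cochain X) : deltaTo 0 φ = 0 := if_pos rfl

@[simp]
theorem deltaTo_succ (p : ℕ) (φ : Cochain X) : deltaTo (p + 1) φ = delta p φ :=
  if_neg p.succ_ne_zero

theorem delta_add (p : ℕ) (φ ψ : Cochain X) : delta p (φ + ψ) = delta p φ + delta p ψ := by
  funext t
  simp only [delta, Pi.add_apply, Finset.sum_add_distrib]

theorem delta_zero (p : ℕ) : delta p (0 : Cochain X) = 0 := by
  funext t
  simp only [delta, Pi.zero_apply, Finset.sum_const_zero]

theorem delta_const (p : ℕ) (c : ZMod 2) :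
    delta p (fun _ : ℕ → X => c) = fun _ => ((p + 2 : ℕ) : ZMod 2) * c := by
  funext t
  simp [delta]

theorem deltaTo_add (p : ℕ) (φ ψ : Cochain X) :
    deltaTo p (φ + ψ) = deltaTo p φ + deltaTo p ψ := by
  cases p <;> simp [delta_add]

theorem deltaTo_zero (p : ℕ) : deltaTo p (0 : Cochain X) = 0 := by
  cases p <;> simp [delta_zero]

theorem coface_comp_coface {i j : ℕ} (h : i ≤ j) :
    coface i ∘ coface j = coface (j + 1) ∘ coface i := by
  funext k
  simp only [coface, Function.comp]
  grind

theorem delta_delta (p : ℕ) (φ : Cochain X) : delta (p + 1) (delta p φ) = 0 := by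
  funext t
  simp only [delta, Pi.zero_apply]
  rw [← Finset.sum_product']
  -- The faces `(i, j)` and `(j + 1, i)` with `i ≤ j` coincide, so they cancel in pairs.
  refine Finset.sum_involution
    (fun a _ => if a.1 ≤ a.2 then (a.2 + 1, a.1) else (a.2, a.1 - 1)) ?_ ?_ ?_ ?_
  · rintro ⟨i, j⟩ _
    simp only [Function.comp_assoc]
    split_ifs with h
    · rw [coface_comp_coface h, CharTwo.add_self_eq_zero]
    · have hi : coface i = coface (i - 1 + 1) := by congr 1; omega
      rw [coface_comp_coface (i := j) (j := i - 1) (by omega), ← hi, CharTwo.add_self_eq_zero]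
  · rintro ⟨i, j⟩ _ _
    simp only
    split_ifs <;> simp <;> omega
  · rintro ⟨i, j⟩ hij
    simp only [Finset.mem_product, Finset.mem_range] at hij ⊢
    split_ifs <;> simp <;> omega
  · rintro ⟨i, j⟩ _
    simp only
    split_ifs <;> simp_all <;> omega

theorem delta_deltaTo (p : ℕ) (φ : Cochain X) : delta p (deltaTo p φ) = 0 := by
  cases p with
  | zero => rw [deltaTo_zero_left, delta_zero]
  | succ p => rw [deltaTo_succ, delta_delta]

end Coboundary

section Pullback

theorem delta_pullback (p : ℕ) (f : X → Y) (φ : Cochain Y) :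
    delta p (pullback f φ) = pullback f (delta p φ) := rfl

theorem deltaTo_pullback (p : ℕ) (f : X → Y) (φ : Cochain Y) :
    deltaTo p (pullback f φ) = pullback f (deltaTo p φ) := by
  cases p with
  | zero => rfl
  | succ p => simp only [deltaTo_succ, delta_pullback]

theorem pullback_add (f : X → Y) (φ ψ : Cochain Y) :
    pullback f (φ + ψ) = pullback f φ + pullback f ψ := rfl

theorem pullback_cup (p : ℕ) (f : X → Y) (φ ψ : Cochain Y) :
    pullback f (cup p φ ψ) = cup p (pullback f φ) (pullback f ψ) := rfl

end Pullback

section Cup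

theorem cup_add (p : ℕ) (φ ψ ψ' : Cochain X) : cup p φ (ψ + ψ') = cup p φ ψ + cup p φ ψ' := by
  funext t
  simp only [cup, Pi.add_apply, mul_add]

theorem add_cup (p : ℕ) (φ φ' ψ : Cochain X) : cup p (φ + φ') ψ = cup p φ ψ + cup p φ' ψ := by
  funext t
  simp only [cup, Pi.add_apply, add_mul]

theorem cup_zero (p : ℕ) (φ : Cochain X) : cup p φ 0 = 0 := by
  funext t
  simp only [cup, Pi.zero_apply, mul_zero]

theorem cup_assoc (p q : ℕ) (φ ψ χ : Cochain X) :
    cup (p + q) (cup p φ ψ) χ = cup p φ (cup q ψ χ) := by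
  funext t
  simp only [cup, mul_assoc, add_assoc, add_comm p q]

theorem comp_coface_shift_of_le {p i : ℕ} (h : i ≤ p) (t : ℕ → X) :
    (fun k => (t ∘ coface i) (k + p)) = fun k => t (k + (p + 1)) := by
  funext k
  simp only [Function.comp, coface]
  rw [if_neg (by omega), add_assoc]

theorem comp_coface_shift_of_lt (p i : ℕ) (t : ℕ → X) :
    (fun k => (t ∘ coface (p + 1 + i)) (k + p)) = (fun k => t (k + p)) ∘ coface (i + 1) := by
  funext k
  simp only [Function.comp, coface]
  congr 1
  split_ifs <;> omega

theorem HasDegree.apply_comp_coface {p i : ℕ} {φ : Cochain X} (h : HasDegree p φ) (hi : p < i)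
    (t : ℕ → X) : φ (t ∘ coface i) = φ t :=
  h _ _ fun j hj => by rw [Function.comp, coface, if_pos (by omega)]

theorem delta_cup (p q : ℕ) (φ ψ : Cochain X) (h : HasDegree p φ) :
    delta (p + q) (cup p φ ψ) = cup (p + 1) (delta p φ) ψ + cup p φ (delta q ψ) := by
  funext t
  simp only [delta, cup, Pi.add_apply, Finset.sum_mul, Finset.mul_sum]
  have front : ∀ i ∈ Finset.range (p + 1),
      φ (t ∘ coface i) * ψ (fun k => (t ∘ coface i) (k + p)) =
        φ (t ∘ coface i) * ψ (fun k => t (k + (p + 1))) := fun i hi => by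
    rw [comp_coface_shift_of_le (Finset.mem_range_succ_iff.1 hi)]
  have back : ∀ i ∈ Finset.range (q + 1),
      φ (t ∘ coface (p + 1 + i)) * ψ (fun k => (t ∘ coface (p + 1 + i)) (k + p)) =
        φ t * ψ ((fun k => t (k + p)) ∘ coface (i + 1)) := fun i _ => by
    rw [comp_coface_shift_of_lt, h.apply_comp_coface (by omega)]
  have middle : (fun k => t (k + p)) ∘ coface 0 = fun k => t (k + (p + 1)) := by
    funext k
    simp only [Function.comp, coface, Nat.not_lt_zero, if_false]
    congr 1
    omega
  rw [show p + q + 2 = (p + 1) + (q + 1) by ring, Finset.sum_range_add,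
    Finset.sum_range_succ (n := p + 1), Finset.sum_range_succ' (n := q + 1),
    Finset.sum_congr rfl front, Finset.sum_congr rfl back, h.apply_comp_coface p.lt_succ_self,
    middle]
  linear_combination -CharTwo.add_self_eq_zero (φ t * ψ (fun k => t (k + (p + 1))))

end Cup

section Prism

theorem sum_range_add_succ (P : ℕ → ZMod 2) (m : ℕ) :
    ∑ i ∈ Finset.range m, (P i + P (i + 1)) = P m + P 0 := by
  simpa only [CharTwo.sub_eq_add, add_comm] using Finset.sum_range_sub P m

/-- The bookkeeping behind the prism identity: in the double sum of all faces of all simplices of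
the prism, the two diagonals telescope and what is off the diagonals is the prism on the faces. -/
theorem sum_prism_faces (p : ℕ) (a b : ℕ → ℕ → ZMod 2) (P : ℕ → ZMod 2)
    (diag : ∀ i, a i i = P i) (superdiag : ∀ i, a i (i + 1) = P (i + 1))
    (below : ∀ i k, k < i → a i k = b (i - 1) k)
    (above : ∀ i k, i < k → a i (k + 1) = b i k) :
    ∑ i ∈ Finset.range (p + 1), ∑ k ∈ Finset.range (p + 2), a i k =
      P (p + 1) + P 0 + ∑ k ∈ Finset.range (p + 1), ∑ i ∈ Finset.range p, b i k := by
  have row : ∀ i ∈ Finset.range (p + 1), ∑ k ∈ Finset.range (p + 2), a i k =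
      ∑ k ∈ Finset.range i, b (i - 1) k + (P i + P (i + 1)) +
        ∑ k ∈ Finset.Ico (i + 1) (p + 1), b i k := by
    intro i hi
    have hi := Finset.mem_range.1 hi
    have right : ∑ k ∈ Finset.Ico (i + 2) (p + 2), a i k =
        ∑ k ∈ Finset.Ico (i + 1) (p + 1), b i k := by
      rw [← Finset.sum_Ico_add' (fun k => a i k) (i + 1) (p + 1) 1]
      exact Finset.sum_congr rfl fun k hk => above i k (Finset.mem_Ico.1 hk).1
    rw [← Finset.sum_range_add_sum_Ico _ (show i + 2 ≤ p + 2 by omega), Finset.sum_range_succ,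
      Finset.sum_range_succ, diag, superdiag, right,
      Finset.sum_congr rfl fun k hk => below i k (Finset.mem_range.1 hk), add_assoc (∑ k ∈ _, _)]
  have column : ∀ i ∈ Finset.range p, ∑ k ∈ Finset.range (p + 1), b i k =
      ∑ k ∈ Finset.range (i + 1), b i k + ∑ k ∈ Finset.Ico (i + 1) (p + 1), b i k :=
    fun i hi => (Finset.sum_range_add_sum_Ico _ (by have := Finset.mem_range.1 hi; omega)).symm
  rw [Finset.sum_congr rfl row, Finset.sum_add_distrib, Finset.sum_add_distrib,
    sum_range_add_succ, Finset.sum_range_succ',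
    Finset.sum_range_succ fun i => ∑ k ∈ Finset.Ico (i + 1) (p + 1), b i k, Finset.sum_comm,
    Finset.sum_congr rfl column, Finset.sum_add_distrib]
  simp only [Finset.range_zero, Finset.sum_empty, Finset.Ico_self, add_zero, Nat.add_sub_cancel]
  ring

theorem prism_delta_add_deltaTo_prism (p : ℕ) (f g : X → Y) (φ : Cochain Y) (h : HasDegree p φ) :
    prism (p + 1) f g (delta p φ) + deltaTo p (prism p f g φ) = pullback f φ + pullback g φ := by
  funext t
  have faces := sum_prism_faces p (fun i k => φ (prismVertex f g i t ∘ coface k))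
    (fun i k => φ (prismVertex f g i (t ∘ coface k)))
    (fun i => φ fun k => if k < i then f (t k) else g (t k))
    (by intro i; congr 1; funext k; simp only [prismVertex, Function.comp, coface]; grind)
    (by intro i; congr 1; funext k; simp only [prismVertex, Function.comp, coface]; grind)
    (by intro i k hk; congr 1; funext j; simp only [prismVertex, Function.comp, coface]; grind)
    (by intro i k hk; congr 1; funext j; simp only [prismVertex, Function.comp, coface]; grind)
  have top : φ (fun k => if k < p + 1 then f (t k) else g (t k)) = φ (f ∘ t) :=
    h _ _ fun i hi => if_pos (Nat.lt_succ_of_le hi)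
  have bottom : (fun k => if k < 0 then f (t k) else g (t k)) = g ∘ t := by
    funext k
    exact if_neg k.not_lt_zero
  have deltaTo_prism : deltaTo p (prism p f g φ) t =
      ∑ k ∈ Finset.range (p + 1), ∑ i ∈ Finset.range p, φ (prismVertex f g i (t ∘ coface k)) := by
    cases p with
    | zero => simp
    | succ p => rfl
  rw [Pi.add_apply, deltaTo_prism]
  change (∑ i ∈ Finset.range (p + 1), ∑ k ∈ Finset.range (p + 2),
    φ (prismVertex f g i t ∘ coface k)) + _ = φ (f ∘ t) + φ (g ∘ t)
  rw [faces, top, bottom, add_assoc, CharTwo.add_self_eq_zero, add_zero]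

end Prism

section Degree

theorem HasDegree.mono {p q : ℕ} {φ : Cochain X} (h : HasDegree p φ) (hpq : p ≤ q) :
    HasDegree q φ :=
  fun t t' ht => h t t' fun i hi => ht i (hi.trans hpq)

theorem HasDegree.zero {p : ℕ} : HasDegree p (0 : Cochain X) := fun _ _ _ => rfl

theorem HasDegree.add {p : ℕ} {φ ψ : Cochain X} (h : HasDegree p φ) (h' : HasDegree p ψ) :
    HasDegree p (φ + ψ) := fun t t' ht => by
  rw [Pi.add_apply, Pi.add_apply, h t t' ht, h' t t' ht]

protected theorem HasDegree.pullback {p : ℕ} {φ : Cochain Y} (h : HasDegree p φ) (f : X → Y) :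
    HasDegree p (pullback f φ) :=
  fun _ _ ht => h _ _ fun i hi => congrArg f (ht i hi)

protected theorem HasDegree.delta {p : ℕ} {φ : Cochain X} (h : HasDegree p φ) :
    HasDegree (p + 1) (delta p φ) :=
  fun t t' ht => Finset.sum_congr rfl fun k _ => h _ _ fun i hi => ht _ (by
    simp only [coface]
    split_ifs <;> omega)

protected theorem HasDegree.deltaTo {p : ℕ} {φ : Cochain X} (h : HasDegree (p - 1) φ) :
    HasDegree p (deltaTo p φ) := by
  cases p with
  | zero => exact (deltaTo_zero_left φ).symm ▸ HasDegree.zero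
  | succ p => exact (deltaTo_succ p φ).symm ▸ h.delta

protected theorem HasDegree.cup {p q : ℕ} {φ ψ : Cochain X} (h : HasDegree p φ)
    (h' : HasDegree q ψ) : HasDegree (p + q) (cup p φ ψ) := fun t t' ht => by
  simp only [AlexanderSpanier.cup]
  rw [h t t' fun i hi => ht i (by omega), h' _ _ fun i hi => ht (i + p) (by omega)]

protected theorem HasDegree.prism {p : ℕ} {φ : Cochain Y} (h : HasDegree p φ)
    (f g : X → Y) :
    HasDegree (p - 1) (prism p f g φ) := by
  intro t t' ht
  refine Finset.sum_congr rfl fun k hk => h _ _ fun i hi => ?_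
  have hk := Finset.mem_range.1 hk
  simp only [prismVertex]
  split_ifs
  · rw [ht i (by omega)]
  · rw [ht (i - 1) (by omega)]

end Degree

end AlexanderSpanier

/-! ### Alexander–Spanier cohomology of subsets -/

namespace AlexanderSpanier

variable {X Y Z : Type*}

theorem two_eq_zero : (2 : Cochain X) = 0 := funext fun _ => CharTwo.two_eq_zero

variable [TopologicalSpace X] [TopologicalSpace Y] [TopologicalSpace Z]

section VanishesNear

/-- The germ of `φ` along `C` vanishes on `S`: every point of `C` has a neighbourhood `W` such that
`φ` is zero on all simplices with vertices in `W ∩ S`. -/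
def VanishesNear (C S : Set X) (φ : Cochain X) : Prop :=
  ∀ x ∈ C, ∃ W ∈ 𝓝 x, ∀ t : ℕ → X, (∀ i, t i ∈ W ∩ S) → φ t = 0

variable {C S : Set X} {φ ψ : Cochain X}

theorem VanishesNear.mono {C' S' : Set X} (h : VanishesNear C S φ) (hC : C' ⊆ C) (hS : S' ⊆ S) :
    VanishesNear C' S' φ := fun x hx => by
  obtain ⟨W, hW, h⟩ := h x (hC hx)
  exact ⟨W, hW, fun t ht => h t fun i => ⟨(ht i).1, hS (ht i).2⟩⟩

theorem VanishesNear.of_forall (h : ∀ t : ℕ → X, (∀ i, t i ∈ S) → φ t = 0) :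
    VanishesNear C S φ :=
  fun _ _ => ⟨univ, univ_mem, fun t ht => h t fun i => (ht i).2⟩

theorem VanishesNear.zero : VanishesNear C S (0 : Cochain X) := .of_forall fun _ _ => rfl

theorem VanishesNear.add (h : VanishesNear C S φ) (h' : VanishesNear C S ψ) :
    VanishesNear C S (φ + ψ) := fun x hx => by
  obtain ⟨W, hW, h⟩ := h x hx
  obtain ⟨W', hW', h'⟩ := h' x hx
  refine ⟨W ∩ W', inter_mem hW hW', fun t ht => ?_⟩
  rw [Pi.add_apply, h t fun i => ⟨(ht i).1.1, (ht i).2⟩, h' t fun i => ⟨(ht i).1.2, (ht i).2⟩,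
    add_zero]

theorem VanishesNear.congr (h : VanishesNear C S φ)
    (e : ∀ t : ℕ → X, (∀ i, t i ∈ S) → φ t = ψ t) : VanishesNear C S ψ := fun x hx => by
  obtain ⟨W, hW, h⟩ := h x hx
  exact ⟨W, hW, fun t ht => by rw [← e t fun i => (ht i).2, h t ht]⟩

theorem VanishesNear.cup_right (h : VanishesNear C S φ) (p : ℕ) (ψ : Cochain X) :
    VanishesNear C S (cup p φ ψ) := fun x hx => by
  obtain ⟨W, hW, h⟩ := h x hx
  exact ⟨W, hW, fun t ht => by rw [cup, h t ht, zero_mul]⟩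

theorem VanishesNear.cup_left (h : VanishesNear C S ψ) (p : ℕ) (φ : Cochain X) :
    VanishesNear C S (cup p φ ψ) := fun x hx => by
  obtain ⟨W, hW, h⟩ := h x hx
  exact ⟨W, hW, fun t ht => by rw [cup, h (fun k => t (k + p)) fun i => ht _, mul_zero]⟩

/-- `f` maps `C` to `C'` and is continuous at the points of `C` as a map from `S` to `S'`; this is
what pulling back the vanishing of germs along `C'` requires of `f`. -/
def MapsGerm (f : X → Y) (C S : Set X) (C' S' : Set Y) : Prop :=
  ∀ x ∈ C, f x ∈ C' ∧ Tendsto f (𝓝[S] x) (𝓝[S'] (f x))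

variable {C' S' : Set Y}

theorem MapsGerm.of_continuousOn {f : X → Y} (h : ContinuousOn f S) (hm : MapsTo f S S') :
    MapsGerm f S S S' S' :=
  fun x hx => ⟨hm hx, (h x hx).tendsto_nhdsWithin hm⟩

theorem mapsGerm_id : MapsGerm id C S C S := fun _ hx => ⟨hx, tendsto_id⟩

protected theorem VanishesNear.pullback {f : X → Y} {φ : Cochain Y} (h : VanishesNear C' S' φ)
    (hf : MapsGerm f C S C' S') : VanishesNear C S (pullback f φ) := fun x hx => by
  obtain ⟨W, hW, h⟩ := h _ (hf x hx).1
  obtain ⟨V, hV, hVW⟩ := mem_nhdsWithin_iff_exists_mem_nhds_inter.1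
    ((hf x hx).2 (inter_mem_nhdsWithin S' hW))
  exact ⟨V, hV, fun t ht => h _ fun i => (hVW (ht i)).symm⟩

protected theorem VanishesNear.prism {f g : X → Y} {φ : Cochain Y} (h : VanishesNear C' S' φ)
    (hf : MapsGerm f C S C' S') (hg : ∀ x ∈ C, Tendsto g (𝓝[S] x) (𝓝[S'] (f x))) (p : ℕ) :
    VanishesNear C S (prism p f g φ) := fun x hx => by
  obtain ⟨W, hW, h⟩ := h _ (hf x hx).1
  obtain ⟨V, hV, hVW⟩ := mem_nhdsWithin_iff_exists_mem_nhds_inter.1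
    (inter_mem ((hf x hx).2 (inter_mem_nhdsWithin S' hW)) (hg x hx (inter_mem_nhdsWithin S' hW)))
  refine ⟨V, hV, fun t ht => Finset.sum_eq_zero fun k _ => h _ fun i => ?_⟩
  simp only [prismVertex]
  split_ifs
  · exact (hVW (ht i)).1.symm
  · exact (hVW (ht (i - 1))).2.symm

end VanishesNear

section Cohomology

/-- `φ` represents an Alexander–Spanier cocycle of degree `p` on `S`: its coboundary vanishes on
all sufficiently small simplices of `S`. -/
def IsCocycle (S : Set X) (p : ℕ) (φ : Cochain X) : Prop :=
  HasDegree p φ ∧ VanishesNear S S (delta p φ)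

/-- `φ` represents zero in the Alexander–Spanier cohomology of `S` in degree `p`. -/
def IsCoboundary (S : Set X) (p : ℕ) (φ : Cochain X) : Prop :=
  ∃ β, HasDegree (p - 1) β ∧ VanishesNear S S (φ + deltaTo p β)

/-- `φ` and `ψ` represent the same class in the Alexander–Spanier cohomology of `S` in degree `p`;
with mod 2 coefficients the difference is the sum. -/
def Cohomologous (S : Set X) (p : ℕ) (φ ψ : Cochain X) : Prop := IsCoboundary S p (φ + ψ)

/-- The Alexander–Spanier cohomology of `S` with mod 2 coefficients is zero in degree `p`. -/
def CohomologyVanishes (S : Set X) (p : ℕ) : Prop := ∀ φ, IsCocycle S p φ → IsCoboundary S p φ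

variable {S S' : Set X} {p q : ℕ} {φ ψ χ β : Cochain X}

theorem IsCocycle.mono (h : IsCocycle S p φ) (hS : S' ⊆ S) : IsCocycle S' p φ :=
  ⟨h.1, h.2.mono hS hS⟩

theorem IsCocycle.add (h : IsCocycle S p φ) (h' : IsCocycle S p ψ) : IsCocycle S p (φ + ψ) :=
  ⟨h.1.add h'.1, by rw [delta_add]; exact h.2.add h'.2⟩

protected theorem IsCocycle.cup (h : IsCocycle S p φ) (h' : IsCocycle S q ψ) :
    IsCocycle S (p + q) (cup p φ ψ) :=
  ⟨h.1.cup h'.1, by rw [delta_cup p q _ _ h.1]; exact (h.2.cup_right _ _).add (h'.2.cup_left _ _)⟩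

theorem HasDegree.isCocycle_deltaTo (h : HasDegree (p - 1) β) : IsCocycle S p (deltaTo p β) :=
  ⟨h.deltaTo, by rw [delta_deltaTo]; exact .zero⟩

protected theorem IsCocycle.pullback {T : Set Y} {f : X → Y} {φ : Cochain Y} (h : IsCocycle T p φ)
    (hf : ContinuousOn f S) (hm : MapsTo f S T) : IsCocycle S p (pullback f φ) :=
  ⟨h.1.pullback f, by rw [delta_pullback]; exact h.2.pullback (.of_continuousOn hf hm)⟩

theorem IsCoboundary.mono (h : IsCoboundary S p φ) (hS : S' ⊆ S) : IsCoboundary S' p φ := by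
  obtain ⟨β, hβ, h⟩ := h
  exact ⟨β, hβ, h.mono hS hS⟩

theorem IsCoboundary.add (h : IsCoboundary S p φ) (h' : IsCoboundary S p ψ) :
    IsCoboundary S p (φ + ψ) := by
  obtain ⟨β, hβ, h⟩ := h
  obtain ⟨β', hβ', h'⟩ := h'
  refine ⟨β + β', hβ.add hβ', ?_⟩
  rw [deltaTo_add, add_add_add_comm]
  exact h.add h'

theorem VanishesNear.isCoboundary (h : VanishesNear S S φ) : IsCoboundary S p φ :=
  ⟨0, .zero, by rwa [deltaTo_zero, add_zero]⟩

theorem IsCoboundary.congr (h : IsCoboundary S p φ)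
    (e : ∀ t : ℕ → X, (∀ i, t i ∈ S) → φ t = ψ t) : IsCoboundary S p ψ := by
  obtain ⟨β, hβ, h⟩ := h
  exact ⟨β, hβ, h.congr fun t ht => by rw [Pi.add_apply, Pi.add_apply, e t ht]⟩

theorem IsCoboundary.vanishesNear (h : IsCoboundary S 0 φ) : VanishesNear S S φ := by
  obtain ⟨β, -, h⟩ := h
  rwa [deltaTo_zero_left, add_zero] at h

protected theorem IsCoboundary.pullback {T : Set Y} {f : X → Y} {φ : Cochain Y}
    (h : IsCoboundary T p φ) (hf : ContinuousOn f S) (hm : MapsTo f S T) :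
    IsCoboundary S p (pullback f φ) := by
  obtain ⟨β, hβ, h⟩ := h
  refine ⟨AlexanderSpanier.pullback f β, hβ.pullback f, ?_⟩
  rw [deltaTo_pullback, ← pullback_add]
  exact h.pullback (.of_continuousOn hf hm)

theorem Cohomologous.refl : Cohomologous S p φ φ := by
  rw [Cohomologous, ZModModule.add_self]
  exact VanishesNear.zero.isCoboundary

theorem Cohomologous.symm (h : Cohomologous S p φ ψ) : Cohomologous S p ψ φ := by
  rwa [Cohomologous, add_comm]

theorem Cohomologous.trans (h : Cohomologous S p φ ψ) (h' : Cohomologous S p ψ χ) :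
    Cohomologous S p φ χ := by
  have e : φ + χ = φ + ψ + (ψ + χ) := by linear_combination -ψ * two_eq_zero
  rw [Cohomologous, e]
  exact IsCoboundary.add h h'

theorem Cohomologous.isCoboundary (h : Cohomologous S p φ ψ) (h' : IsCoboundary S p ψ) :
    IsCoboundary S p φ := by
  have e : φ = φ + ψ + ψ := by rw [add_assoc, ZModModule.add_self, add_zero]
  rw [e]
  exact IsCoboundary.add h h'

end Cohomology

section CupCoboundary

variable {S : Set X} {p q : ℕ} {φ ψ β : Cochain X}

theorem IsCocycle.isCoboundary_cup_deltaTo_left (hψ : IsCocycle S q ψ)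
    (hβ : HasDegree (p - 1) β) : IsCoboundary S (p + q) (cup p (deltaTo p β) ψ) := by
  cases p with
  | zero => exact (VanishesNear.zero.cup_right _ _).isCoboundary
  | succ p =>
    refine ⟨cup p β ψ, (HasDegree.cup (p := p) hβ hψ.1).mono (by omega), ?_⟩
    have leibniz : deltaTo (p + 1 + q) (cup p β ψ) =
        cup (p + 1) (delta p β) ψ + cup p β (delta q ψ) := by
      rw [Nat.add_right_comm, deltaTo_succ, delta_cup p q _ _ hβ]
    rw [leibniz, deltaTo_succ, ← add_assoc, ZModModule.add_self, zero_add]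
    exact hψ.2.cup_left _ _

theorem IsCocycle.isCoboundary_cup_deltaTo_right (hφ : IsCocycle S p φ)
    (hβ : HasDegree (q - 1) β) : IsCoboundary S (p + q) (cup p φ (deltaTo q β)) := by
  cases q with
  | zero => exact (VanishesNear.zero.cup_left _ _).isCoboundary
  | succ q =>
    refine ⟨cup p φ β, (hφ.1.cup hβ).mono (by omega), ?_⟩
    rw [← add_assoc p q 1, deltaTo_succ, deltaTo_succ, delta_cup p q _ _ hφ.1, add_left_comm,
      ZModModule.add_self, add_zero]
    exact hφ.2.cup_right _ _

theorem IsCoboundary.cup_left (h : IsCoboundary S q ψ) (hφ : IsCocycle S p φ) :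
    IsCoboundary S (p + q) (cup p φ ψ) := by
  obtain ⟨β, hβ, h⟩ := h
  refine Cohomologous.isCoboundary ?_ (hφ.isCoboundary_cup_deltaTo_right hβ)
  rw [Cohomologous, ← cup_add]
  exact (h.cup_left p φ).isCoboundary

end CupCoboundary

section Tautness

/-- `r` is the identity on `K` and maps points near `K` into `K`, continuously at the points of `K`
but possibly nowhere else. Alexander–Spanier cochains can be pulled back along such maps, so closed
sets behave as if they were neighbourhood retracts. -/
def IsGermRetraction (K : Set X) (r : X → X) : Prop :=
  (∀ x ∈ K, r x = x) ∧ ∀ x ∈ K, Tendsto r (𝓝 x) (𝓝[K] x)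

theorem exists_mem_dist_le_two_mul_infDist {M : Type*} [PseudoMetricSpace M] {K : Set M}
    (hK : IsClosed K) (hne : K.Nonempty) (y : M) :
    ∃ z ∈ K, dist y z ≤ 2 * Metric.infDist y K ∧ (y ∈ K → z = y) := by
  by_cases hy : y ∈ K
  · exact ⟨y, hy, by simp [Metric.infDist_nonneg], fun _ => rfl⟩
  · have hpos : 0 < Metric.infDist y K := (hK.notMem_iff_infDist_pos hne).1 hy
    obtain ⟨z, hz, h⟩ := (Metric.infDist_lt_iff hne).1
      (show Metric.infDist y K < 2 * Metric.infDist y K by linarith)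
    exact ⟨z, hz, h.le, fun h => absurd h hy⟩

theorem exists_isGermRetraction [TopologicalSpace.PseudoMetrizableSpace X] {K : Set X}
    (hK : IsClosed K) : ∃ r, IsGermRetraction K r := by
  let := TopologicalSpace.pseudoMetrizableSpacePseudoMetric X
  rcases K.eq_empty_or_nonempty with rfl | hne
  · exact ⟨id, by simp [IsGermRetraction]⟩
  choose r hmem hdist hfix using exists_mem_dist_le_two_mul_infDist hK hne
  refine ⟨r, fun x hx => hfix x hx, fun x hx => ?_⟩
  refine tendsto_nhdsWithin_iff.2 ⟨?_, .of_forall hmem⟩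
  rw [tendsto_iff_dist_tendsto_zero]
  have bound : Tendsto (fun y => 3 * dist y x) (𝓝 x) (𝓝 0) := by
    simpa using (show Continuous fun y => 3 * dist y x by fun_prop).tendsto x
  refine squeeze_zero (fun _ => dist_nonneg) (fun y => ?_) bound
  calc dist (r y) x ≤ dist y (r y) + dist y x := dist_comm (r y) y ▸ dist_triangle (r y) y x
    _ ≤ 2 * dist y x + dist y x := by
      have := Metric.infDist_le_dist_of_mem (x := y) hx
      have := hdist y
      linarith
    _ = 3 * dist y x := by ring

variable {K S : Set X} {r : X → X}

theorem IsGermRetraction.mapsGerm (h : IsGermRetraction K r) (S : Set X) :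
    MapsGerm r K S K K := fun x hx => by
  rw [h.1 x hx]
  exact ⟨hx, (h.2 x hx).mono_left inf_le_left⟩

theorem IsGermRetraction.vanishesNear_prism (h : IsGermRetraction K r) (hKS : K ⊆ S)
    {φ : Cochain X} (hφ : VanishesNear K S φ) (p : ℕ) : VanishesNear K S (prism p id r φ) :=
  hφ.prism mapsGerm_id (fun x hx =>
    ((h.2 x hx).mono_left inf_le_left).mono_right (nhdsWithin_mono x hKS)) p

theorem IsGermRetraction.vanishesNear_add_deltaTo (h : IsGermRetraction K r) (hKS : K ⊆ S) {p : ℕ}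
    {φ γ : Cochain X} (hd : HasDegree p φ) (hφ : VanishesNear K S (delta p φ))
    (hγ : VanishesNear K K (φ + deltaTo p γ)) :
    VanishesNear K S (φ + deltaTo p (pullback r γ + prism p id r φ)) := by
  have hprism := prism_delta_add_deltaTo_prism p id r φ hd
  rw [show pullback id φ = φ from rfl] at hprism
  convert (hγ.pullback (h.mapsGerm S)).add (h.vanishesNear_prism hKS hφ (p + 1)) using 1
  rw [deltaTo_add, deltaTo_pullback, pullback_add]
  linear_combination hprism + (φ - prism (p + 1) id r (delta p φ)) * two_eq_zero

theorem IsGermRetraction.pullback_apply (h : IsGermRetraction K r) {t : ℕ → X} (ht : ∀ i, t i ∈ K)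
    (φ : Cochain X) : pullback r φ t = φ t :=
  congrArg φ (funext fun i => h.1 _ (ht i))

theorem IsGermRetraction.prism_id_apply (h : IsGermRetraction K r) {t : ℕ → X}
    (ht : ∀ i, t i ∈ K) (p : ℕ) (φ : Cochain X) : prism p id r φ t = prism p id id φ t := by
  have vertex (i : ℕ) : prismVertex id r i t = prismVertex id id i t := by
    funext k
    simp only [prismVertex, h.1 _ (ht _), id]
  simp only [prism, vertex]

variable [TopologicalSpace.PseudoMetrizableSpace X]

theorem exists_vanishesNear_delta (hK : IsClosed K) (S : Set X) {p : ℕ} {φ : Cochain X}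
    (h : IsCocycle K p φ) :
    ∃ φ', HasDegree p φ' ∧ VanishesNear K S (delta p φ') ∧
      ∀ t : ℕ → X, (∀ i, t i ∈ K) → φ' t = φ t := by
  obtain ⟨r, hr⟩ := exists_isGermRetraction hK
  exact ⟨pullback r φ, h.1.pullback r,
    by rw [delta_pullback]; exact h.2.pullback (hr.mapsGerm S), fun t ht => hr.pullback_apply ht φ⟩

theorem exists_vanishesNear_add_deltaTo (hK : IsClosed K) (hKS : K ⊆ S) {p : ℕ} {φ γ : Cochain X}
    (hd : HasDegree p φ) (hφ : VanishesNear K S (delta p φ)) (hγd : HasDegree (p - 1) γ)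
    (hγ : VanishesNear K K (φ + deltaTo p γ)) :
    ∃ γ', HasDegree (p - 1) γ' ∧ VanishesNear K S (φ + deltaTo p γ') ∧
      ∀ t : ℕ → X, (∀ i, t i ∈ K) → γ' t = γ t + prism p id id φ t := by
  obtain ⟨r, hr⟩ := exists_isGermRetraction hK
  exact ⟨pullback r γ + prism p id r φ, (hγd.pullback r).add (hd.prism id r),
    hr.vanishesNear_add_deltaTo hKS hd hφ hγ, fun t ht => by
      rw [Pi.add_apply, hr.pullback_apply ht, hr.prism_id_apply ht]⟩

end Tautness

end AlexanderSpanier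

/-! ### Mayer–Vietoris for closed sets -/

namespace AlexanderSpanier

variable {X : Type*}

section Connecting

open Classical in
/-- The characteristic function of `A` as a cochain of degree `0`. -/
noncomputable def charFn (A : Set X) : Cochain X := fun t => if t 0 ∈ A then 1 else 0

/-- Multiplication by `δ 1_A`. On cochains that are cocycles near `A ∩ B`, it induces the connecting
map of the Mayer–Vietoris sequence of closed sets `A` and `B`. -/
noncomputable def connecting (A : Set X) (θ : Cochain X) : Cochain X :=
  cup 1 (delta 0 (charFn A)) θ

variable {A : Set X} {p : ℕ} {t : ℕ → X}

theorem hasDegree_charFn (A : Set X) : HasDegree 0 (charFn A) := fun t t' h => by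
  unfold charFn
  rw [h 0 le_rfl]

theorem charFn_of_forall_mem (h : ∀ i, t i ∈ A) : charFn A t = 1 := if_pos (h 0)

theorem charFn_of_forall_notMem (h : ∀ i, t i ∉ A) : charFn A t = 0 := if_neg (h 0)

theorem cup_charFn_of_forall_mem (h : ∀ i, t i ∈ A) (θ : Cochain X) :
    cup 0 (charFn A) θ t = θ t := by
  simp only [cup, charFn_of_forall_mem h, one_mul, add_zero]

theorem cup_charFn_of_forall_notMem (h : ∀ i, t i ∉ A) (θ : Cochain X) :
    cup 0 (charFn A) θ t = 0 := by
  rw [cup, charFn_of_forall_notMem h, zero_mul]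

theorem delta_charFn_of_forall_mem (h : ∀ i, t i ∈ A) : delta 0 (charFn A) t = 0 := by
  simp [delta, charFn, h, CharTwo.two_eq_zero]

theorem delta_charFn_of_forall_notMem (h : ∀ i, t i ∉ A) : delta 0 (charFn A) t = 0 := by
  simp [delta, charFn, h]

theorem connecting_of_forall_mem (h : ∀ i, t i ∈ A) (θ : Cochain X) : connecting A θ t = 0 :=
  mul_eq_zero_of_left (delta_charFn_of_forall_mem h) _

theorem connecting_of_forall_notMem (h : ∀ i, t i ∉ A) (θ : Cochain X) :
    connecting A θ t = 0 :=
  mul_eq_zero_of_left (delta_charFn_of_forall_notMem h) _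

theorem connecting_add (A : Set X) (θ η : Cochain X) :
    connecting A (θ + η) = connecting A θ + connecting A η := cup_add _ _ _ _

theorem connecting_zero (A : Set X) : connecting A 0 = 0 := cup_zero _ _

theorem HasDegree.cup_charFn {θ : Cochain X} (h : HasDegree p θ) (A : Set X) :
    HasDegree p (AlexanderSpanier.cup 0 (charFn A) θ) := by
  simpa only [zero_add] using (hasDegree_charFn A).cup h

protected theorem HasDegree.connecting {θ : Cochain X} (h : HasDegree p θ) (A : Set X) :
    HasDegree (p + 1) (connecting A θ) := by
  simpa only [connecting, zero_add, add_comm 1 p] using (hasDegree_charFn A).delta.cup h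

theorem delta_connecting (A : Set X) (p : ℕ) (θ : Cochain X) :
    delta (p + 1) (connecting A θ) = connecting A (delta p θ) := by
  have leibniz := delta_cup 1 p (delta 0 (charFn A)) θ (hasDegree_charFn A).delta
  have zero_cup : cup (1 + 1) (0 : Cochain X) θ = 0 := funext fun t => zero_mul _
  rw [add_comm p 1, connecting, leibniz, delta_delta, zero_cup, zero_add, connecting]

theorem delta_cup_charFn (A : Set X) (p : ℕ) (θ : Cochain X) :
    delta p (cup 0 (charFn A) θ) = connecting A θ + cup 0 (charFn A) (delta p θ) := by
  simpa only [connecting, zero_add] using delta_cup 0 p (charFn A) θ (hasDegree_charFn A)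

theorem cup_connecting (A : Set X) (p : ℕ) (θ η : Cochain X) :
    cup (p + 1) (connecting A θ) η = connecting A (cup p θ η) := by
  rw [add_comm]
  exact cup_assoc 1 p _ _ _

end Connecting

section MayerVietoris

variable [TopologicalSpace X] {A B : Set X} {p q : ℕ}

theorem vanishesNear_union (hA : IsClosed A) (hB : IsClosed B) {φ : Cochain X}
    (hAB : VanishesNear (A ∩ B) (A ∪ B) φ) (hφA : VanishesNear A A φ)
    (hφB : VanishesNear B (B \ A) φ) : VanishesNear (A ∪ B) (A ∪ B) φ := by
  intro x hx
  by_cases hxA : x ∈ A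
  · by_cases hxB : x ∈ B
    · exact hAB x ⟨hxA, hxB⟩
    · obtain ⟨W, hW, h⟩ := hφA x hxA
      exact ⟨W ∩ Bᶜ, inter_mem hW (hB.isOpen_compl.mem_nhds hxB), fun t ht => h t fun i =>
        ⟨(ht i).1.1, (ht i).2.resolve_right (ht i).1.2⟩⟩
  · obtain ⟨W, hW, h⟩ := hφB x (hx.resolve_left hxA)
    exact ⟨W ∩ Aᶜ, inter_mem hW (hA.isOpen_compl.mem_nhds hxA), fun t ht => h t fun i =>
      ⟨(ht i).1.1, (ht i).2.resolve_left (ht i).1.2, (ht i).1.2⟩⟩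

protected theorem VanishesNear.connecting (hA : IsClosed A) (hB : IsClosed B) {θ : Cochain X}
    (h : VanishesNear (A ∩ B) (A ∪ B) θ) : VanishesNear (A ∪ B) (A ∪ B) (connecting A θ) :=
  vanishesNear_union hA hB (h.cup_left _ _)
    (.of_forall fun _ ht => connecting_of_forall_mem ht _)
    (.of_forall fun _ ht => connecting_of_forall_notMem (fun i => (ht i).2) _)

/-- The cochain in the conclusion is `φ` on `A` and `ψ` away from `A`. -/
theorem VanishesNear.glue (hA : IsClosed A) (hB : IsClosed B) {φ ψ : Cochain X}
    (hφ : VanishesNear A (A ∪ B) φ) (hψ : VanishesNear B (A ∪ B) ψ) :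
    VanishesNear (A ∪ B) (A ∪ B) (ψ + cup 0 (charFn A) (φ + ψ)) := by
  refine vanishesNear_union hA hB ?_ ?_ ?_
  · have hφ' := hφ.mono (inter_subset_left (t := B)) subset_rfl
    have hψ' := hψ.mono (inter_subset_right (s := A)) subset_rfl
    exact hψ'.add ((hφ'.add hψ').cup_left _ _)
  · refine (hφ.mono subset_rfl subset_union_left).congr fun t ht => ?_
    rw [Pi.add_apply, cup_charFn_of_forall_mem ht, Pi.add_apply, add_left_comm,
      CharTwo.add_self_eq_zero, add_zero]
  · refine (hψ.mono subset_rfl fun x hx => .inr hx.1).congr fun t ht => ?_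
    rw [Pi.add_apply, cup_charFn_of_forall_notMem fun i => (ht i).2, add_zero]

theorem isCocycle_connecting (hA : IsClosed A) (hB : IsClosed B) {θ : Cochain X}
    (hd : HasDegree p θ) (h : VanishesNear (A ∩ B) (A ∪ B) (delta p θ)) :
    IsCocycle (A ∪ B) (p + 1) (connecting A θ) :=
  ⟨hd.connecting A, by rw [delta_connecting]; exact h.connecting hA hB⟩

theorem IsCocycle.isCoboundary_connecting {S : Set X} {η : Cochain X} (h : IsCocycle S p η)
    (A : Set X) : IsCoboundary S (p + 1) (connecting A η) := by
  refine ⟨cup 0 (charFn A) η, h.1.cup_charFn A, ?_⟩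
  rw [deltaTo_succ, delta_cup_charFn, ← add_assoc, ZModModule.add_self, zero_add]
  exact h.2.cup_left _ _

theorem VanishesNear.union_of_hasDegree_zero {a : Cochain X} (hd : HasDegree 0 a)
    (hA : VanishesNear A A a) (hB : VanishesNear B B a) : VanishesNear (A ∪ B) (A ∪ B) a := by
  have const {S : Set X} (h : VanishesNear S S a) (y : X) (hy : y ∈ S) : a (fun _ => y) = 0 := by
    obtain ⟨W, hW, h⟩ := h y hy
    exact h _ fun _ => ⟨mem_of_mem_nhds hW, hy⟩
  refine .of_forall fun t ht => ?_
  rw [hd t (fun _ => t 0) fun i hi => by rw [Nat.le_zero.1 hi]]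
  exact (ht 0).elim (const hA _) (const hB _)

theorem exists_add_of_isCoboundary_connecting (hA : IsClosed A) {θ : Cochain X}
    (hd : HasDegree p θ) (h : VanishesNear (A ∩ B) (A ∪ B) (delta p θ))
    (hc : IsCoboundary (A ∪ B) (p + 1) (connecting A θ)) :
    ∃ a b, IsCocycle A p a ∧ IsCocycle B p b ∧
      ∀ t : ℕ → X, (∀ i, t i ∈ A ∩ B) → θ t = a t + b t := by
  obtain ⟨ψ, hψd, hψ⟩ := hc
  rw [deltaTo_succ] at hψ
  refine ⟨ψ, ψ + cup 0 (charFn A) θ, ⟨hψd, ?_⟩, ⟨hψd.add (hd.cup_charFn A), ?_⟩, ?_⟩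
  · refine (hψ.mono subset_union_left subset_union_left).congr fun t ht => ?_
    rw [Pi.add_apply, connecting_of_forall_mem ht, zero_add]
  · rw [delta_add, delta_cup_charFn, ← add_assoc, add_comm (delta p ψ)]
    refine (hψ.mono subset_union_right subset_union_right).add fun x hx => ?_
    by_cases hxA : x ∈ A
    · exact ((h.mono subset_rfl subset_union_right).cup_left _ _) x ⟨hxA, hx⟩
    · exact ⟨Aᶜ, hA.isOpen_compl.mem_nhds hxA, fun t ht =>
        cup_charFn_of_forall_notMem (fun i => (ht i).1) _⟩
  · intro t ht
    rw [Pi.add_apply, cup_charFn_of_forall_mem fun i => (ht i).1, ← add_assoc,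
      CharTwo.add_self_eq_zero, zero_add]

variable [TopologicalSpace.PseudoMetrizableSpace X]

theorem exists_cohomologous_connecting (hA : IsClosed A) (hB : IsClosed B) {a α β : Cochain X}
    (ha : IsCocycle (A ∪ B) (q + 1) a)
    (hαd : HasDegree q α) (hα : VanishesNear A A (a + delta q α))
    (hβd : HasDegree q β) (hβ : VanishesNear B B (a + delta q β)) :
    ∃ θ, HasDegree q θ ∧ VanishesNear (A ∩ B) (A ∪ B) (delta q θ) ∧
      Cohomologous (A ∪ B) (q + 1) a (connecting A θ) ∧
      ∀ t : ℕ → X, (∀ i, t i ∈ A ∩ B) → θ t = α t + β t := by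
  rw [← deltaTo_succ] at hα hβ
  obtain ⟨α', hαd', hα', hαt⟩ := exists_vanishesNear_add_deltaTo hA (subset_union_left (t := B))
    ha.1 (ha.2.mono subset_union_left subset_rfl) hαd hα
  obtain ⟨β', hβd', hβ', hβt⟩ := exists_vanishesNear_add_deltaTo hB (subset_union_right (s := A))
    ha.1 (ha.2.mono subset_union_right subset_rfl) hβd hβ
  rw [deltaTo_succ] at hα' hβ'
  have sum_eq : a + delta q α' + (a + delta q β') = delta q (α' + β') := by
    rw [delta_add]
    linear_combination a * two_eq_zero
  refine ⟨α' + β', hαd'.add hβd', ?_, ⟨β' + cup 0 (charFn A) (α' + β'), ?_, ?_⟩, ?_⟩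
  · rw [← sum_eq]
    exact (hα'.mono inter_subset_left subset_rfl).add (hβ'.mono inter_subset_right subset_rfl)
  · exact hβd'.add ((hαd'.add hβd').cup_charFn A)
  · convert hα'.glue hA hB hβ' using 1
    rw [deltaTo_succ, delta_add, delta_cup_charFn, sum_eq]
    linear_combination connecting A (α' + β') * two_eq_zero
  · intro t ht
    rw [Pi.add_apply, hαt t fun i => (ht i).1, hβt t fun i => (ht i).2, add_add_add_comm,
      CharTwo.add_self_eq_zero, add_zero]

theorem exists_isCocycle_union (hA : IsClosed A) (hB : IsClosed B) {a b : Cochain X}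
    (ha : IsCocycle A p a) (hb : IsCocycle B p b) (hab : Cohomologous (A ∩ B) p a b) :
    ∃ x, IsCocycle (A ∪ B) p x ∧ ∀ t : ℕ → X, (∀ i, t i ∈ A) → x t = a t := by
  obtain ⟨a', had, ha', hat⟩ := exists_vanishesNear_delta hA (A ∪ B) ha
  obtain ⟨b', hbd, hb', hbt⟩ := exists_vanishesNear_delta hB (A ∪ B) hb
  obtain ⟨γ, hγd, hγ⟩ := hab
  have hδ : VanishesNear (A ∩ B) (A ∪ B) (delta p (a' + b')) := by
    rw [delta_add]
    exact (ha'.mono inter_subset_left subset_rfl).add (hb'.mono inter_subset_right subset_rfl)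
  obtain ⟨γ', hγd', hγ', -⟩ := exists_vanishesNear_add_deltaTo (hA.inter hB)
    (inter_subset_left.trans subset_union_left) (had.add hbd) hδ hγd (hγ.congr fun t ht => by
      simp only [Pi.add_apply, hat t fun i => (ht i).1, hbt t fun i => (ht i).2])
  -- The degree of `connecting A γ'` is off by one if `p = 0`, where there is nothing to correct.
  obtain ⟨η, hηd, hη, hηA⟩ : ∃ η, HasDegree p η ∧
      delta p η = connecting A (deltaTo p γ') ∧ ∀ t : ℕ → X, (∀ i, t i ∈ A) → η t = 0 := by
    cases p with
    | zero => exact ⟨0, .zero, by rw [delta_zero, deltaTo_zero_left, connecting_zero],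
        fun _ _ => rfl⟩
    | succ p => exact ⟨connecting A γ', hγd'.connecting A,
        by rw [delta_connecting, deltaTo_succ], fun t ht => connecting_of_forall_mem ht γ'⟩
  refine ⟨b' + cup 0 (charFn A) (a' + b') + η,
    ⟨(hbd.add ((had.add hbd).cup_charFn A)).add hηd, ?_⟩, fun t ht => ?_⟩
  · convert (ha'.glue hA hB hb').add (hγ'.connecting hA hB) using 1
    rw [delta_add, delta_add, delta_cup_charFn, delta_add, hη, connecting_add (θ := a' + b')]
    ring
  · rw [Pi.add_apply, Pi.add_apply, cup_charFn_of_forall_mem ht, Pi.add_apply, hηA t ht,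
      hat t ht, add_zero, add_left_comm, CharTwo.add_self_eq_zero, add_zero]

theorem isCoboundary_connecting (hA : IsClosed A) (hB : IsClosed B) {θ : Cochain X}
    (hd : HasDegree p θ) (hδ : VanishesNear (A ∩ B) (A ∪ B) (delta p θ))
    (h : IsCoboundary (A ∩ B) p θ) : IsCoboundary (A ∪ B) (p + 1) (connecting A θ) := by
  obtain ⟨γ, hγd, hγ⟩ := h
  obtain ⟨γ', hγd', hγ', -⟩ := exists_vanishesNear_add_deltaTo (hA.inter hB)
    (inter_subset_left.trans subset_union_left) hd hδ hγd hγ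
  have hv := hγ'.connecting hA hB
  cases p with
  | zero =>
    rw [deltaTo_zero_left, add_zero] at hv
    exact hv.isCoboundary
  | succ p =>
    refine ⟨connecting A γ', hγd'.connecting A, ?_⟩
    rwa [deltaTo_succ, delta_connecting, ← deltaTo_succ, ← connecting_add]

theorem CohomologyVanishes.union (hA : IsClosed A) (hB : IsClosed B)
    (hvA : CohomologyVanishes A (q + 1)) (hvB : CohomologyVanishes B (q + 1))
    (hvAB : CohomologyVanishes (A ∩ B) q) : CohomologyVanishes (A ∪ B) (q + 1) := by
  intro c hc
  obtain ⟨α, hαd, hα⟩ := hvA c (hc.mono subset_union_left)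
  obtain ⟨β, hβd, hβ⟩ := hvB c (hc.mono subset_union_right)
  rw [deltaTo_succ] at hα hβ
  obtain ⟨θ, hd, hθ, hcθ, -⟩ := exists_cohomologous_connecting hA hB hc hαd hα hβd hβ
  have hθ' : IsCocycle (A ∩ B) q θ :=
    ⟨hd, hθ.mono subset_rfl (inter_subset_left.trans subset_union_left)⟩
  exact hcθ.isCoboundary (isCoboundary_connecting hA hB hd hθ (hvAB θ hθ'))

theorem isCoboundary_cup_union (hA : IsClosed A) (hB : IsClosed B) {φ ψ : Cochain X}
    (hφ : IsCocycle (A ∪ B) p φ) (hψ : IsCocycle (A ∪ B) q ψ) (hφA : IsCoboundary A p φ)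
    (hψB : IsCoboundary B q ψ) : IsCoboundary (A ∪ B) (p + q) (cup p φ ψ) := by
  obtain ⟨α, hαd, hα⟩ := hφA
  obtain ⟨β, hβd, hβ⟩ := hψB
  obtain ⟨α', hαd', hα', -⟩ := exists_vanishesNear_add_deltaTo hA subset_union_left hφ.1
    (hφ.2.mono subset_union_left subset_rfl) hαd hα
  obtain ⟨β', hβd', hβ', -⟩ := exists_vanishesNear_add_deltaTo hB subset_union_right hψ.1
    (hψ.2.mono subset_union_right subset_rfl) hβd hβ
  have corrected : IsCoboundary (A ∪ B) (p + q)
      (cup p (φ + deltaTo p α') (ψ + deltaTo q β')) :=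
    VanishesNear.isCoboundary fun x hx =>
      hx.elim ((hα'.cup_right _ _) x) ((hβ'.cup_left _ _) x)
  have correction := (hψ.isCoboundary_cup_deltaTo_left hαd').add
    ((hφ.add hαd'.isCocycle_deltaTo).isCoboundary_cup_deltaTo_right hβd')
  convert correction.add corrected using 1
  simp only [cup_add, add_cup]
  linear_combination (-cup p (deltaTo p α') ψ - cup p φ (deltaTo q β') -
    cup p (deltaTo p α') (deltaTo q β')) * two_eq_zero

end MayerVietoris

end AlexanderSpanier

/-! ### Homotopy invariance -/

namespace AlexanderSpanier

variable {X Y : Type*} [TopologicalSpace X] [TopologicalSpace Y]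

section Homotopy

variable {A : Set X} {B : Set Y} {H : ℝ → X → Y} {p : ℕ} {φ : Cochain Y}

theorem eventually_cohomologous_pullback (hA : IsCompact A)
    (hH : ContinuousOn (Function.uncurry H) (Icc 0 1 ×ˢ A))
    (hm : ∀ s ∈ Icc (0 : ℝ) 1, MapsTo (H s) A B) (hφ : IsCocycle B p φ) {τ : ℝ}
    (hτ : τ ∈ Icc (0 : ℝ) 1) :
    ∀ᶠ s in 𝓝[Icc 0 1] τ, Cohomologous A p (pullback (H τ) φ) (pullback (H s) φ) := by
  have small : ∀ᶠ s in 𝓝 τ, ∀ x ∈ A, s ∈ Icc (0 : ℝ) 1 → ∃ W ∈ 𝓝 x, ∀ t : ℕ → X,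
      (∀ i, t i ∈ W ∩ A) → prism (p + 1) (H τ) (H s) (delta p φ) t = 0 := by
    refine hA.eventually_forall_of_forall_eventually fun x hx => ?_
    obtain ⟨W, hW, h⟩ := hφ.2 (H τ x) (hm τ hτ hx)
    obtain ⟨U, hU, hUW⟩ := mem_nhdsWithin_iff_exists_mem_nhds_inter.1 (hH (τ, x) ⟨hτ, hx⟩ hW)
    rw [nhds_prod_eq, mem_prod_iff] at hU
    obtain ⟨I, hI, V, hV, hIV⟩ := hU
    have vertex_mem {s : ℝ} (hs : s ∈ I) (hs' : s ∈ Icc (0 : ℝ) 1) {x : X} (hx : x ∈ V ∩ A) :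
        H s x ∈ W ∩ B := ⟨hUW (show (s, x) ∈ U ∩ _ from ⟨hIV ⟨hs, hx.1⟩, hs', hx.2⟩), hm s hs' hx.2⟩
    filter_upwards [prod_mem_nhds hI (interior_mem_nhds.2 hV)]
    rintro ⟨s, y⟩ ⟨hs, hy⟩ hs'
    refine ⟨V, mem_interior_iff_mem_nhds.1 hy, fun t ht =>
      Finset.sum_eq_zero fun k _ => h _ fun i => ?_⟩
    simp only [prismVertex]
    split_ifs
    · exact vertex_mem (mem_of_mem_nhds hI) hτ (ht _)
    · exact vertex_mem hs hs' (ht _)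
  filter_upwards [mem_nhdsWithin_of_mem_nhds small, self_mem_nhdsWithin] with s hs hs'
  refine ⟨prism p (H τ) (H s) φ, hφ.1.prism _ _, ?_⟩
  rw [← prism_delta_add_deltaTo_prism p (H τ) (H s) φ hφ.1, add_assoc, ZModModule.add_self,
    add_zero]
  exact fun x hx => hs x hx hs'

theorem IsCocycle.cohomologous_pullback (hφ : IsCocycle B p φ) (hA : IsCompact A)
    (hH : ContinuousOn (Function.uncurry H) (Icc 0 1 ×ˢ A))
    (hm : ∀ s ∈ Icc (0 : ℝ) 1, MapsTo (H s) A B) :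
    Cohomologous A p (pullback (H 0) φ) (pullback (H 1) φ) :=
  isPreconnected_Icc.induction₂ (s := Icc (0 : ℝ) 1)
    (fun a b => Cohomologous A p (pullback (H a) φ) (pullback (H b) φ))
    (fun _ hτ => eventually_cohomologous_pullback hA hH hm hφ hτ)
    (fun _ _ _ _ _ _ => Cohomologous.trans) (fun _ _ _ _ => Cohomologous.symm)
    (left_mem_Icc.2 zero_le_one) (right_mem_Icc.2 zero_le_one)

theorem IsCocycle.isCoboundary_of_deformation {C : Set X} {H : ℝ → X → X} {φ : Cochain X}
    (hφ : IsCocycle A p φ) (hA : IsCompact A)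
    (hH : ContinuousOn (Function.uncurry H) (Icc 0 1 ×ˢ A))
    (hm : ∀ s ∈ Icc (0 : ℝ) 1, MapsTo (H s) A A) (h0 : ∀ x ∈ A, H 0 x = x)
    (h1 : MapsTo (H 1) A C) (hC : IsCoboundary C p φ) : IsCoboundary A p φ := by
  have end_continuousOn : ContinuousOn (H 1) A :=
    hH.comp (f := fun x => ((1 : ℝ), x)) (by fun_prop) fun x hx => ⟨by simp, hx⟩
  have h := (hφ.cohomologous_pullback hA hH hm).isCoboundary (hC.pullback end_continuousOn h1)
  exact h.congr fun t ht => congrArg φ (funext fun i => h0 _ (ht i))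

end Homotopy

theorem cohomologyVanishes_empty (p : ℕ) : CohomologyVanishes (∅ : Set X) p :=
  fun _ _ => VanishesNear.isCoboundary fun _ h => h.elim

theorem cohomologyVanishes_singleton (x : X) (p : ℕ) : CohomologyVanishes {x} (p + 1) := by
  intro φ hφ
  let c := φ fun _ => x
  have const (t : ℕ → X) (ht : ∀ i, t i ∈ ({x} : Set X)) : φ t = c :=
    congrArg φ (funext ht)
  rcases Nat.even_or_odd p with hp | hp
  · obtain ⟨W, hW, h⟩ := hφ.2 x rfl
    have cocycle : delta (p + 1) (fun _ : ℕ → X => c) (fun _ => x) = 0 :=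
      h (fun _ => x) fun _ => ⟨mem_of_mem_nhds hW, rfl⟩
    rw [delta_const, ZMod.natCast_eq_one_iff_odd.2 (by grind), one_mul] at cocycle
    exact (VanishesNear.of_forall fun t ht => (const t ht).trans cocycle).isCoboundary
  · refine ⟨fun _ => c, fun _ _ _ => rfl, .of_forall fun t ht => ?_⟩
    rw [deltaTo_succ, delta_const, ZMod.natCast_eq_one_iff_odd.2 (by grind), Pi.add_apply,
      const t ht, one_mul, CharTwo.add_self_eq_zero]

theorem CohomologyVanishes.singleton_prod {F : Set Y} {p : ℕ} (h : CohomologyVanishes F p) (x : X) :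
    CohomologyVanishes ({x} ×ˢ F) p := by
  intro φ hφ
  have slice : IsCoboundary F p (pullback (Prod.mk x) φ) :=
    h _ (hφ.pullback (by fun_prop) fun y hy => ⟨rfl, hy⟩)
  refine (slice.pullback (f := Prod.snd) (S := {x} ×ˢ F) (by fun_prop) fun z hz => hz.2).congr ?_
  exact fun t ht => congrArg φ (funext fun i => Prod.ext (ht i).1.symm rfl)

end AlexanderSpanier

/-! ### Spheres and great circle arcs -/

namespace SpecialOrthogonal

open AlexanderSpanier Matrix

variable {n : ℕ} {k : Fin n} {a : ℕ} {c u v w : Fin n → ℝ} {t : ℝ}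

section Sphere

/-- The `k`-th standard basis vector of `ℝⁿ`. -/
abbrev unitVec (k : Fin n) : Fin n → ℝ := Pi.single k 1

/-- The unit sphere of dimension `k - a` spanned by the coordinates `a, …, k`. -/
def coordSphere (k : Fin n) (a : ℕ) : Set (Fin n → ℝ) :=
  {v | v ⬝ᵥ v = 1 ∧ ∀ i : Fin n, i.val < a ∨ k < i → v i = 0}

/-- The closed hemisphere of `coordSphere k a` centred at `c`. -/
def hemisphere (k : Fin n) (a : ℕ) (c : Fin n → ℝ) : Set (Fin n → ℝ) :=
  {v | v ∈ coordSphere k a ∧ 0 ≤ v ⬝ᵥ c}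

theorem isClosed_coordSphere (k : Fin n) (a : ℕ) : IsClosed (coordSphere k a) := by
  simp only [coordSphere, ofPred_and, ofPred_forall]
  exact (isClosed_eq (by fun_prop) (by fun_prop)).inter <|
    isClosed_iInter fun i => isClosed_iInter fun _ => isClosed_eq (by fun_prop) (by fun_prop)

theorem isCompact_coordSphere (k : Fin n) (a : ℕ) : IsCompact (coordSphere k a) := by
  have cube : IsCompact (univ.pi fun _ : Fin n => Icc (-1 : ℝ) 1) :=
    isCompact_univ_pi fun _ => isCompact_Icc
  refine cube.of_isClosed_subset (isClosed_coordSphere k a) fun v hv i _ => abs_le.1 ?_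
  rw [abs_le_one_iff_mul_self_le_one, ← hv.1]
  exact Finset.single_le_sum (f := fun i => v i * v i) (fun j _ => mul_self_nonneg _)
    (Finset.mem_univ i)

theorem isClosed_hemisphere (k : Fin n) (a : ℕ) (c : Fin n → ℝ) : IsClosed (hemisphere k a c) :=
  (isClosed_coordSphere k a).inter <|
    isClosed_le continuous_const (Continuous.dotProduct continuous_id continuous_const)

theorem isCompact_hemisphere (k : Fin n) (a : ℕ) (c : Fin n → ℝ) : IsCompact (hemisphere k a c) :=
  (isCompact_coordSphere k a).of_isClosed_subset (isClosed_hemisphere k a c) fun _ h => h.1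

theorem coordSphere_anti {b : ℕ} (hab : a ≤ b) : coordSphere k b ⊆ coordSphere k a :=
  fun _ h => ⟨h.1, fun i hi => h.2 i (hi.imp_left hab.trans_lt')⟩

theorem neg_mem_coordSphere (h : v ∈ coordSphere k a) : -v ∈ coordSphere k a :=
  ⟨by rw [neg_dotProduct_neg, h.1], fun i hi => by rw [Pi.neg_apply, h.2 i hi, neg_zero]⟩

theorem unitVec_mem_coordSphere {i : Fin n} (hai : a ≤ i.val) (hik : i ≤ k) :
    unitVec i ∈ coordSphere k a := by
  refine ⟨by simp, fun j hj => Pi.single_eq_of_ne ?_ _⟩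
  rintro rfl
  rcases hj with hj | hj
  · omega
  · exact hj.not_ge hik

theorem eq_unitVec_or_eq_neg_unitVec (h : v ∈ coordSphere k k) :
    v = unitVec k ∨ v = -unitVec k := by
  have hv : v = Pi.single k (v k) := by
    funext i
    rcases eq_or_ne i k with rfl | hi
    · rw [Pi.single_eq_same]
    · rw [Pi.single_eq_of_ne hi, h.2 i (lt_or_gt_of_ne hi : i < k ∨ k < i)]
  have hk := h.1
  rw [hv, single_dotProduct, Pi.single_eq_same, mul_self_eq_one_iff] at hk
  rw [hv]
  exact hk.imp (fun hk => by rw [hk]) fun hk => by rw [hk, Pi.single_neg]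

theorem coordSphere_self (k : Fin n) : coordSphere k k = {unitVec k} ∪ {-unitVec k} := by
  refine Subset.antisymm (fun v hv => eq_unitVec_or_eq_neg_unitVec hv) ?_
  have h : unitVec k ∈ coordSphere k k := unitVec_mem_coordSphere le_rfl le_rfl
  rintro v (rfl | rfl)
  exacts [h, neg_mem_coordSphere h]

theorem hemisphere_union_neg (k : Fin n) (a : ℕ) (c : Fin n → ℝ) :
    hemisphere k a c ∪ hemisphere k a (-c) = coordSphere k a := by
  ext v
  simp only [hemisphere, mem_union, mem_ofPred_eq, ← and_or_left, dotProduct_neg, neg_nonneg]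
  exact and_iff_left (le_total _ _)

theorem hemisphere_inter_neg (k a : Fin n) :
    hemisphere k a (unitVec a) ∩ hemisphere k a (-unitVec a) = coordSphere k (a.val + 1) := by
  ext v
  simp only [hemisphere, mem_inter_iff, mem_ofPred_eq, dotProduct_neg, neg_nonneg,
    dotProduct_single, mul_one, ← and_and_left, ← le_antisymm_iff]
  refine ⟨fun ⟨hv, ha⟩ => ⟨hv.1, fun i hi => ?_⟩,
    fun hv => ⟨coordSphere_anti (Nat.le_succ _) hv, ?_⟩⟩
  · rcases eq_or_ne i a with rfl | hia
    · exact ha.symm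
    · exact hv.2 i (hi.imp_left fun hi => by have := Fin.val_ne_of_ne hia; omega)
  · exact (hv.2 a (.inl (Nat.lt_succ_self _))).symm

end Sphere

section Arc

/-- The point of the great circle arc from `u` to `w` obtained by projecting the point with
parameter `t` of the segment radially to the unit sphere; it does not have constant speed. -/
noncomputable def arc (u w : Fin n → ℝ) (t : ℝ) : Fin n → ℝ :=
  (√(((1 - t) • u + t • w) ⬝ᵥ ((1 - t) • u + t • w)))⁻¹ • ((1 - t) • u + t • w)

theorem arc_zero (hu : u ⬝ᵥ u = 1) (w : Fin n → ℝ) : arc u w 0 = u := by simp [arc, hu]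

theorem arc_one (u : Fin n → ℝ) (hw : w ⬝ᵥ w = 1) : arc u w 1 = w := by simp [arc, hw]

theorem segment_dotProduct_self_pos (hu : u ⬝ᵥ u = 1) (hw : w ⬝ᵥ w = 1) (h : 0 ≤ u ⬝ᵥ w)
    (ht : t ∈ Icc (0 : ℝ) 1) :
    0 < ((1 - t) • u + t • w) ⬝ᵥ ((1 - t) • u + t • w) := by
  have expand : ((1 - t) • u + t • w) ⬝ᵥ ((1 - t) • u + t • w) =
      (1 - t) ^ 2 + t ^ 2 + 2 * (t * (1 - t) * (u ⬝ᵥ w)) := by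
    simp only [add_dotProduct, dotProduct_add, smul_dotProduct, dotProduct_smul, hu, hw,
      dotProduct_comm w u, smul_eq_mul]
    ring
  have cross : 0 ≤ t * (1 - t) * (u ⬝ᵥ w) :=
    mul_nonneg (mul_nonneg ht.1 (sub_nonneg.2 ht.2)) h
  nlinarith [sq_nonneg (2 * t - 1)]

theorem arc_dotProduct_self (hu : u ⬝ᵥ u = 1) (hw : w ⬝ᵥ w = 1) (h : 0 ≤ u ⬝ᵥ w)
    (ht : t ∈ Icc (0 : ℝ) 1) : arc u w t ⬝ᵥ arc u w t = 1 := by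
  have hpos := segment_dotProduct_self_pos hu hw h ht
  rw [arc, smul_dotProduct, dotProduct_smul, smul_eq_mul, smul_eq_mul, ← mul_assoc, ← mul_inv,
    Real.mul_self_sqrt hpos.le, inv_mul_cancel₀ hpos.ne']

theorem arc_dotProduct_nonneg (hu : 0 ≤ u ⬝ᵥ c) (hw : 0 ≤ w ⬝ᵥ c) (ht : t ∈ Icc (0 : ℝ) 1) :
    0 ≤ arc u w t ⬝ᵥ c := by
  have segment : 0 ≤ ((1 - t) • u + t • w) ⬝ᵥ c := by
    rw [add_dotProduct, smul_dotProduct, smul_dotProduct]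
    exact add_nonneg (mul_nonneg (sub_nonneg.2 ht.2) hu) (mul_nonneg ht.1 hw)
  rw [arc, smul_dotProduct]
  exact mul_nonneg (by positivity) segment

theorem arc_mem_hemisphere (hu : u ∈ hemisphere k a c) (hw : w ∈ hemisphere k a c)
    (h : 0 ≤ u ⬝ᵥ w) (ht : t ∈ Icc (0 : ℝ) 1) : arc u w t ∈ hemisphere k a c :=
  ⟨⟨arc_dotProduct_self hu.1.1 hw.1.1 h ht, fun i hi => by simp [arc, hu.1.2 i hi, hw.1.2 i hi]⟩,
    arc_dotProduct_nonneg hu.2 hw.2 ht⟩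

theorem continuousOn_arc {Z : Type*} [TopologicalSpace Z] {S : Set Z} {f g : Z → Fin n → ℝ}
    (hf : ContinuousOn f S) (hg : ContinuousOn g S) (hfu : ∀ z ∈ S, f z ⬝ᵥ f z = 1)
    (hgu : ∀ z ∈ S, g z ⬝ᵥ g z = 1) (h : ∀ z ∈ S, 0 ≤ f z ⬝ᵥ g z) :
    ContinuousOn (fun z : ℝ × Z => arc (f z.2) (g z.2) z.1) (Icc 0 1 ×ˢ S) := by
  have segment : ContinuousOn (fun z : ℝ × Z => (1 - z.1) • f z.2 + z.1 • g z.2) (Icc 0 1 ×ˢ S) :=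
    ((continuousOn_const.sub continuousOn_fst).smul
      (hf.comp continuousOn_snd fun z hz => hz.2)).add
      (continuousOn_fst.smul (hg.comp continuousOn_snd fun z hz => hz.2))
  refine ContinuousOn.smul
    (ContinuousOn.inv₀ (Real.continuous_sqrt.comp_continuousOn ?_) fun z hz => ?_) segment
  · exact (Continuous.dotProduct continuous_id continuous_id).comp_continuousOn segment
  · exact (Real.sqrt_pos.2 (segment_dotProduct_self_pos (hfu _ hz.2) (hgu _ hz.2)
      (h _ hz.2) hz.1)).ne'

end Arc

end SpecialOrthogonal

/-! ### Products with hemispheres -/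

namespace SpecialOrthogonal

open AlexanderSpanier Matrix

variable {n : ℕ} {c : Fin n → ℝ} {M : Type*} {F : Set M} {p q j : ℕ}

section Pole

/-- The map that moves the sphere coordinate to the pole `unitVec k`. -/
def toPole (k : Fin n) : (Fin n → ℝ) × M → (Fin n → ℝ) × M := Prod.map (fun _ => unitVec k) id

/-- The antipodal map in the sphere coordinate. -/
def antipode : (Fin n → ℝ) × M → (Fin n → ℝ) × M := Prod.map Neg.neg id

/-- The cochain `φ` is invariant under the antipodal map on `S`. -/
def IsAntipodal (S : Set ((Fin n → ℝ) × M)) (φ : Cochain ((Fin n → ℝ) × M)) : Prop :=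
  ∀ t : ℕ → (Fin n → ℝ) × M, (∀ i, t i ∈ S) → φ (antipode ∘ t) = φ t

variable {k : Fin n} {a : ℕ} {t : ℕ → (Fin n → ℝ) × M}

theorem antipode_antipode (x : (Fin n → ℝ) × M) : antipode (antipode x) = x :=
  Prod.ext (neg_neg x.1) rfl

theorem antipode_mem_coordSphere_prod {x : (Fin n → ℝ) × M} (hx : x ∈ coordSphere k a ×ˢ F) :
    antipode x ∈ coordSphere k a ×ˢ F :=
  ⟨neg_mem_coordSphere hx.1, hx.2⟩

theorem mapsTo_antipode_hemisphere (k : Fin n) (a : ℕ) (c : Fin n → ℝ) (F : Set M) :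
    MapsTo antipode (hemisphere k a (-c) ×ˢ F) (hemisphere k a c ×ˢ F) :=
  fun x hx => ⟨⟨neg_mem_coordSphere hx.1.1, by
    rw [antipode, Prod.map_fst, neg_dotProduct, ← dotProduct_neg]; exact hx.1.2⟩, hx.2⟩

theorem pole_prod_subset (hak : a ≤ k.val) (F : Set M) :
    ({unitVec k} : Set (Fin n → ℝ)) ×ˢ F ⊆ coordSphere k a ×ˢ F :=
  prod_mono_left (singleton_subset_iff.2 (unitVec_mem_coordSphere hak le_rfl))

theorem toPole_mem_coordSphere_prod (hak : a ≤ k.val) {x : (Fin n → ℝ) × M} (hx : x.2 ∈ F) :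
    toPole k x ∈ coordSphere k a ×ˢ F :=
  pole_prod_subset hak F ⟨rfl, hx⟩

theorem toPole_comp (ht : ∀ i, t i ∈ ({unitVec k} : Set (Fin n → ℝ)) ×ˢ F) : toPole k ∘ t = t :=
  funext fun i => Prod.ext (ht i).1.symm rfl

theorem hemisphere_prod_union_neg (k : Fin n) (a : ℕ) (c : Fin n → ℝ) (F : Set M) :
    hemisphere k a c ×ˢ F ∪ hemisphere k a (-c) ×ˢ F = coordSphere k a ×ˢ F := by
  rw [← union_prod, hemisphere_union_neg]

theorem hemisphere_prod_inter_neg (k a : Fin n) (F : Set M) :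
    hemisphere k a (unitVec a) ×ˢ F ∩ hemisphere k a (-unitVec a) ×ˢ F =
      coordSphere k (a.val + 1) ×ˢ F := by
  rw [← inter_prod, hemisphere_inter_neg]

theorem coordSphere_self_prod (k : Fin n) (F : Set M) :
    coordSphere k k ×ˢ F = {unitVec k} ×ˢ F ∪ {-unitVec k} ×ˢ F := by
  rw [coordSphere_self, union_prod]

theorem coordSphere_prod_anti (k : Fin n) (a : ℕ) (F : Set M) :
    coordSphere k (a + 1) ×ˢ F ⊆ coordSphere k a ×ˢ F :=
  prod_mono_left (coordSphere_anti a.le_succ)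

end Pole

variable [TopologicalSpace M]

section HemisphereCohomology

variable {k : Fin n} {a : ℕ} {φ : Cochain ((Fin n → ℝ) × M)}

theorem continuous_toPole (k : Fin n) :
    Continuous (toPole k : (Fin n → ℝ) × M → (Fin n → ℝ) × M) :=
  continuous_const.prodMap continuous_id

theorem continuous_antipode : Continuous (antipode : (Fin n → ℝ) × M → (Fin n → ℝ) × M) :=
  continuous_neg.prodMap continuous_id

theorem cohomologous_pullback_prodMap (hF : IsCompact F) {f g : (Fin n → ℝ) → Fin n → ℝ}
    (hf : ContinuousOn f (hemisphere k a c)) (hg : ContinuousOn g (hemisphere k a c))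
    (hfm : MapsTo f (hemisphere k a c) (hemisphere k a c))
    (hgm : MapsTo g (hemisphere k a c) (hemisphere k a c))
    (hfg : ∀ v ∈ hemisphere k a c, 0 ≤ f v ⬝ᵥ g v) (hφ : IsCocycle (hemisphere k a c ×ˢ F) p φ) :
    Cohomologous (hemisphere k a c ×ˢ F) p (pullback (Prod.map f id) φ)
      (pullback (Prod.map g id) φ) := by
  have homotopy := hφ.cohomologous_pullback ((isCompact_hemisphere k a c).prod hF)
    (H := fun s x => (arc (f x.1) (g x.1) s, x.2)) ?_ ?_
  · refine homotopy.congr fun t ht =>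
      congrArg₂ (φ · + φ ·) (funext fun i => ?_) (funext fun i => ?_)
    · exact Prod.ext (arc_zero (hfm (ht i).1).1.1 _) rfl
    · exact Prod.ext (arc_one _ (hgm (ht i).1).1.1) rfl
  · have hf' : ContinuousOn (fun x : (Fin n → ℝ) × M => f x.1) (hemisphere k a c ×ˢ F) :=
      hf.comp continuousOn_fst fun x hx => hx.1
    have hg' : ContinuousOn (fun x : (Fin n → ℝ) × M => g x.1) (hemisphere k a c ×ˢ F) :=
      hg.comp continuousOn_fst fun x hx => hx.1
    exact (continuousOn_arc hf' hg' (fun x hx => (hfm hx.1).1.1) (fun x hx => (hgm hx.1).1.1)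
      fun x hx => hfg _ hx.1).prodMk continuousOn_snd.snd
  · exact fun s hs x hx => ⟨arc_mem_hemisphere (hfm hx.1) (hgm hx.1) (hfg _ hx.1) hs, hx.2⟩

/- The hemisphere is contracted first to its centre `c` and then along a meridian to the point
`unitVec k` of its boundary. -/
theorem cohomologous_pullback_toPole (hF : IsCompact F) (hak : a ≤ k.val)
    (hc : c ∈ coordSphere k a) (hck : c k = 0) (hφ : IsCocycle (hemisphere k a c ×ˢ F) p φ) :
    Cohomologous (hemisphere k a c ×ˢ F) p φ (pullback (toPole k) φ) := by
  have centre : c ∈ hemisphere k a c := ⟨hc, by rw [hc.1]; exact zero_le_one⟩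
  have pole : unitVec k ∈ hemisphere k a c :=
    ⟨unitVec_mem_coordSphere hak le_rfl, by rw [single_dotProduct, hck, mul_zero]⟩
  exact (cohomologous_pullback_prodMap hF (f := id) (g := fun _ => c) continuousOn_id
    continuousOn_const (fun v hv => hv) (fun _ _ => centre) (fun v hv => hv.2) hφ).trans
    (cohomologous_pullback_prodMap hF (f := fun _ => c) (g := fun _ => unitVec k)
      continuousOn_const continuousOn_const (fun _ _ => centre) (fun _ _ => pole)
      (fun _ _ => by rw [dotProduct_single, hck, zero_mul]) hφ)

theorem isCoboundary_hemisphere_prod (hF : IsCompact F) (hak : a ≤ k.val)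
    (hc : c ∈ coordSphere k a) (hck : c k = 0) (hφ : IsCocycle (hemisphere k a c ×ˢ F) p φ)
    (hpole : IsCoboundary ({unitVec k} ×ˢ F) p φ) :
    IsCoboundary (hemisphere k a c ×ˢ F) p φ :=
  (cohomologous_pullback_toPole hF hak hc hck hφ).isCoboundary
    (hpole.pullback (continuous_toPole k).continuousOn fun _ hx => ⟨rfl, hx.2⟩)

end HemisphereCohomology

section Halves

variable {k a : Fin n} {φ : Cochain ((Fin n → ℝ) × M)}

theorem isClosed_hemisphere_prod (hF : IsClosed F) (k : Fin n) (a : ℕ) (c : Fin n → ℝ) :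
    IsClosed (hemisphere k a c ×ˢ F) :=
  (isClosed_hemisphere k a c).prod hF

theorem isCoboundary_hemisphere_unitVec (hF : IsCompact F) (hak : a < k)
    (hφ : IsCocycle (coordSphere k a ×ˢ F) p φ) (hpole : IsCoboundary ({unitVec k} ×ˢ F) p φ) :
    IsCoboundary (hemisphere k a (unitVec a) ×ˢ F) p φ :=
  isCoboundary_hemisphere_prod hF hak.le (unitVec_mem_coordSphere le_rfl hak.le)
    (Pi.single_eq_of_ne hak.ne' _) (hφ.mono (prod_mono_left fun _ h => h.1)) hpole

end Halves

end SpecialOrthogonal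

/-! ### The fundamental class of a sphere -/

namespace SpecialOrthogonal

open AlexanderSpanier Matrix

variable {n : ℕ} {M : Type*} [TopologicalSpace M] {F : Set M} {p q j a : ℕ} {k : Fin n}

section Antipodal

variable {φ θ : Cochain ((Fin n → ℝ) × M)} {A B : Set ((Fin n → ℝ) × M)}

theorem isCoboundary_zero_union_of_antipode (hd : HasDegree 0 φ) (hA : IsCoboundary A 0 φ)
    (hBA : MapsTo antipode B A) (hφ : IsAntipodal B φ) : IsCoboundary (A ∪ B) 0 φ := by
  have hB : IsCoboundary B 0 φ := (hA.pullback continuous_antipode.continuousOn hBA).congr hφ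
  exact (hA.vanishesNear.union_of_hasDegree_zero hd hB.vanishesNear).isCoboundary

theorem isCoboundary_zero_of_isAntipodal (hF : IsCompact F) (hak : a ≤ k.val)
    (hφ : IsCocycle (coordSphere k a ×ˢ F) 0 φ) (hinv : IsAntipodal (coordSphere k a ×ˢ F) φ)
    (hpole : IsCoboundary ({unitVec k} ×ˢ F) 0 φ) : IsCoboundary (coordSphere k a ×ˢ F) 0 φ := by
  rcases hak.eq_or_lt with rfl | hlt
  · rw [coordSphere_self_prod] at hinv ⊢
    refine isCoboundary_zero_union_of_antipode hφ.1 hpole (fun x hx => ⟨?_, hx.2⟩)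
      fun t ht => hinv t fun i => .inr (ht i)
    rw [mem_singleton_iff, antipode, Prod.map_fst, hx.1, neg_neg]
  · obtain ⟨a, rfl⟩ : ∃ a' : Fin n, a'.val = a := ⟨⟨a, hlt.trans k.isLt⟩, rfl⟩
    have half := isCoboundary_hemisphere_unitVec hF hlt hφ hpole
    rw [← hemisphere_prod_union_neg k a (unitVec a)] at hinv ⊢
    exact isCoboundary_zero_union_of_antipode hφ.1 half (mapsTo_antipode_hemisphere _ _ _ _)
      fun t ht => hinv t fun i => .inr (ht i)

variable [TopologicalSpace.PseudoMetrizableSpace M] {a : Fin n}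

/- Cochains `β` and `antipode^* β` trivialize `φ` on the two hemispheres; their difference on the
equator is antipodal. -/
theorem exists_isAntipodal_cohomologous_connecting (hF : IsCompact F) (hFc : IsClosed F)
    (hak : a < k) (hφ : IsCocycle (coordSphere k a ×ˢ F) (q + 1) φ)
    (hinv : IsAntipodal (coordSphere k a ×ˢ F) φ)
    (hpole : IsCoboundary ({unitVec k} ×ˢ F) (q + 1) φ) :
    ∃ θ, HasDegree q θ ∧
      VanishesNear (coordSphere k (a.val + 1) ×ˢ F) (coordSphere k a ×ˢ F) (delta q θ) ∧
      Cohomologous (coordSphere k a ×ˢ F) (q + 1) φ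
        (connecting (hemisphere k a (unitVec a) ×ˢ F) θ) ∧
      IsAntipodal (coordSphere k (a.val + 1) ×ˢ F) θ := by
  obtain ⟨β, dβ, hβ⟩ := isCoboundary_hemisphere_unitVec hF hak hφ hpole
  rw [deltaTo_succ] at hβ
  have hβ' : VanishesNear (hemisphere k a (-unitVec a) ×ˢ F) (hemisphere k a (-unitVec a) ×ˢ F)
      (φ + delta q (pullback antipode β)) := by
    refine (hβ.pullback (.of_continuousOn continuous_antipode.continuousOn
      (mapsTo_antipode_hemisphere _ _ _ _))).congr fun t ht => ?_
    exact congrArg (· + _) (hinv t fun i => ⟨(ht i).1.1, (ht i).2⟩)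
  rw [← hemisphere_prod_union_neg k a (unitVec a)] at hφ ⊢
  obtain ⟨θ, dθ, hθ, hcoh, hθβ⟩ := exists_cohomologous_connecting
    (isClosed_hemisphere_prod hFc _ _ _) (isClosed_hemisphere_prod hFc _ _ _) hφ dβ hβ
    (dβ.pullback _) hβ'
  rw [hemisphere_prod_inter_neg] at hθ hθβ
  refine ⟨θ, dθ, hθ, hcoh, fun t ht => ?_⟩
  have involutive : antipode ∘ antipode ∘ t = t := funext fun i => antipode_antipode _
  have ht' (i : ℕ) : (antipode ∘ t) i ∈ coordSphere k (a.val + 1) ×ˢ F :=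
    antipode_mem_coordSphere_prod (ht i)
  rw [hθβ _ ht', hθβ t ht, pullback, pullback, involutive, add_comm]

theorem isCoboundary_connecting_hemisphere (hFc : IsClosed F) (hak : a < k) (hd : HasDegree q θ)
    (hδ : VanishesNear (coordSphere k (a.val + 1) ×ˢ F) (coordSphere k a ×ˢ F) (delta q θ))
    (h : Cohomologous (coordSphere k (a.val + 1) ×ˢ F) q θ (pullback (toPole k) θ)) :
    IsCoboundary (coordSphere k a ×ˢ F) (q + 1)
      (connecting (hemisphere k a (unitVec a) ×ˢ F) θ) := by
  have hπ : IsCocycle (coordSphere k a ×ˢ F) q (pullback (toPole k) θ) :=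
    IsCocycle.pullback ⟨hd, hδ.mono subset_rfl (coordSphere_prod_anti k a F)⟩
      (continuous_toPole k).continuousOn fun x hx => toPole_mem_coordSphere_prod hak hx.2
  suffices hcoh : Cohomologous (coordSphere k a ×ˢ F) (q + 1)
      (connecting (hemisphere k a (unitVec a) ×ˢ F) θ)
      (connecting (hemisphere k a (unitVec a) ×ˢ F) (pullback (toPole k) θ)) from
    hcoh.isCoboundary (hπ.isCoboundary_connecting _)
  rw [Cohomologous, ← connecting_add, ← hemisphere_prod_union_neg k a (unitVec a)]
  refine isCoboundary_connecting (isClosed_hemisphere_prod hFc _ _ _)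
    (isClosed_hemisphere_prod hFc _ _ _) (hd.add hπ.1) ?_ ?_
  · rw [hemisphere_prod_inter_neg, hemisphere_prod_union_neg, delta_add]
    exact hδ.add (hπ.2.mono (coordSphere_prod_anti k a F) subset_rfl)
  · rwa [hemisphere_prod_inter_neg]

/- An antipodal class would descend to the product of `F` with a projective space of dimension
`k - a`; below the top dimension the pullback from there to the sphere is zero. -/
theorem isCoboundary_of_isAntipodal (hF : IsCompact F) (hFc : IsClosed F) {a : ℕ}
    (haq : a + q ≤ k.val) (hφ : IsCocycle (coordSphere k a ×ˢ F) q φ)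
    (hinv : IsAntipodal (coordSphere k a ×ˢ F) φ)
    (hpole : IsCoboundary ({unitVec k} ×ˢ F) q φ) : IsCoboundary (coordSphere k a ×ˢ F) q φ := by
  induction q generalizing a φ with
  | zero => exact isCoboundary_zero_of_isAntipodal hF haq hφ hinv hpole
  | succ q ih =>
    have hlt : a < k.val := by omega
    obtain ⟨a, rfl⟩ : ∃ a' : Fin n, a'.val = a := ⟨⟨a, hlt.trans k.isLt⟩, rfl⟩
    obtain ⟨θ, dθ, hθ, hcoh, θinv⟩ :=
      exists_isAntipodal_cohomologous_connecting hF hFc hlt hφ hinv hpole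
    refine hcoh.isCoboundary (isCoboundary_connecting_hemisphere hFc hlt dθ hθ ?_)
    have θcocycle : IsCocycle (coordSphere k (a.val + 1) ×ˢ F) q θ :=
      ⟨dθ, hθ.mono subset_rfl (coordSphere_prod_anti k a F)⟩
    refine ih (by omega) (θcocycle.add (θcocycle.pullback (continuous_toPole k).continuousOn
      fun x hx => toPole_mem_coordSphere_prod hlt hx.2)) (fun t ht => ?_) ?_
    · exact congrArg (· + _) (θinv t ht)
    · refine (VanishesNear.of_forall fun t ht => ?_).isCoboundary
      rw [Pi.add_apply, pullback, toPole_comp ht, CharTwo.add_self_eq_zero]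

end Antipodal

section FundamentalClass

/-- The cocycle `s` on `coordSphere k a ×ˢ F` behaves like the cross product with `1` of the
generator of the cohomology of the sphere in its top degree `j`, normalized to be zero over the
pole `unitVec k`. -/
structure IsFundamentalClass (k : Fin n) (a : ℕ) (F : Set M) (j : ℕ)
    (s : Cochain ((Fin n → ℝ) × M)) : Prop where
  isCocycle : IsCocycle (coordSphere k a ×ˢ F) j s
  apply_pole : ∀ t, (∀ i, t i ∈ ({unitVec k} : Set (Fin n → ℝ)) ×ˢ F) → s t = 0
  isCoboundary_of_cup : ∀ q z, IsCocycle F q z →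
    IsCoboundary (coordSphere k a ×ˢ F) (j + q) (cup j s (pullback Prod.snd z)) →
      IsCoboundary F q z

theorem isCocycle_charFn_neg (k : Fin n) (F : Set M) :
    IsCocycle (coordSphere k k ×ˢ F) 0 (charFn {x : (Fin n → ℝ) × M | x.1 k < 0}) := by
  refine ⟨hasDegree_charFn _, ?_⟩
  rintro ⟨v, b⟩ ⟨hv, -⟩
  rcases eq_unitVec_or_eq_neg_unitVec hv with rfl | rfl
  · exact ⟨{x | 0 < x.1 k}, (isOpen_lt (by fun_prop) (by fun_prop)).mem_nhds (by simp),
      fun t ht => delta_charFn_of_forall_notMem fun i => not_lt_of_gt <|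
        show 0 < (t i).1 k from (ht i).1⟩
  · exact ⟨{x | x.1 k < 0}, (isOpen_lt (by fun_prop) (by fun_prop)).mem_nhds (by simp),
      fun t ht => delta_charFn_of_forall_mem fun i => (ht i).1⟩

theorem isFundamentalClass_charFn (k : Fin n) (F : Set M) :
    IsFundamentalClass k k F 0 (charFn {x : (Fin n → ℝ) × M | x.1 k < 0}) where
  isCocycle := isCocycle_charFn_neg k F
  apply_pole t ht := charFn_of_forall_notMem fun i => by
    have pole : (t i).1 = unitVec k := (ht i).1
    simp [pole]
  isCoboundary_of_cup q z _ h := by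
    have section_mapsTo : MapsTo (fun b : M => (-unitVec k, b)) F (coordSphere k k ×ˢ F) :=
      fun b hb => ⟨neg_mem_coordSphere (unitVec_mem_coordSphere le_rfl le_rfl), hb⟩
    have slice := h.pullback (by fun_prop) section_mapsTo
    rw [zero_add] at slice
    exact slice.congr fun t _ => cup_charFn_of_forall_mem (fun i => by simp) _

variable {a : Fin n} {s s' : Cochain ((Fin n → ℝ) × M)}

/- Restricted to the equator, the two Mayer–Vietoris summands of the class are pulled back from
the pole, where `s` is zero. -/
theorem IsFundamentalClass.isCoboundary_of_cup_connecting
    (hs : IsFundamentalClass k (a.val + 1) F j s) (hF : IsCompact F) (hFc : IsClosed F)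
    (hak : a < k) (hd : HasDegree j s')
    (hδ : VanishesNear (coordSphere k (a.val + 1) ×ˢ F) (coordSphere k a ×ˢ F) (delta j s'))
    (hss' : ∀ t, (∀ i, t i ∈ coordSphere k (a.val + 1) ×ˢ F) → s' t = s t)
    {z : Cochain M} (hz : IsCocycle F q z)
    (h : IsCoboundary (coordSphere k a ×ˢ F) (j + 1 + q)
      (cup (j + 1) (connecting (hemisphere k a (unitVec a) ×ˢ F) s') (pullback Prod.snd z))) :
    IsCoboundary F q z := by
  have hz' : IsCocycle (coordSphere k a ×ˢ F) q (pullback Prod.snd z) :=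
    hz.pullback continuous_snd.continuousOn fun x hx => hx.2
  have hδcup : VanishesNear (coordSphere k (a.val + 1) ×ˢ F) (coordSphere k a ×ˢ F)
      (delta (j + q) (cup j s' (pullback Prod.snd z))) := by
    rw [delta_cup _ _ _ _ hd]
    exact (hδ.cup_right _ _).add
      ((hz'.2.mono (coordSphere_prod_anti k a F) subset_rfl).cup_left _ _)
  rw [cup_connecting, Nat.add_right_comm, ← hemisphere_prod_union_neg k a (unitVec a)] at h
  rw [← hemisphere_prod_inter_neg, ← hemisphere_prod_union_neg k a (unitVec a)] at hδcup
  obtain ⟨x, y, hx, hy, hxy⟩ := exists_add_of_isCoboundary_connecting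
    (isClosed_hemisphere_prod hFc _ _ _) (hd.cup (hz.1.pullback _)) hδcup h
  rw [hemisphere_prod_inter_neg] at hxy
  refine hs.isCoboundary_of_cup q z hz ?_
  have hx' := (cohomologous_pullback_toPole hF hak.le (unitVec_mem_coordSphere le_rfl hak.le)
    (Pi.single_eq_of_ne hak.ne' _) hx).mono ((hemisphere_prod_inter_neg k a F).superset.trans
      inter_subset_left)
  have hy' := (cohomologous_pullback_toPole hF hak.le
    (neg_mem_coordSphere (unitVec_mem_coordSphere le_rfl hak.le))
    (neg_eq_zero.2 (Pi.single_eq_of_ne hak.ne' _)) hy).mono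
    ((hemisphere_prod_inter_neg k a F).superset.trans inter_subset_right)
  refine (hx'.add hy').congr fun t ht => ?_
  have pole (i : ℕ) : (toPole k ∘ t) i ∈ ({unitVec k} : Set (Fin n → ℝ)) ×ˢ F :=
    ⟨rfl, (ht i).2⟩
  have at_t : cup j s (pullback Prod.snd z) t = x t + y t := by
    rw [← hxy t ht, cup, cup, hss' t ht]
  have at_pole : x (toPole k ∘ t) + y (toPole k ∘ t) = 0 := by
    have pole' (i : ℕ) := pole_prod_subset hak F (pole i)
    rw [← hxy _ pole', cup, hss' _ pole', hs.apply_pole _ pole, zero_mul]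
  calc x t + x (toPole k ∘ t) + (y t + y (toPole k ∘ t))
      = x t + y t + (x (toPole k ∘ t) + y (toPole k ∘ t)) := by ring
    _ = cup j s (pullback Prod.snd z) t := by rw [at_pole, add_zero, at_t]

variable [TopologicalSpace.PseudoMetrizableSpace M]

theorem IsFundamentalClass.exists_of_equator (hs : IsFundamentalClass k (a.val + 1) F j s)
    (hF : IsCompact F) (hFc : IsClosed F) (hak : a < k) :
    ∃ s', IsFundamentalClass k a F (j + 1) s' := by
  obtain ⟨s', hd, hδ, hss'⟩ := exists_vanishesNear_delta
    ((isClosed_coordSphere k _).prod hFc) (coordSphere k a ×ˢ F) hs.isCocycle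
  refine ⟨connecting (hemisphere k a (unitVec a) ×ˢ F) s', ?_, fun t ht => ?_,
    fun q z hz h => hs.isCoboundary_of_cup_connecting hF hFc hak hd hδ hss' hz h⟩
  · rw [← hemisphere_prod_union_neg k a (unitVec a)] at hδ ⊢
    rw [← hemisphere_prod_inter_neg] at hδ
    exact isCocycle_connecting (isClosed_hemisphere_prod hFc _ _ _)
      (isClosed_hemisphere_prod hFc _ _ _) hd hδ
  · refine connecting_of_forall_mem (fun i => ?_) _
    have equator := pole_prod_subset hak F (ht i)
    rw [← hemisphere_prod_inter_neg] at equator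
    exact equator.1

theorem exists_isFundamentalClass (hF : IsCompact F) (hFc : IsClosed F) {a : ℕ}
    (haj : a + j = k.val) : ∃ s, IsFundamentalClass k a F j s := by
  induction j generalizing a with
  | zero =>
    obtain rfl : a = k.val := haj
    exact ⟨_, isFundamentalClass_charFn k F⟩
  | succ j ih =>
    obtain ⟨s, hs⟩ := ih (a := a + 1) (by omega)
    have hlt : a < k.val := by omega
    exact IsFundamentalClass.exists_of_equator (a := ⟨a, hlt.trans k.isLt⟩) hs hF hFc hlt

end FundamentalClass

section Vanishing

theorem cohomologyVanishes_hemisphere_prod (hF : IsCompact F) (hp : CohomologyVanishes F p)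
    {c : Fin n → ℝ} (hak : a ≤ k.val) (hc : c ∈ coordSphere k a) (hck : c k = 0) :
    CohomologyVanishes (hemisphere k a c ×ˢ F) p := fun φ hφ =>
  isCoboundary_hemisphere_prod hF hak hc hck hφ <| hp.singleton_prod _ φ <| hφ.mono <|
    prod_mono_left <| singleton_subset_iff.2
      ⟨unitVec_mem_coordSphere hak le_rfl, by rw [single_dotProduct, hck, mul_zero]⟩

variable [TopologicalSpace.PseudoMetrizableSpace M]

theorem cohomologyVanishes_coordSphere_prod (hF : IsCompact F) (hFc : IsClosed F) {D : ℕ}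
    (hD : ∀ q, D < q → CohomologyVanishes F q) (haj : a + j = k.val) (hq : D + j < q) :
    CohomologyVanishes (coordSphere k a ×ˢ F) q := by
  obtain ⟨q, rfl⟩ : ∃ r, q = r + 1 := ⟨q - 1, by omega⟩
  induction j generalizing a q with
  | zero =>
    obtain rfl : a = k.val := haj
    rw [coordSphere_self_prod]
    have disjoint : ({unitVec k} : Set (Fin n → ℝ)) ×ˢ F ∩ {-unitVec k} ×ˢ F = ∅ := by
      rw [← inter_prod, singleton_inter_eq_empty.2, empty_prod]
      exact fun h => self_ne_neg.2 (fun h0 => by simpa using congrFun h0 k) h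
    refine CohomologyVanishes.union (isClosed_singleton.prod hFc) (isClosed_singleton.prod hFc)
      ((hD _ hq).singleton_prod _) ((hD _ hq).singleton_prod _) ?_
    rw [disjoint]
    exact cohomologyVanishes_empty _
  | succ j ih =>
    have hlt : a < k.val := by omega
    obtain ⟨a, rfl⟩ : ∃ a' : Fin n, a'.val = a := ⟨⟨a, hlt.trans k.isLt⟩, rfl⟩
    have ha : unitVec a ∈ coordSphere k a := unitVec_mem_coordSphere le_rfl hlt.le
    have hak : unitVec a k = 0 := Pi.single_eq_of_ne (Fin.ne_of_gt hlt) _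
    have hD' := hD (q + 1) (by omega)
    rw [← hemisphere_prod_union_neg k a (unitVec a)]
    refine CohomologyVanishes.union (isClosed_hemisphere_prod hFc _ _ _)
      (isClosed_hemisphere_prod hFc _ _ _)
      (cohomologyVanishes_hemisphere_prod hF hD' hlt.le ha hak)
      (cohomologyVanishes_hemisphere_prod hF hD' hlt.le (neg_mem_coordSphere ha)
        (neg_eq_zero.2 hak)) ?_
    rw [hemisphere_prod_inter_neg]
    obtain ⟨q, rfl⟩ : ∃ r, q = r + 1 := ⟨q - 1, by omega⟩
    exact ih (by omega) q (by omega)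

end Vanishing

end SpecialOrthogonal

/-! ### Rotations and the groups `SO(k)` -/

namespace SpecialOrthogonal

open AlexanderSpanier Matrix

variable {n : ℕ} {u v w : Fin n → ℝ}

section Reflection

/-- The reflection of `ℝⁿ` in the hyperplane orthogonal to `u`. -/
noncomputable def reflection (u : Fin n → ℝ) : Matrix (Fin n) (Fin n) ℝ :=
  1 - (2 / (u ⬝ᵥ u)) • vecMulVec u u

theorem reflection_mulVec (u x : Fin n → ℝ) :
    reflection u *ᵥ x = x - (2 * (u ⬝ᵥ x) / (u ⬝ᵥ u)) • u := by
  rw [reflection, sub_mulVec, one_mulVec, smul_mulVec, vecMulVec_mulVec]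
  ext i
  simp only [Pi.sub_apply, Pi.smul_apply, smul_eq_mul, MulOpposite.smul_eq_mul_unop,
    MulOpposite.unop_op]
  ring

theorem reflection_mulVec_self (hu : u ⬝ᵥ u ≠ 0) : reflection u *ᵥ u = -u := by
  rw [reflection_mulVec, mul_div_cancel_right₀ _ hu, two_smul, sub_add_cancel_left]

theorem reflection_mulVec_of_dotProduct_eq_zero (h : u ⬝ᵥ v = 0) : reflection u *ᵥ v = v := by
  rw [reflection_mulVec, h, mul_zero, zero_div, zero_smul, sub_zero]

theorem transpose_reflection (u : Fin n → ℝ) : (reflection u)ᵀ = reflection u := by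
  simp [reflection, transpose_sub, transpose_vecMulVec]

theorem reflection_mul_self (hu : u ⬝ᵥ u ≠ 0) : reflection u * reflection u = 1 := by
  refine Matrix.ext_iff_mulVec.2 fun x => ?_
  rw [← mulVec_mulVec, reflection_mulVec u x, mulVec_sub, mulVec_smul, reflection_mulVec_self hu,
    reflection_mulVec, smul_neg, sub_neg_eq_add, sub_add_cancel, one_mulVec]

theorem det_reflection (hu : u ⬝ᵥ u ≠ 0) : (reflection u).det = -1 := by
  have rank_one_update :
      reflection u = 1 + replicateCol Unit (-(2 / (u ⬝ᵥ u)) • u) * replicateRow Unit u := by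
    rw [← vecMulVec_eq, reflection, smul_vecMulVec, sub_eq_add_neg, neg_smul]
  rw [rank_one_update, det_one_add_replicateCol_mul_replicateRow, dotProduct_smul, smul_eq_mul,
    neg_mul, div_mul_cancel₀ _ hu]
  norm_num

theorem continuousOn_reflection {Z : Type*} [TopologicalSpace Z] {S : Set Z} {f : Z → Fin n → ℝ}
    (hf : ContinuousOn f S) (h : ∀ z ∈ S, f z ⬝ᵥ f z ≠ 0) :
    ContinuousOn (fun z => reflection (f z)) S :=
  have outer : Continuous fun u : Fin n → ℝ => vecMulVec u u :=
    Continuous.matrix_vecMulVec continuous_id continuous_id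
  have square : Continuous fun u : Fin n → ℝ => u ⬝ᵥ u :=
    Continuous.dotProduct continuous_id continuous_id
  continuousOn_const.sub ((continuousOn_const.div (square.comp_continuousOn hf) h).smul
    (outer.comp_continuousOn hf))

end Reflection

section Rotation

/-- The rotation in the plane of the unit vectors `v` and `w` taking `v` to `w`. For `w = -v` the
first factor is `reflection 0 = 1`, which makes it a reflection instead. -/
noncomputable def rotation (v w : Fin n → ℝ) : Matrix (Fin n) (Fin n) ℝ :=
  reflection (v + w) * reflection v

theorem add_dotProduct_add_self (hv : v ⬝ᵥ v = 1) (hw : w ⬝ᵥ w = 1) :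
    (v + w) ⬝ᵥ (v + w) = 2 * (1 + v ⬝ᵥ w) := by
  simp only [add_dotProduct, dotProduct_add, hv, hw, dotProduct_comm w v]
  ring

theorem add_dotProduct_add_self_ne_zero (hv : v ⬝ᵥ v = 1) (hw : w ⬝ᵥ w = 1)
    (h : 1 + v ⬝ᵥ w ≠ 0) : (v + w) ⬝ᵥ (v + w) ≠ 0 := by
  rw [add_dotProduct_add_self hv hw]
  exact mul_ne_zero two_ne_zero h

theorem rotation_mulVec (hv : v ⬝ᵥ v = 1) (hw : w ⬝ᵥ w = 1) (h : 1 + v ⬝ᵥ w ≠ 0)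
    (x : Fin n → ℝ) :
    rotation v w *ᵥ x =
      x - (((v + w) ⬝ᵥ x) / (1 + v ⬝ᵥ w)) • (v + w) + (2 * (v ⬝ᵥ x)) • w := by
  rw [rotation, ← mulVec_mulVec, reflection_mulVec, reflection_mulVec,
    add_dotProduct_add_self hv hw]
  ext i
  simp only [Pi.sub_apply, Pi.add_apply, Pi.smul_apply, smul_eq_mul, dotProduct_sub,
    dotProduct_smul, add_dotProduct, hv, dotProduct_comm w v]
  field_simp
  ring

theorem transpose_rotation_mul_self (hv : v ⬝ᵥ v = 1) (hw : w ⬝ᵥ w = 1) (h : 1 + v ⬝ᵥ w ≠ 0) :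
    (rotation v w)ᵀ * rotation v w = 1 := by
  rw [rotation, transpose_mul, transpose_reflection, transpose_reflection, Matrix.mul_assoc,
    ← Matrix.mul_assoc (reflection (v + w)),
    reflection_mul_self (add_dotProduct_add_self_ne_zero hv hw h), Matrix.one_mul,
    reflection_mul_self (hv.trans_ne one_ne_zero)]

theorem det_rotation (hv : v ⬝ᵥ v = 1) (hw : w ⬝ᵥ w = 1) (h : 1 + v ⬝ᵥ w ≠ 0) :
    (rotation v w).det = 1 := by
  rw [rotation, det_mul, det_reflection (add_dotProduct_add_self_ne_zero hv hw h),
    det_reflection (hv.trans_ne one_ne_zero), neg_mul_neg, one_mul]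

theorem rotation_mulVec_left (hv : v ⬝ᵥ v = 1) (hw : w ⬝ᵥ w = 1) (h : 1 + v ⬝ᵥ w ≠ 0) :
    rotation v w *ᵥ v = w := by
  rw [rotation_mulVec hv hw h, add_dotProduct, hv, dotProduct_comm w v, div_self h, one_smul,
    mul_one, two_smul]
  abel

theorem rotation_mul_rotation (hv : v ⬝ᵥ v = 1) (hw : w ⬝ᵥ w = 1) (h : 1 + v ⬝ᵥ w ≠ 0) :
    rotation w v * rotation v w = 1 := by
  refine Matrix.ext_iff_mulVec.2 fun x => ?_
  rw [← mulVec_mulVec, rotation_mulVec hv hw h, rotation_mulVec hw hv (by rwa [dotProduct_comm]),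
    one_mulVec]
  ext i
  simp only [Pi.sub_apply, Pi.add_apply, Pi.smul_apply, smul_eq_mul, add_dotProduct,
    dotProduct_add, dotProduct_sub, dotProduct_smul, hv, hw, dotProduct_comm w v]
  field_simp
  ring

theorem rotation_self (hv : v ⬝ᵥ v = 1) : rotation v v = 1 := by
  refine Matrix.ext_iff_mulVec.2 fun x => ?_
  rw [rotation_mulVec hv hv (by rw [hv]; norm_num), one_mulVec, hv]
  ext i
  simp only [Pi.sub_apply, Pi.add_apply, Pi.smul_apply, smul_eq_mul, add_dotProduct]
  ring

theorem rotation_neg_mul_rotation_mulVec (hv : v ⬝ᵥ v = 1) (hw : w ⬝ᵥ w = 1) (h : v ⬝ᵥ w = 0)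
    (x : Fin n → ℝ) :
    (rotation v (-w) * rotation w v) *ᵥ x = x - (2 * (w ⬝ᵥ x)) • w - (2 * (v ⬝ᵥ x)) • v := by
  have h' : w ⬝ᵥ v = 0 := by rwa [dotProduct_comm]
  rw [← mulVec_mulVec, rotation_mulVec hv (by simpa using hw) (by simp [h]),
    rotation_mulVec hw hv (by simp [h'])]
  ext i
  simp only [Pi.sub_apply, Pi.add_apply, Pi.smul_apply, Pi.neg_apply, smul_eq_mul, add_dotProduct,
    dotProduct_add, dotProduct_sub, dotProduct_smul, neg_dotProduct, dotProduct_neg, hv, hw, h, h']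
  field_simp
  ring

/-- Both sides are the half turn in the plane of `v` and `w`. -/
theorem rotation_neg_mul_rotation_even (hv : v ⬝ᵥ v = 1) (hw : w ⬝ᵥ w = 1) (h : v ⬝ᵥ w = 0) :
    rotation (-v) (-w) * rotation w (-v) = rotation v (-w) * rotation w v := by
  refine Matrix.ext_iff_mulVec.2 fun x => ?_
  rw [rotation_neg_mul_rotation_mulVec hv hw h,
    rotation_neg_mul_rotation_mulVec (by simpa using hv) hw (by simpa using h)]
  simp

theorem rotation_mulVec_unitVec {i : Fin n} (hv : v i = 0) (hw : w i = 0) :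
    rotation v w *ᵥ unitVec i = unitVec i := by
  have hvi : v ⬝ᵥ unitVec i = 0 := by rw [dotProduct_single_one, hv]
  have hvwi : (v + w) ⬝ᵥ unitVec i = 0 := by
    rw [dotProduct_single_one, Pi.add_apply, hv, hw, add_zero]
  rw [rotation, ← mulVec_mulVec, reflection_mulVec_of_dotProduct_eq_zero hvi,
    reflection_mulVec_of_dotProduct_eq_zero hvwi]

theorem continuousOn_rotation {Z : Type*} [TopologicalSpace Z] {S : Set Z} {f g : Z → Fin n → ℝ}
    (hf : ContinuousOn f S) (hg : ContinuousOn g S) (hfu : ∀ z ∈ S, f z ⬝ᵥ f z = 1)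
    (hgu : ∀ z ∈ S, g z ⬝ᵥ g z = 1) (h : ∀ z ∈ S, 1 + f z ⬝ᵥ g z ≠ 0) :
    ContinuousOn (fun z => rotation (f z) (g z)) S :=
  (continuousOn_reflection (hf.add hg) fun z hz =>
    add_dotProduct_add_self_ne_zero (hfu z hz) (hgu z hz) (h z hz)).mul
    (continuousOn_reflection hf fun z hz => (hfu z hz).trans_ne one_ne_zero)

end Rotation

section StandardSO

variable {A : Matrix (Fin n) (Fin n) ℝ} {k : Fin n}

/-- The copy of `SO(k)` in `SO(n)` that fixes the basis vectors from index `k` on. -/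
def standardSO (n k : ℕ) : Set (Matrix (Fin n) (Fin n) ℝ) :=
  {A | Aᵀ * A = 1 ∧ A.det = 1 ∧ ∀ i : Fin n, k ≤ i.val → A *ᵥ unitVec i = unitVec i}

theorem isClosed_standardSO (n k : ℕ) : IsClosed (standardSO n k) := by
  simp only [standardSO, ofPred_and, ofPred_forall]
  refine (isClosed_eq (by fun_prop) (by fun_prop)).inter
    ((isClosed_eq (by fun_prop) (by fun_prop)).inter ?_)
  exact isClosed_iInter fun i => isClosed_iInter fun _ => isClosed_eq (by fun_prop) (by fun_prop)

theorem isCompact_standardSO (n k : ℕ) : IsCompact (standardSO n k) := by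
  have cube : IsCompact (univ.pi fun _ : Fin n => univ.pi fun _ : Fin n => Icc (-1 : ℝ) 1) :=
    isCompact_univ_pi fun _ => isCompact_univ_pi fun _ => isCompact_Icc
  refine IsCompact.of_isClosed_subset (X := Matrix (Fin n) (Fin n) ℝ) cube
    (isClosed_standardSO n k) fun A hA i _ j _ => abs_le.1 ?_
  have column_norm : ∑ i, A i j * A i j = 1 := by
    simpa [mul_apply] using congrFun (congrFun hA.1 j) j
  rw [abs_le_one_iff_mul_self_le_one, ← column_norm]
  exact Finset.single_le_sum (f := fun i => A i j * A i j) (fun i _ => mul_self_nonneg _)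
    (Finset.mem_univ i)

theorem mulVec_dotProduct_mulVec (h : Aᵀ * A = 1) (x y : Fin n → ℝ) :
    (A *ᵥ x) ⬝ᵥ (A *ᵥ y) = x ⬝ᵥ y := by
  rw [dotProduct_mulVec, vecMul_mulVec, h, vecMul_one]

theorem mulVec_unitVec_mem_coordSphere (hA : A ∈ standardSO n (k.val + 1)) :
    A *ᵥ unitVec k ∈ coordSphere k 0 := by
  refine ⟨by rw [mulVec_dotProduct_mulVec hA.1]; simp, fun i hi => ?_⟩
  have hki : k < i := hi.resolve_left (Nat.not_lt_zero _)
  have column_orthogonal := mulVec_dotProduct_mulVec hA.1 (unitVec k) (unitVec i)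
  rw [hA.2.2 i hki] at column_orthogonal
  simpa [hki.ne, hki.ne'] using column_orthogonal

theorem standardSO_one [NeZero n] : standardSO n 1 = {1} := by
  refine Subset.antisymm (fun A hA => ?_) 
    (by rintro _ rfl; exact ⟨by simp, det_one, fun i _ => one_mulVec _⟩)
  have fixes {i : Fin n} (hi : i ≠ 0) : A *ᵥ unitVec i = unitVec i :=
    hA.2.2 i (Nat.one_le_iff_ne_zero.2 (Fin.val_ne_zero_iff.2 hi))
  have hmem : A *ᵥ unitVec 0 ∈ coordSphere (0 : Fin n) (0 : Fin n) := by
    have := mulVec_unitVec_mem_coordSphere (k := (0 : Fin n)) (A := A) (by simpa using hA)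
    simpa using this
  rcases eq_unitVec_or_eq_neg_unitVec hmem with h | h
  · refine Matrix.ext_of_mulVec_single fun i => ?_
    rcases eq_or_ne i 0 with rfl | hi
    · rw [h, one_mulVec]
    · rw [fixes hi, one_mulVec]
  · have eq_reflection : A = reflection (unitVec 0) := by
      refine Matrix.ext_of_mulVec_single fun i => ?_
      rcases eq_or_ne i 0 with rfl | hi
      · rw [h, reflection_mulVec_self (by simp)]
      · rw [fixes hi, reflection_mulVec_of_dotProduct_eq_zero (by simp [hi])]
    have hdet := hA.2.1
    rw [eq_reflection, det_reflection (by simp)] at hdet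
    norm_num at hdet

theorem standardSO_subset_succ {k : ℕ} : standardSO n k ⊆ standardSO n (k + 1) :=
  fun _ h => ⟨h.1, h.2.1, fun i hi => h.2.2 i (by omega)⟩

theorem mem_standardSO_iff :
    A ∈ standardSO n k ↔ A ∈ standardSO n (k.val + 1) ∧ A *ᵥ unitVec k = unitVec k := by
  refine ⟨fun h => ⟨standardSO_subset_succ h, h.2.2 k le_rfl⟩,
    fun ⟨h, hk⟩ => ⟨h.1, h.2.1, fun i hi => ?_⟩⟩
  rcases hi.eq_or_lt with e | hi
  · rw [← Fin.ext e, hk]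
  · exact h.2.2 i hi

theorem rotation_mul_mem_standardSO (hA : A ∈ standardSO n (k.val + 1))
    (hv : v ∈ coordSphere k 0) (hw : w ∈ coordSphere k 0) (h : 1 + v ⬝ᵥ w ≠ 0) :
    rotation v w * A ∈ standardSO n (k.val + 1) := by
  refine ⟨?_, ?_, fun i hi => ?_⟩
  · rw [transpose_mul, Matrix.mul_assoc, ← Matrix.mul_assoc _ (rotation v w),
      transpose_rotation_mul_self hv.1 hw.1 h, Matrix.one_mul, hA.1]
  · rw [det_mul, det_rotation hv.1 hw.1 h, hA.2.1, one_mul]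
  · rw [← mulVec_mulVec, hA.2.2 i hi, rotation_mulVec_unitVec (hv.2 i (.inr hi)) (hw.2 i (.inr hi))]

end StandardSO

end SpecialOrthogonal

/-! ### The fibration `SO(k + 1) → Sᵏ` -/

namespace SpecialOrthogonal

open AlexanderSpanier Matrix

variable {n p : ℕ} {k : Fin n} {c v : Fin n → ℝ} {A : Matrix (Fin n) (Fin n) ℝ}
  {φ : Cochain (Matrix (Fin n) (Fin n) ℝ)}

section Equator

/-- The equator orthogonal to `c` of the unit sphere spanned by the coordinates up to `k`. -/
def equator (k : Fin n) (c : Fin n → ℝ) : Set (Fin n → ℝ) :=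
  {v | v ∈ coordSphere k 0 ∧ v ⬝ᵥ c = 0}

theorem hemisphere_zero_inter_neg (k : Fin n) (c : Fin n → ℝ) :
    hemisphere k 0 c ∩ hemisphere k 0 (-c) = equator k c := by
  ext v
  simp only [hemisphere, equator, mem_inter_iff, mem_ofPred_eq, dotProduct_neg, neg_nonneg,
    ← and_and_left, ← le_antisymm_iff, eq_comm (a := (0 : ℝ))]

theorem equator_unitVec_zero [NeZero n] (k : Fin n) : equator k (unitVec 0) = coordSphere k 1 := by
  rw [← hemisphere_zero_inter_neg]
  exact hemisphere_inter_neg k 0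

theorem neg_mem_equator_neg (h : c ∈ equator k v) : -c ∈ equator k v :=
  ⟨neg_mem_coordSphere h.1, by rw [neg_dotProduct, h.2, neg_zero]⟩

theorem unitVec_mem_equator (hc : c ∈ equator k (unitVec k)) : unitVec k ∈ equator k c :=
  ⟨unitVec_mem_coordSphere (Nat.zero_le _) le_rfl, by rw [dotProduct_comm, hc.2]⟩

theorem unitVec_zero_mem_equator [NeZero n] (hk : 0 < k) : unitVec 0 ∈ equator k (unitVec k) :=
  ⟨unitVec_mem_coordSphere (Nat.zero_le _) hk.le, by simp [hk.ne]⟩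

theorem one_add_ne_zero_of_nonneg {x : ℝ} (hx : 0 ≤ x) : 1 + x ≠ 0 :=
  (add_pos_of_pos_of_nonneg one_pos hx).ne'

end Equator

section HalfSO

/-- The preimage of a closed hemisphere under the fibration `SO(k + 1) → Sᵏ`, `A ↦ A eₖ`. -/
def halfSO (k : Fin n) (c : Fin n → ℝ) : Set (Matrix (Fin n) (Fin n) ℝ) :=
  {A | A ∈ standardSO n (k.val + 1) ∧ A *ᵥ unitVec k ∈ hemisphere k 0 c}

theorem continuous_mulVec_unitVec (k : Fin n) :
    Continuous fun A : Matrix (Fin n) (Fin n) ℝ => A *ᵥ unitVec k :=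
  continuous_id.matrix_mulVec continuous_const

theorem isClosed_halfSO (k : Fin n) (c : Fin n → ℝ) : IsClosed (halfSO k c) :=
  (isClosed_standardSO n _).inter
    ((isClosed_hemisphere k 0 c).preimage (continuous_mulVec_unitVec k))

theorem isCompact_halfSO (k : Fin n) (c : Fin n → ℝ) : IsCompact (halfSO k c) :=
  (isCompact_standardSO n _).of_isClosed_subset (isClosed_halfSO k c) fun _ h => h.1

theorem halfSO_union_neg (k : Fin n) (c : Fin n → ℝ) :
    halfSO k c ∪ halfSO k (-c) = standardSO n (k.val + 1) := by
  ext A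
  have split := Set.ext_iff.1 (hemisphere_union_neg k 0 c) (A *ᵥ unitVec k)
  simp only [halfSO, mem_union, mem_ofPred_eq, ← and_or_left] at split ⊢
  rw [split]
  exact and_iff_left_of_imp mulVec_unitVec_mem_coordSphere

theorem mem_halfSO_inter_neg_iff :
    A ∈ halfSO k c ∩ halfSO k (-c) ↔
      A ∈ standardSO n (k.val + 1) ∧ A *ᵥ unitVec k ∈ equator k c := by
  rw [← hemisphere_zero_inter_neg]
  exact and_and_left.symm

theorem standardSO_subset_halfSO (hc : c ∈ equator k (unitVec k)) :
    standardSO n k ⊆ halfSO k c := fun A hA => by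
  rw [mem_standardSO_iff] at hA
  refine ⟨hA.1, ?_⟩
  rw [hA.2]
  exact ⟨(unitVec_mem_equator hc).1, (unitVec_mem_equator hc).2.ge⟩

theorem standardSO_subset_halfSO_inter_neg (hc : c ∈ equator k (unitVec k)) :
    standardSO n k ⊆ halfSO k c ∩ halfSO k (-c) :=
  subset_inter (standardSO_subset_halfSO hc) (standardSO_subset_halfSO (neg_mem_equator_neg hc))

/- Rotating the last columns `u z` of the matrices `ψ z` along the arcs to `w z` is a homotopy. -/
theorem cohomologous_pullback_rotation_mul {Z : Type*} [TopologicalSpace Z] {K : Set Z}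
    (hK : IsCompact K) {u w : Z → Fin n → ℝ} {ψ : Z → Matrix (Fin n) (Fin n) ℝ}
    (hu : ContinuousOn u K) (hw : ContinuousOn w K) (hψ : ContinuousOn ψ K)
    (hum : MapsTo u K (hemisphere k 0 c)) (hwm : MapsTo w K (hemisphere k 0 c))
    (huw : ∀ z ∈ K, 0 ≤ u z ⬝ᵥ w z) (hψm : MapsTo ψ K (standardSO n (k.val + 1)))
    (hψu : ∀ z ∈ K, ψ z *ᵥ unitVec k = u z) (hφ : IsCocycle (halfSO k c) p φ) :
    Cohomologous K p (pullback ψ φ) (pullback (fun z => rotation (u z) (w z) * ψ z) φ) := by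
  have huu : ∀ z ∈ K, u z ⬝ᵥ u z = 1 := fun z hz => (hum hz).1.1
  have hww : ∀ z ∈ K, w z ⬝ᵥ w z = 1 := fun z hz => (hwm hz).1.1
  have arc_mem : ∀ t ∈ Icc (0 : ℝ) 1, ∀ z ∈ K, arc (u z) (w z) t ∈ hemisphere k 0 c :=
    fun t ht z hz => arc_mem_hemisphere (hum hz) (hwm hz) (huw z hz) ht
  have angle : ∀ t ∈ Icc (0 : ℝ) 1, ∀ z ∈ K, 1 + u z ⬝ᵥ arc (u z) (w z) t ≠ 0 := fun t ht z hz => by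
    refine one_add_ne_zero_of_nonneg ?_
    rw [dotProduct_comm]
    exact arc_dotProduct_nonneg (by rw [huu z hz]; exact zero_le_one)
      (by rw [dotProduct_comm]; exact huw z hz) ht
  have homotopy := hφ.cohomologous_pullback hK
    (H := fun t z => rotation (u z) (arc (u z) (w z) t) * ψ z) ?_ fun t ht z hz => ?_
  · refine homotopy.congr fun t ht =>
      congrArg₂ (φ · + φ ·) (funext fun i => ?_) (funext fun i => ?_)
    · simp only [Function.comp_apply]
      rw [arc_zero (huu _ (ht i)), rotation_self (huu _ (ht i)), Matrix.one_mul]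
    · simp only [Function.comp_apply]
      rw [arc_one _ (hww _ (ht i))]
  · have snd_mapsTo : MapsTo Prod.snd (Icc (0 : ℝ) 1 ×ˢ K) K := fun x hx => hx.2
    exact (continuousOn_rotation (hu.comp continuousOn_snd snd_mapsTo)
      (continuousOn_arc hu hw huu hww huw) (fun x hx => huu _ hx.2)
      (fun x hx => (arc_mem _ hx.1 _ hx.2).1.1) fun x hx => angle _ hx.1 _ hx.2).mul
      (hψ.comp continuousOn_snd snd_mapsTo)
  · refine ⟨rotation_mul_mem_standardSO (hψm hz) (hum hz).1 (arc_mem t ht z hz).1 (angle t ht z hz),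
      ?_⟩
    rw [← mulVec_mulVec, hψu z hz,
      rotation_mulVec_left (huu z hz) (arc_mem t ht z hz).1.1 (angle t ht z hz)]
    exact arc_mem t ht z hz

end HalfSO

section Retraction

/-- The retraction of `halfSO k c` to the fibre `SO(k)` over `unitVec k`: the last column is
rotated to the centre `c` and from there to `unitVec k`. -/
noncomputable def toFibre (k : Fin n) (c : Fin n → ℝ) (A : Matrix (Fin n) (Fin n) ℝ) :
    Matrix (Fin n) (Fin n) ℝ :=
  rotation c (unitVec k) * (rotation (A *ᵥ unitVec k) c * A)

theorem one_add_centre_dotProduct_unitVec_ne_zero (hc : c ∈ equator k (unitVec k)) :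
    1 + c ⬝ᵥ unitVec k ≠ 0 :=
  one_add_ne_zero_of_nonneg hc.2.ge

theorem rotation_mul_mem_standardSO_of_mem_halfSO (hc : c ∈ equator k (unitVec k))
    (hA : A ∈ halfSO k c) :
    rotation (A *ᵥ unitVec k) c * A ∈ standardSO n (k.val + 1) :=
  rotation_mul_mem_standardSO hA.1 hA.2.1 hc.1 (one_add_ne_zero_of_nonneg hA.2.2)

theorem rotation_mul_mulVec_unitVec (hc : c ∈ equator k (unitVec k)) (hA : A ∈ halfSO k c) :
    (rotation (A *ᵥ unitVec k) c * A) *ᵥ unitVec k = c := by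
  rw [← mulVec_mulVec, rotation_mulVec_left hA.2.1.1 hc.1.1 (one_add_ne_zero_of_nonneg hA.2.2)]

theorem continuousOn_rotation_mul (hc : c ∈ equator k (unitVec k)) :
    ContinuousOn (fun A => rotation (A *ᵥ unitVec k) c * A) (halfSO k c) :=
  (continuousOn_rotation (continuous_mulVec_unitVec k).continuousOn continuousOn_const
    (fun _ hA => hA.2.1.1) (fun _ _ => hc.1.1) fun _ hA => one_add_ne_zero_of_nonneg hA.2.2).mul
    continuousOn_id

theorem continuousOn_toFibre (hc : c ∈ equator k (unitVec k)) :
    ContinuousOn (toFibre k c) (halfSO k c) :=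
  continuousOn_const.mul (continuousOn_rotation_mul hc)

theorem mapsTo_toFibre (hc : c ∈ equator k (unitVec k)) :
    MapsTo (toFibre k c) (halfSO k c) (standardSO n k) := fun A hA => by
  rw [mem_standardSO_iff]
  refine ⟨rotation_mul_mem_standardSO (rotation_mul_mem_standardSO_of_mem_halfSO hc hA) hc.1
    (unitVec_mem_equator hc).1 (one_add_centre_dotProduct_unitVec_ne_zero hc), ?_⟩
  rw [toFibre, ← mulVec_mulVec, rotation_mul_mulVec_unitVec hc hA,
    rotation_mulVec_left hc.1.1 (unitVec_mem_equator hc).1.1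
      (one_add_centre_dotProduct_unitVec_ne_zero hc)]

theorem rotation_unitVec_mul_cancel (hc : c ∈ equator k (unitVec k))
    (B : Matrix (Fin n) (Fin n) ℝ) :
    rotation c (unitVec k) * (rotation (unitVec k) c * B) = B := by
  rw [← Matrix.mul_assoc, rotation_mul_rotation (unitVec_mem_equator hc).1.1 hc.1.1
    (one_add_ne_zero_of_nonneg (unitVec_mem_equator hc).2.ge), Matrix.one_mul]

theorem toFibre_of_mem_standardSO (hc : c ∈ equator k (unitVec k)) (hA : A ∈ standardSO n k) :
    toFibre k c A = A := by
  rw [toFibre, (mem_standardSO_iff.1 hA).2, rotation_unitVec_mul_cancel hc]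

theorem cohomologous_pullback_toFibre (hc : c ∈ equator k (unitVec k))
    (hφ : IsCocycle (halfSO k c) p φ) :
    Cohomologous (halfSO k c) p φ (pullback (toFibre k c) φ) := by
  have centre_mem : c ∈ hemisphere k 0 c := ⟨hc.1, by rw [hc.1.1]; exact zero_le_one⟩
  have pole_mem : unitVec k ∈ hemisphere k 0 c :=
    ⟨(unitVec_mem_equator hc).1, (unitVec_mem_equator hc).2.ge⟩
  exact (cohomologous_pullback_rotation_mul (isCompact_halfSO k c)
    (u := fun A => A *ᵥ unitVec k) (w := fun _ => c) (ψ := fun A => A)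
    (continuous_mulVec_unitVec k).continuousOn continuousOn_const continuousOn_id
    (fun A hA => hA.2) (fun _ _ => centre_mem) (fun A hA => hA.2.2) (fun A hA => hA.1)
    (fun _ _ => rfl) hφ).trans
    (cohomologous_pullback_rotation_mul (isCompact_halfSO k c)
    (u := fun _ => c) (w := fun _ => unitVec k) continuousOn_const continuousOn_const
    (continuousOn_rotation_mul hc) (fun _ _ => centre_mem) (fun _ _ => pole_mem)
    (fun _ _ => hc.2.ge) (fun A hA => rotation_mul_mem_standardSO_of_mem_halfSO hc hA)
    (fun A hA => rotation_mul_mulVec_unitVec hc hA) hφ)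

theorem cohomologyVanishes_halfSO (hc : c ∈ equator k (unitVec k))
    (h : CohomologyVanishes (standardSO n k) p) :
    CohomologyVanishes (halfSO k c) p := fun φ hφ =>
  (cohomologous_pullback_toFibre hc hφ).isCoboundary
    ((h φ (hφ.mono (standardSO_subset_halfSO hc))).pullback (continuousOn_toFibre hc)
      (mapsTo_toFibre hc))

end Retraction

section Clutching

/-- The trivialization of `SO(k + 1) → Sᵏ` over the equator orthogonal to `c` that extends to the
hemisphere centred at `c`. -/
noncomputable def trivialization (k : Fin n) (c : Fin n → ℝ)
    (x : (Fin n → ℝ) × Matrix (Fin n) (Fin n) ℝ) : Matrix (Fin n) (Fin n) ℝ :=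
  rotation c x.1 * (rotation (unitVec k) c * x.2)

/-- The inverse of `trivialization k c`. -/
noncomputable def trivializationInv (k : Fin n) (c : Fin n → ℝ) (A : Matrix (Fin n) (Fin n) ℝ) :
    (Fin n → ℝ) × Matrix (Fin n) (Fin n) ℝ :=
  (A *ᵥ unitVec k, toFibre k c A)

variable {x : (Fin n → ℝ) × Matrix (Fin n) (Fin n) ℝ}

theorem one_add_dotProduct_ne_zero_of_mem_equator (hv : v ∈ equator k c) : 1 + c ⬝ᵥ v ≠ 0 := by
  rw [dotProduct_comm]
  exact one_add_ne_zero_of_nonneg hv.2.ge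

theorem continuousOn_trivializationInv (hc : c ∈ equator k (unitVec k)) :
    ContinuousOn (trivializationInv k c) (halfSO k c) :=
  (continuous_mulVec_unitVec k).continuousOn.prodMk (continuousOn_toFibre hc)

theorem mapsTo_trivializationInv (hc : c ∈ equator k (unitVec k)) :
    MapsTo (trivializationInv k c) (halfSO k c ∩ halfSO k (-c)) (equator k c ×ˢ standardSO n k) :=
  fun _ hA => ⟨(mem_halfSO_inter_neg_iff.1 hA).2, mapsTo_toFibre hc hA.1⟩

theorem continuousOn_trivialization (hc : c ∈ equator k (unitVec k)) :
    ContinuousOn (trivialization k c) (equator k c ×ˢ standardSO n k) :=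
  (continuousOn_rotation continuousOn_const continuousOn_fst (fun _ _ => hc.1.1)
    (fun _ hx => hx.1.1.1) fun _ hx => one_add_dotProduct_ne_zero_of_mem_equator hx.1).mul
    (continuousOn_const.mul continuousOn_snd)

theorem trivialization_mulVec_unitVec (hc : c ∈ equator k (unitVec k))
    (hx : x ∈ equator k c ×ˢ standardSO n k) :
    trivialization k c x *ᵥ unitVec k = x.1 := by
  rw [trivialization, ← mulVec_mulVec, ← mulVec_mulVec, (mem_standardSO_iff.1 hx.2).2,
    rotation_mulVec_left (unitVec_mem_equator hc).1.1 hc.1.1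
      (one_add_ne_zero_of_nonneg (unitVec_mem_equator hc).2.ge),
    rotation_mulVec_left hc.1.1 hx.1.1.1 (one_add_dotProduct_ne_zero_of_mem_equator hx.1)]

theorem mapsTo_trivialization (hc : c ∈ equator k (unitVec k)) :
    MapsTo (trivialization k c) (equator k c ×ˢ standardSO n k)
      (halfSO k c ∩ halfSO k (-c)) := fun x hx => by
  rw [mem_halfSO_inter_neg_iff, trivialization_mulVec_unitVec hc hx]
  exact ⟨rotation_mul_mem_standardSO (rotation_mul_mem_standardSO (standardSO_subset_succ hx.2)
    (unitVec_mem_equator hc).1 hc.1 (one_add_ne_zero_of_nonneg (unitVec_mem_equator hc).2.ge)) hc.1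
    hx.1.1 (one_add_dotProduct_ne_zero_of_mem_equator hx.1), hx.1⟩

theorem toFibre_trivialization (hc : c ∈ equator k (unitVec k))
    (hx : x ∈ equator k c ×ˢ standardSO n k) :
    toFibre k c (trivialization k c x) = x.2 := by
  rw [toFibre, trivialization_mulVec_unitVec hc hx, trivialization,
    ← Matrix.mul_assoc (rotation x.1 _), rotation_mul_rotation hc.1.1 hx.1.1.1
      (one_add_dotProduct_ne_zero_of_mem_equator hx.1), Matrix.one_mul,
    rotation_unitVec_mul_cancel hc]

theorem trivializationInv_trivialization (hc : c ∈ equator k (unitVec k))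
    (hx : x ∈ equator k c ×ˢ standardSO n k) :
    trivializationInv k c (trivialization k c x) = x :=
  Prod.ext (trivialization_mulVec_unitVec hc hx) (toFibre_trivialization hc hx)

theorem trivialization_trivializationInv (hc : c ∈ equator k (unitVec k))
    (hA : A ∈ halfSO k c ∩ halfSO k (-c)) :
    trivialization k c (trivializationInv k c A) = A := by
  rw [trivialization, trivializationInv, toFibre, ← Matrix.mul_assoc (rotation (unitVec k) _),
    rotation_mul_rotation hc.1.1 (unitVec_mem_equator hc).1.1
      (one_add_centre_dotProduct_unitVec_ne_zero hc), Matrix.one_mul, ← Matrix.mul_assoc,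
    rotation_mul_rotation hA.1.2.1.1 hc.1.1 (one_add_ne_zero_of_nonneg hA.1.2.2), Matrix.one_mul]

theorem trivialization_unitVec (hc : c ∈ equator k (unitVec k)) (hx : x.1 = unitVec k) :
    trivialization k c x = x.2 := by
  rw [trivialization, hx, rotation_unitVec_mul_cancel hc]

/- The clutching function takes `v` to the half turn in the plane of `v` and `c`. -/
theorem toFibre_neg_trivialization_antipode (hc : c ∈ equator k (unitVec k))
    (hx : x ∈ equator k c ×ˢ standardSO n k) :
    toFibre k (-c) (trivialization k c (antipode x)) =
      toFibre k (-c) (trivialization k c x) := by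
  have half_turn := rotation_neg_mul_rotation_even hx.1.1.1 hc.1.1 hx.1.2
  have hx' : antipode x ∈ equator k c ×ˢ standardSO n k := ⟨neg_mem_equator_neg hx.1, hx.2⟩
  rw [toFibre, toFibre, trivialization_mulVec_unitVec hc hx, trivialization_mulVec_unitVec hc hx',
    trivialization, trivialization, ← Matrix.mul_assoc (rotation x.1 _), ← half_turn,
    Matrix.mul_assoc (rotation (-x.1) _)]
  rfl

end Clutching

end SpecialOrthogonal

/-! ### Nonzero products in the cohomology of `SO(k)` -/

namespace AlexanderSpanier

variable {X Y : Type*}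

/-- The cup product `z j ⌣ ⋯ ⌣ z 2 ⌣ z 1` of cochains `z i` of degree `i`. -/
def cupProduct (z : ℕ → Cochain X) : ℕ → Cochain X
  | 0 => 1
  | j + 1 => cup (j + 1) (z (j + 1)) (cupProduct z j)

variable {S : Set X} {z z' : ℕ → Cochain X} {j : ℕ}

theorem pullback_cupProduct (f : X → Y) (z : ℕ → Cochain Y) (j : ℕ) :
    pullback f (cupProduct z j) = cupProduct (fun i => pullback f (z i)) j := by
  induction j with
  | zero => rfl
  | succ j ih => rw [cupProduct, pullback_cup, ih, cupProduct]

theorem cupProduct_congr (h : ∀ i, 1 ≤ i → i ≤ j → ∀ t : ℕ → X, (∀ l, t l ∈ S) → z i t = z' i t)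
    (t : ℕ → X) (ht : ∀ l, t l ∈ S) : cupProduct z j t = cupProduct z' j t := by
  induction j generalizing t with
  | zero => rfl
  | succ j ih =>
    rw [cupProduct, cupProduct, cup, cup, h (j + 1) (Nat.le_add_left _ _) le_rfl t ht,
      ih (fun i h1 h2 => h i h1 (h2.trans (Nat.le_succ j))) _ fun l => ht _]

variable [TopologicalSpace X]

theorem isCocycle_one (S : Set X) : IsCocycle S 0 1 :=
  ⟨fun _ _ _ => rfl, by rw [show (1 : Cochain X) = fun _ => 1 from rfl, delta_const]; exact .zero⟩

theorem succ_add_choose_two (j : ℕ) : j + 1 + (j + 1).choose 2 = (j + 1 + 1).choose 2 := by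
  rw [Nat.choose_succ_succ' (j + 1) 1, Nat.choose_one_right]

theorem isCocycle_cupProduct (h : ∀ i, 1 ≤ i → i ≤ j → IsCocycle S i (z i)) :
    IsCocycle S ((j + 1).choose 2) (cupProduct z j) := by
  induction j with
  | zero => exact isCocycle_one S
  | succ j ih =>
    rw [← succ_add_choose_two]
    exact (h (j + 1) (Nat.le_add_left _ _) le_rfl).cup
      (ih fun i h1 h2 => h i h1 (h2.trans (Nat.le_succ j)))

/-- Some cocycles of degrees `1, …, j` on `S` have a product that is nonzero in the cohomology of
`S`. -/
def HasNonzeroProduct (S : Set X) (j : ℕ) : Prop :=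
  ∃ z : ℕ → Cochain X, (∀ i, 1 ≤ i → i ≤ j → IsCocycle S i (z i)) ∧
    ¬ IsCoboundary S ((j + 1).choose 2) (cupProduct z j)

theorem hasNonzeroProduct_singleton (x : X) : HasNonzeroProduct {x} 0 := by
  refine ⟨0, fun i h1 h0 => absurd h1 (by omega), fun h => ?_⟩
  obtain ⟨V, hV, h⟩ := h.vanishesNear x rfl
  exact one_ne_zero (h (fun _ => x) fun _ => ⟨mem_of_mem_nhds hV, rfl⟩)

end AlexanderSpanier

namespace SpecialOrthogonal

open AlexanderSpanier Matrix

variable {n p q j D : ℕ} {k : Fin n} {φ w a b : Cochain (Matrix (Fin n) (Fin n) ℝ)}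

instance : TopologicalSpace.PseudoMetrizableSpace (Matrix (Fin n) (Fin n) ℝ) :=
  inferInstanceAs (TopologicalSpace.PseudoMetrizableSpace (Fin n → Fin n → ℝ))

theorem isCoboundary_of_pullback_trivialization {c : Fin n → ℝ} (hc : c ∈ equator k (unitVec k))
    (h : IsCoboundary (equator k c ×ˢ standardSO n k) p (pullback (trivialization k c) φ)) :
    IsCoboundary (halfSO k c ∩ halfSO k (-c)) p φ :=
  (h.pullback ((continuousOn_trivializationInv hc).mono inter_subset_left)
    (mapsTo_trivializationInv hc)).congr fun _ ht =>
      congrArg φ (funext fun i => trivialization_trivializationInv hc (ht i))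

variable [NeZero n]

theorem cohomologous_pullback_toFibre_neg (hk : 0 < k) (hq : q < k.val)
    (hw : IsCocycle (standardSO n k) q w) :
    Cohomologous (halfSO k (unitVec 0) ∩ halfSO k (-unitVec 0)) q
      (pullback (toFibre k (unitVec 0)) w) (pullback (toFibre k (-unitVec 0)) w) := by
  have hc := unitVec_zero_mem_equator hk
  have hc' := neg_mem_equator_neg hc
  apply isCoboundary_of_pullback_trivialization hc
  have cocycle := (((hw.pullback (continuousOn_toFibre hc) (mapsTo_toFibre hc)).mono
    inter_subset_left).add ((hw.pullback (continuousOn_toFibre hc') (mapsTo_toFibre hc')).mono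
    inter_subset_right)).pullback (continuousOn_trivialization hc) (mapsTo_trivialization hc)
  have apply_eq (t : ℕ → (Fin n → ℝ) × Matrix (Fin n) (Fin n) ℝ) :
      pullback (trivialization k (unitVec 0)) (pullback (toFibre k (unitVec 0)) w +
        pullback (toFibre k (-unitVec 0)) w) t =
      w (fun i => toFibre k (unitVec 0) (trivialization k (unitVec 0) (t i))) +
        w (fun i => toFibre k (-unitVec 0) (trivialization k (unitVec 0) (t i))) := rfl
  have antipodal : IsAntipodal (equator k (unitVec 0) ×ˢ standardSO n k)
      (pullback (trivialization k (unitVec 0)) (pullback (toFibre k (unitVec 0)) w +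
        pullback (toFibre k (-unitVec 0)) w)) := fun t ht => by
    have ht' i : antipode (t i) ∈ equator k (unitVec 0) ×ˢ standardSO n k :=
      ⟨neg_mem_equator_neg (ht i).1, (ht i).2⟩
    simp only [apply_eq, Function.comp_apply, toFibre_neg_trivialization_antipode hc (ht _),
      toFibre_trivialization hc (ht _), toFibre_trivialization hc (ht' _)]
    rfl
  rw [equator_unitVec_zero] at cocycle antipodal ⊢
  refine isCoboundary_of_isAntipodal (isCompact_standardSO n k) (isClosed_standardSO n k)
    (by omega) cocycle antipodal ((Cohomologous.refl (φ := pullback Prod.snd w)).congr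
      fun t ht => ?_)
  simp only [apply_eq, trivialization_unitVec hc (ht _).1, toFibre_of_mem_standardSO hc (ht _).2,
    toFibre_of_mem_standardSO hc' (ht _).2]
  rfl

theorem exists_isCocycle_extending (hk : 0 < k) (hq : q < k.val)
    (hw : IsCocycle (standardSO n k) q w) :
    ∃ x, IsCocycle (standardSO n (k.val + 1)) q x ∧
      ∀ t : ℕ → Matrix (Fin n) (Fin n) ℝ, (∀ i, t i ∈ standardSO n k) → x t = w t := by
  have hc := unitVec_zero_mem_equator hk
  have hc' := neg_mem_equator_neg hc
  obtain ⟨x, hx, hxw⟩ := exists_isCocycle_union (isClosed_halfSO k _) (isClosed_halfSO k _)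
    (hw.pullback (continuousOn_toFibre hc) (mapsTo_toFibre hc))
    (hw.pullback (continuousOn_toFibre hc') (mapsTo_toFibre hc'))
    (cohomologous_pullback_toFibre_neg hk hq hw)
  rw [halfSO_union_neg] at hx
  exact ⟨x, hx, fun t ht => (hxw t fun i => standardSO_subset_halfSO hc (ht i)).trans
    (congrArg w (funext fun i => toFibre_of_mem_standardSO hc (ht i)))⟩

section Vanishing

theorem cohomologyVanishes_halfSO_inter_neg (hk : 0 < k)
    (hD : ∀ q, D < q → CohomologyVanishes (standardSO n k) q) (hq : D + k.val ≤ q) :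
    CohomologyVanishes (halfSO k (unitVec 0) ∩ halfSO k (-unitVec 0)) q := fun φ hφ => by
  have hc := unitVec_zero_mem_equator hk
  apply isCoboundary_of_pullback_trivialization hc
  have cocycle := hφ.pullback (continuousOn_trivialization hc) (mapsTo_trivialization hc)
  rw [equator_unitVec_zero] at cocycle ⊢
  have hk' : 0 < k.val := hk
  exact cohomologyVanishes_coordSphere_prod (isCompact_standardSO n k) (isClosed_standardSO n k) hD
    (j := k.val - 1) (by omega) (by omega) _ cocycle

theorem cohomologyVanishes_standardSO_succ (hk : 0 < k)
    (hD : ∀ q, D < q → CohomologyVanishes (standardSO n k) q) (hq : D + k.val < q) :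
    CohomologyVanishes (standardSO n (k.val + 1)) q := by
  have hc := unitVec_zero_mem_equator hk
  obtain ⟨q, rfl⟩ : ∃ r, q = r + 1 := ⟨q - 1, by omega⟩
  rw [← halfSO_union_neg k (unitVec 0)]
  exact .union (isClosed_halfSO k _) (isClosed_halfSO k _)
    (cohomologyVanishes_halfSO hc (hD _ (by omega)))
    (cohomologyVanishes_halfSO (neg_mem_equator_neg hc) (hD _ (by omega)))
    (cohomologyVanishes_halfSO_inter_neg hk hD (by omega))

end Vanishing

section Product

theorem cohomologous_halfSO_inter_neg (hk : 0 < k)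
    (hq : q < k.val ∨ CohomologyVanishes (standardSO n k) q)
    (ha : IsCocycle (halfSO k (unitVec 0)) q a) (hb : IsCocycle (halfSO k (-unitVec 0)) q b)
    (hab : ∀ t : ℕ → Matrix (Fin n) (Fin n) ℝ, (∀ i, t i ∈ standardSO n k) → a t = b t) :
    Cohomologous (halfSO k (unitVec 0) ∩ halfSO k (-unitVec 0)) q a b := by
  have hc := unitVec_zero_mem_equator hk
  have hc' := neg_mem_equator_neg hc
  rcases hq with hq | hq
  · have a_retract := (cohomologous_pullback_toFibre hc ha).mono inter_subset_left
      (S' := halfSO k (unitVec 0) ∩ halfSO k (-unitVec 0))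
    have b_retract := (cohomologous_pullback_toFibre hc' hb).mono inter_subset_right
      (S' := halfSO k (unitVec 0) ∩ halfSO k (-unitVec 0))
    have b_clutch := cohomologous_pullback_toFibre_neg hk hq
      (hb.mono (standardSO_subset_halfSO hc'))
    refine (Cohomologous.trans a_retract ?_).trans (b_clutch.trans (Cohomologous.symm b_retract))
    exact Cohomologous.refl.congr fun t ht => congrArg₂ (· + ·) rfl
      (hab _ fun i => mapsTo_toFibre hc (ht i).1)
  · exact ((cohomologyVanishes_halfSO hc hq a ha).mono inter_subset_left).add
      ((cohomologyVanishes_halfSO hc' hq b hb).mono inter_subset_right)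

variable {s : Cochain ((Fin n → ℝ) × Matrix (Fin n) (Fin n) ℝ)}

theorem isCoboundary_of_cup_trivializationInv (hk : 0 < k)
    (hs : IsFundamentalClass k 1 (standardSO n k) j s)
    (hw : IsCocycle (standardSO n (k.val + 1)) q w)
    (h : IsCoboundary (halfSO k (unitVec 0) ∩ halfSO k (-unitVec 0)) (j + q)
      (cup j (pullback (trivializationInv k (unitVec 0)) s) w)) :
    IsCoboundary (standardSO n k) q w := by
  have hc := unitVec_zero_mem_equator hk
  set K := halfSO k (unitVec 0) ∩ halfSO k (-unitVec 0)
  have hs' : IsCocycle K j (pullback (trivializationInv k (unitVec 0)) s) := by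
    refine hs.isCocycle.pullback ((continuousOn_trivializationInv hc).mono inter_subset_left) ?_
    rw [← equator_unitVec_zero]
    exact mapsTo_trivializationInv hc
  have retract : Cohomologous K q (pullback (toFibre k (unitVec 0)) w) w :=
    Cohomologous.symm ((cohomologous_pullback_toFibre hc (hw.mono fun _ h => h.1)).mono
      inter_subset_left)
  have product : IsCoboundary K (j + q) (cup j (pullback (trivializationInv k (unitVec 0)) s)
      (pullback (toFibre k (unitVec 0)) w)) := by
    refine Cohomologous.isCoboundary ?_ h
    rw [Cohomologous, ← cup_add]
    exact retract.cup_left hs'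
  have trivialized := product.pullback (continuousOn_trivialization hc) (mapsTo_trivialization hc)
  refine hs.isCoboundary_of_cup q w (hw.mono standardSO_subset_succ) ?_
  rw [← equator_unitVec_zero]
  exact trivialized.congr fun t ht => congrArg₂ (· * ·)
    (congrArg s (funext fun i => trivializationInv_trivialization hc (ht i)))
    (congrArg w (funext fun i => toFibre_trivialization hc (ht _)))

theorem isCoboundary_of_cup_connecting (hk : 0 < k)
    (hs : IsFundamentalClass k 1 (standardSO n k) j s)
    {θ : Cochain (Matrix (Fin n) (Fin n) ℝ)} (hθ : HasDegree j θ)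
    (hδ : VanishesNear (halfSO k (unitVec 0) ∩ halfSO k (-unitVec 0))
      (standardSO n (k.val + 1)) (delta j θ))
    (hθs : ∀ t : ℕ → Matrix (Fin n) (Fin n) ℝ,
      (∀ i, t i ∈ halfSO k (unitVec 0) ∩ halfSO k (-unitVec 0)) →
        θ t = pullback (trivializationInv k (unitVec 0)) s t)
    (hq : j + q < k.val ∨ CohomologyVanishes (standardSO n k) (j + q))
    (hw : IsCocycle (standardSO n (k.val + 1)) q w)
    (h : IsCoboundary (standardSO n (k.val + 1)) (j + q + 1)
      (cup (j + 1) (connecting (halfSO k (unitVec 0)) θ) w)) :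
    IsCoboundary (standardSO n k) q w := by
  have hc := unitVec_zero_mem_equator hk
  have hU := halfSO_union_neg k (unitVec 0)
  have hδw : VanishesNear (halfSO k (unitVec 0) ∩ halfSO k (-unitVec 0))
      (standardSO n (k.val + 1)) (delta (j + q) (cup j θ w)) := by
    rw [delta_cup j q θ w hθ]
    exact (hδ.cup_right _ _).add ((hw.2.mono (fun _ h => h.1.1) subset_rfl).cup_left _ _)
  rw [cup_connecting] at h
  rw [← hU] at h hδw
  obtain ⟨a, b, ha, hb, hab⟩ := exists_add_of_isCoboundary_connecting (isClosed_halfSO k _)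
    (hθ.cup hw.1) hδw h
  refine isCoboundary_of_cup_trivializationInv hk hs hw
    ((cohomologous_halfSO_inter_neg hk hq ha hb fun t ht => ?_).congr fun t ht => ?_)
  · have htK i := standardSO_subset_halfSO_inter_neg hc (ht i)
    have pole : pullback (trivializationInv k (unitVec 0)) s t = 0 :=
      hs.apply_pole _ fun i => ⟨(mem_standardSO_iff.1 (ht i)).2, mapsTo_toFibre hc (htK i).1⟩
    rw [← CharTwo.add_eq_zero, ← hab t htK, cup, hθs t htK, pole, zero_mul]
  · rw [Pi.add_apply, ← hab t ht, cup, cup, hθs t ht]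

theorem exists_isCocycle_cup (hj : 1 + j = k.val) :
    ∃ y, IsCocycle (standardSO n (k.val + 1)) (j + 1) y ∧
      ∀ q w, (j + q < k.val ∨ CohomologyVanishes (standardSO n k) (j + q)) →
        IsCocycle (standardSO n (k.val + 1)) q w →
          IsCoboundary (standardSO n (k.val + 1)) (j + q + 1) (cup (j + 1) y w) →
            IsCoboundary (standardSO n k) q w := by
  have hk : 0 < k := Fin.lt_def.2 (by rw [Fin.val_zero]; omega)
  have hc := unitVec_zero_mem_equator hk
  obtain ⟨s, hs⟩ := exists_isFundamentalClass (isCompact_standardSO n k) (isClosed_standardSO n k)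
    hj
  have hU := halfSO_union_neg k (unitVec 0)
  obtain ⟨θ, hθ, hδ, hθs⟩ := exists_vanishesNear_delta
    ((isClosed_halfSO k (unitVec 0)).inter (isClosed_halfSO k (-unitVec 0)))
    (standardSO n (k.val + 1)) (hs.isCocycle.pullback
      ((continuousOn_trivializationInv hc).mono inter_subset_left)
      (equator_unitVec_zero k ▸ mapsTo_trivializationInv hc))
  refine ⟨connecting (halfSO k (unitVec 0)) θ, ?_, fun q w hq hw h =>
    isCoboundary_of_cup_connecting hk hs hθ hδ hθs hq hw h⟩
  rw [← hU] at hδ ⊢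
  exact isCocycle_connecting (isClosed_halfSO k _) (isClosed_halfSO k _) hθ hδ

theorem hasNonzeroProduct_standardSO_succ (hj : 1 + j = k.val)
    (hD : ∀ q, (j + 1).choose 2 < q → CohomologyVanishes (standardSO n k) q)
    (h : HasNonzeroProduct (standardSO n k) j) :
    HasNonzeroProduct (standardSO n (k.val + 1)) (j + 1) := by
  have hk : 0 < k := Fin.lt_def.2 (by rw [Fin.val_zero]; omega)
  obtain ⟨z, hz, hzW⟩ := h
  have extend : ∀ i, ∃ x, 1 ≤ i → i ≤ j → IsCocycle (standardSO n (k.val + 1)) i x ∧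
      ∀ t : ℕ → Matrix (Fin n) (Fin n) ℝ, (∀ l, t l ∈ standardSO n k) → x t = z i t := fun i => by
    by_cases hi : 1 ≤ i ∧ i ≤ j
    · obtain ⟨x, hx⟩ := exists_isCocycle_extending hk (by omega) (hz i hi.1 hi.2)
      exact ⟨x, fun _ _ => hx⟩
    · exact ⟨0, fun h1 h2 => absurd ⟨h1, h2⟩ hi⟩
  choose x hx using extend
  obtain ⟨y, hy, hyW⟩ := exists_isCocycle_cup hj
  have x_eq : ∀ i ≤ j, Function.update x (j + 1) y i = x i := fun i hi =>
    Function.update_of_ne (by omega) _ _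
  have cocycle : ∀ i, 1 ≤ i → i ≤ j →
      IsCocycle (standardSO n (k.val + 1)) i (Function.update x (j + 1) y i) := fun i h1 h2 => by
    rw [x_eq i h2]
    exact (hx i h1 h2).1
  have degree : j + (j + 1).choose 2 < k.val ∨
      CohomologyVanishes (standardSO n k) (j + (j + 1).choose 2) := by
    rcases Nat.eq_zero_or_pos j with rfl | hj0
    · exact .inl hk
    · exact .inr (hD _ (by omega))
  refine ⟨Function.update x (j + 1) y, fun i h1 h2 => ?_, fun h => hzW ?_⟩
  · rcases Nat.le_succ_iff.1 h2 with h2 | rfl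
    · exact cocycle i h1 h2
    · rwa [Function.update_self]
  · rw [cupProduct, Function.update_self, ← succ_add_choose_two, Nat.add_right_comm] at h
    refine (hyW _ _ degree (isCocycle_cupProduct cocycle) h).congr
      (cupProduct_congr fun i h1 h2 => ?_)
    rw [x_eq i h2]
    exact (hx i h1 h2).2

/- `SO(j + 1)` has dimension `1 + 2 + ⋯ + j`. -/
theorem cohomology_standardSO (hj : j < n) :
    (∀ q, (j + 1).choose 2 < q → CohomologyVanishes (standardSO n (j + 1)) q) ∧
      HasNonzeroProduct (standardSO n (j + 1)) j := by
  induction j with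
  | zero =>
    rw [zero_add, standardSO_one]
    refine ⟨fun q hq => ?_, hasNonzeroProduct_singleton 1⟩
    obtain ⟨q, rfl⟩ : ∃ r, q = r + 1 := ⟨q - 1, by omega⟩
    exact cohomologyVanishes_singleton 1 q
  | succ j ih =>
    obtain ⟨vanishing, product⟩ := ih (by omega)
    have hk : 0 < (⟨j + 1, hj⟩ : Fin n) := Fin.lt_def.2 (by simp)
    refine ⟨fun q hq => ?_,
      hasNonzeroProduct_standardSO_succ (k := ⟨j + 1, hj⟩) (add_comm 1 j) vanishing product⟩
    rw [← succ_add_choose_two] at hq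
    exact cohomologyVanishes_standardSO_succ hk vanishing (by rwa [add_comm])

end Product

end SpecialOrthogonal

/-! ### Polyhedra -/

namespace AlexanderSpanier

section Convex

variable {E : Type*} [AddCommGroup E] [Module ℝ E] [TopologicalSpace E] [IsTopologicalAddGroup E]
  [ContinuousSMul ℝ E]

theorem cohomologyVanishes_of_convex {K : Set E} (hK : IsCompact K) (hc : Convex ℝ K) (p : ℕ) :
    CohomologyVanishes K (p + 1) := fun φ hφ => by
  obtain rfl | ⟨x, hx⟩ := K.eq_empty_or_nonempty
  · exact cohomologyVanishes_empty _ φ hφ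
  refine hφ.isCoboundary_of_deformation (H := fun t y => AffineMap.lineMap y x t) (C := {x}) hK ?_
    (fun t ht y hy => hc.lineMap_mem hy hx ht) (fun y _ => AffineMap.lineMap_apply_zero _ _)
    (fun y _ => AffineMap.lineMap_apply_one _ _)
    (cohomologyVanishes_singleton x p φ (hφ.mono (singleton_subset_iff.2 hx)))
  simp only [Function.uncurry_def, AffineMap.lineMap_apply_module]
  fun_prop

end Convex

variable {I : Type*} {Q : Set (Finset I)} {σ s : Finset I} {w : I → ℝ} {p q j : ℕ}

/-- The restriction of `w` to `s`, rescaled to total weight `1`. -/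
noncomputable def renormalize [DecidableEq I] (s : Finset I) (w : I → ℝ) (i : I) : ℝ :=
  (if i ∈ s then w i else 0) / ∑ k ∈ s, w k

theorem sum_renormalize_subset [DecidableEq I] (h : 0 < ∑ i ∈ s, w i) :
    ∑ i ∈ s, renormalize s w i = 1 := by
  simp only [renormalize]
  rw [← Finset.sum_div, Finset.sum_congr rfl fun i hi => if_pos hi, div_self h.ne']

variable [Fintype I]

/-- The polyhedron of a family `Q` of finite sets of vertices: the points of the standard simplex
supported in a member of `Q`. The family need not be closed under subsets. -/
def polyhedron (Q : Set (Finset I)) : Set (I → ℝ) :=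
  {w ∈ stdSimplex ℝ I | ∃ σ ∈ Q, ∀ i ∉ σ, w i = 0}

theorem mem_polyhedron_singleton :
    w ∈ polyhedron {σ} ↔ w ∈ stdSimplex ℝ I ∧ ∀ i ∉ σ, w i = 0 := by
  simp only [polyhedron, mem_singleton_iff, exists_eq_left]
  rfl

theorem polyhedron_eq_biUnion (Q : Set (Finset I)) :
    polyhedron Q = ⋃ σ ∈ Q, polyhedron {σ} := by
  ext w
  simp only [mem_iUnion₂, mem_polyhedron_singleton, exists_prop]
  exact ⟨fun ⟨hw, σ, hσ, h⟩ => ⟨σ, hσ, hw, h⟩, fun ⟨σ, hσ, hw, h⟩ => ⟨hw, σ, hσ, h⟩⟩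

theorem convex_polyhedron_singleton (σ : Finset I) : Convex ℝ (polyhedron {σ}) := by
  refine fun x hx y hy a b ha hb hab => ?_
  rw [mem_polyhedron_singleton] at *
  refine ⟨convex_stdSimplex ℝ I hx.1 hy.1 ha hb hab, fun i hi => ?_⟩
  simp [hx.2 i hi, hy.2 i hi]

theorem isClosed_polyhedron (Q : Set (Finset I)) : IsClosed (polyhedron Q) := by
  rw [polyhedron_eq_biUnion]
  refine Q.toFinite.isClosed_biUnion fun σ _ => ?_
  have : polyhedron {σ} = stdSimplex ℝ I ∩ ⋂ i, ⋂ _ : i ∉ σ, {w | w i = 0} := by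
    ext w
    simp only [mem_polyhedron_singleton, mem_inter_iff, mem_iInter]
    rfl
  rw [this]
  exact (isClosed_stdSimplex ℝ I).inter <| isClosed_iInter fun i => isClosed_iInter fun _ =>
    isClosed_eq (continuous_apply i) continuous_const

theorem isCompact_polyhedron (Q : Set (Finset I)) : IsCompact (polyhedron Q) :=
  (isCompact_stdSimplex ℝ I).of_isClosed_subset (isClosed_polyhedron Q) fun _ h => h.1

theorem polyhedron_eq_empty (h : ∀ σ ∈ Q, σ = ∅) : polyhedron Q = ∅ := by
  refine eq_empty_of_forall_notMem fun w ⟨hw, σ, hσ, hwσ⟩ => ?_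
  have sum_eq_zero : ∑ i, w i = 0 := Finset.sum_eq_zero fun i _ => hwσ i (by simp [h σ hσ])
  exact one_ne_zero (hw.2.symm.trans sum_eq_zero)

theorem polyhedron_singleton_inter [DecidableEq I] (σ : Finset I) (Q : Set (Finset I)) :
    polyhedron {σ} ∩ polyhedron Q = polyhedron ((σ ∩ ·) '' Q) := by
  ext w
  simp only [polyhedron_eq_biUnion Q, polyhedron_eq_biUnion ((σ ∩ ·) '' Q), biUnion_image,
    mem_inter_iff, mem_iUnion₂, mem_polyhedron_singleton, exists_prop, Finset.mem_inter, not_and_or]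
  grind

theorem cohomologyVanishes_polyhedron_singleton (σ : Finset I) (p : ℕ) :
    CohomologyVanishes (polyhedron {σ}) (p + 1) :=
  cohomologyVanishes_of_convex (isCompact_polyhedron _) (convex_polyhedron_singleton σ) p

theorem cohomologyVanishes_polyhedron (q : ℕ) (h : ∀ σ ∈ Q, σ.card ≤ q) :
    CohomologyVanishes (polyhedron Q) q := by
  classical
  induction q generalizing Q with
  | zero =>
    rw [polyhedron_eq_empty fun σ hσ => Finset.card_eq_zero.1 (Nat.le_zero.1 (h σ hσ))]
    exact cohomologyVanishes_empty 0
  | succ q ih =>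
    induction Q, Q.toFinite using Set.Finite.induction_on with
    | empty =>
      rw [polyhedron_eq_empty (by simp)]
      exact cohomologyVanishes_empty _
    | @insert σ R _ _ ihR =>
      have hR : CohomologyVanishes (polyhedron R) (q + 1) :=
        ihR fun τ hτ => h τ (mem_insert_of_mem σ hτ)
      rw [polyhedron_eq_biUnion, biUnion_insert, ← polyhedron_eq_biUnion]
      by_cases hσ : ∃ τ ∈ R, σ ⊆ τ
      · obtain ⟨τ, hτ, hστ⟩ := hσ
        rwa [union_eq_self_of_subset_left]
        intro w hw
        rw [mem_polyhedron_singleton] at hw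
        exact ⟨hw.1, τ, hτ, fun i hi => hw.2 i fun hiσ => hi (hστ hiσ)⟩
      · refine .union (isClosed_polyhedron _) (isClosed_polyhedron _)
          (cohomologyVanishes_polyhedron_singleton σ q) hR ?_
        rw [polyhedron_singleton_inter]
        refine ih ?_
        rintro _ ⟨τ, hτ, rfl⟩
        have inter_ssubset : σ ∩ τ ⊂ σ := Finset.inter_subset_left.ssubset_of_ne fun he =>
          hσ ⟨τ, hτ, Finset.inter_eq_left.1 he⟩
        exact Nat.lt_succ_iff.1 ((Finset.card_lt_card inter_ssubset).trans_le
          (h σ (mem_insert _ _)))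

/-- The points of `polyhedron Q` at least half of whose weight is on `s`: a neighbourhood of
`polyhedron {s} ∩ polyhedron Q` which deforms into it. -/
def halfNhds (Q : Set (Finset I)) (s : Finset I) : Set (I → ℝ) :=
  polyhedron Q ∩ {w | 1 / 2 ≤ ∑ i ∈ s, w i}

theorem halfNhds_subset (Q : Set (Finset I)) (s : Finset I) : halfNhds Q s ⊆ polyhedron Q :=
  inter_subset_left

theorem isClosed_halfNhds (Q : Set (Finset I)) (s : Finset I) : IsClosed (halfNhds Q s) :=
  (isClosed_polyhedron Q).inter (isClosed_le continuous_const (by fun_prop))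

theorem isCompact_halfNhds (Q : Set (Finset I)) (s : Finset I) : IsCompact (halfNhds Q s) :=
  (isCompact_polyhedron Q).of_isClosed_subset (isClosed_halfNhds Q s) (halfNhds_subset Q s)

theorem halfNhds_union_compl [DecidableEq I] (Q : Set (Finset I)) (s : Finset I) :
    halfNhds Q s ∪ halfNhds Q sᶜ = polyhedron Q := by
  rw [halfNhds, halfNhds, ← inter_union_distrib_left, inter_eq_left]
  intro w hw
  have h := Finset.sum_add_sum_compl s w
  rw [hw.1.2] at h
  by_contra hc
  simp only [mem_union, mem_ofPred_eq, not_or, not_le] at hc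
  linarith

theorem sum_pos_of_mem_halfNhds (h : w ∈ halfNhds Q s) : 0 < ∑ i ∈ s, w i :=
  one_half_pos.trans_le h.2

section Renormalize

variable [DecidableEq I]

theorem renormalize_mem_stdSimplex (hw : w ∈ stdSimplex ℝ I) (h : 0 < ∑ i ∈ s, w i) :
    renormalize s w ∈ stdSimplex ℝ I := by
  refine ⟨fun i => div_nonneg ?_ h.le, ?_⟩
  · split_ifs
    exacts [hw.1 i, le_rfl]
  · rw [← sum_renormalize_subset h]
    exact (Finset.sum_subset (Finset.subset_univ s) fun i _ hi => by simp [renormalize, hi]).symm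

theorem renormalize_mem_polyhedron (hw : w ∈ polyhedron {σ}) (h : 0 < ∑ i ∈ s, w i) :
    renormalize s w ∈ polyhedron {σ} := by
  rw [mem_polyhedron_singleton] at *
  exact ⟨renormalize_mem_stdSimplex hw.1 h, fun i hi => by simp [renormalize, hw.2 i hi]⟩

theorem renormalize_mem_polyhedron_singleton (hw : w ∈ stdSimplex ℝ I) (h : 0 < ∑ i ∈ s, w i) :
    renormalize s w ∈ polyhedron {s} :=
  mem_polyhedron_singleton.2
    ⟨renormalize_mem_stdSimplex hw h, fun i hi => by simp [renormalize, hi]⟩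

theorem lineMap_renormalize_mem_halfNhds (hw : w ∈ halfNhds Q s) {t : ℝ} (ht : t ∈ Icc (0 : ℝ) 1) :
    AffineMap.lineMap w (renormalize s w) t ∈ halfNhds Q s := by
  have hpos := sum_pos_of_mem_halfNhds hw
  constructor
  · obtain ⟨σ, hσ, hwσ⟩ := mem_iUnion₂.1 (polyhedron_eq_biUnion Q ▸ hw.1)
    rw [polyhedron_eq_biUnion]
    exact mem_iUnion₂.2 ⟨σ, hσ, (convex_polyhedron_singleton σ).lineMap_mem hwσ
      (renormalize_mem_polyhedron hwσ hpos) ht⟩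
  · have halfSpace : Convex ℝ {w : I → ℝ | 1 / 2 ≤ ∑ i ∈ s, w i} :=
      convex_halfSpace_ge ⟨fun x y => Finset.sum_add_distrib, fun c x => by
        simp [Finset.mul_sum]⟩ _
    refine halfSpace.lineMap_mem hw.2 ?_ ht
    rw [mem_ofPred_eq, sum_renormalize_subset hpos]
    norm_num

end Renormalize

theorem isCoboundary_halfNhds {φ : Cochain (I → ℝ)} (hφ : IsCocycle (polyhedron Q) p φ)
    (h : IsCoboundary (polyhedron {s} ∩ polyhedron Q) p φ) : IsCoboundary (halfNhds Q s) p φ := by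
  classical
  refine (hφ.mono (halfNhds_subset Q s)).isCoboundary_of_deformation
    (H := fun t w => AffineMap.lineMap w (renormalize s w) t) (isCompact_halfNhds Q s) ?_
    (fun t ht w hw => lineMap_renormalize_mem_halfNhds hw ht)
    (fun w _ => AffineMap.lineMap_apply_zero _ _) (fun w hw => ?_) h
  · have continuousOn_renormalize :
        ContinuousOn (fun z : ℝ × (I → ℝ) => renormalize s z.2) (Icc 0 1 ×ˢ halfNhds Q s) := by
      refine continuousOn_pi.2 fun i =>
        ContinuousOn.div ?_ (by fun_prop) fun z hz => (sum_pos_of_mem_halfNhds hz.2).ne'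
      split_ifs <;> fun_prop
    simp only [Function.uncurry_def, AffineMap.lineMap_apply_module]
    fun_prop
  · have h1 := lineMap_renormalize_mem_halfNhds hw (right_mem_Icc.2 zero_le_one)
    beta_reduce
    rw [AffineMap.lineMap_apply_one] at h1 ⊢
    exact ⟨renormalize_mem_polyhedron_singleton hw.1.1 (sum_pos_of_mem_halfNhds hw), h1.1⟩

theorem not_hasNonzeroProduct_empty {X : Type*} [TopologicalSpace X] (j : ℕ) :
    ¬ HasNonzeroProduct (∅ : Set X) j :=
  fun ⟨_, hz, h⟩ => h (cohomologyVanishes_empty _ _ (isCocycle_cupProduct hz))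

theorem HasNonzeroProduct.exists_lt_card (h : HasNonzeroProduct (polyhedron Q) j) :
    ∃ σ ∈ Q, (j + 1).choose 2 < σ.card := by
  classical
  by_contra! hc
  obtain ⟨z, hz, h⟩ := h
  exact h (cohomologyVanishes_polyhedron _ hc _ (isCocycle_cupProduct hz))

-- On the half near `σ` the top factor is a coboundary; if the product of the others were one on the
-- half away from `σ`, the whole product would be one on their union.
theorem HasNonzeroProduct.away [DecidableEq I] (h : HasNonzeroProduct (polyhedron Q) (j + 1))
    (hσ : σ ∈ Q) : HasNonzeroProduct (polyhedron ((σᶜ ∩ ·) '' Q)) j := by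
  obtain ⟨z, hz, h⟩ := h
  have hz' (i : ℕ) (h1 : 1 ≤ i) (hi : i ≤ j) : IsCocycle (polyhedron Q) i (z i) :=
    hz i h1 (hi.trans (Nat.le_succ j))
  have top_cocycle := hz (j + 1) (Nat.le_add_left 1 j) le_rfl
  have hsub : polyhedron {σ} ∩ polyhedron Q = polyhedron {σ} := inter_eq_left.2 fun w hw =>
    (polyhedron_eq_biUnion Q).symm ▸ mem_iUnion₂.2 ⟨σ, hσ, hw⟩
  have near : IsCoboundary (halfNhds Q σ) (j + 1) (z (j + 1)) :=
    isCoboundary_halfNhds top_cocycle <| hsub.symm ▸ cohomologyVanishes_polyhedron_singleton σ j _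
      (top_cocycle.mono (inter_eq_left.1 hsub))
  rw [← polyhedron_singleton_inter]
  refine ⟨z, fun i h1 hi => (hz' i h1 hi).mono inter_subset_right, fun hc => h ?_⟩
  have far := isCoboundary_halfNhds (isCocycle_cupProduct hz') hc
  have union := halfNhds_union_compl Q σ
  rw [← succ_add_choose_two, ← union]
  exact isCoboundary_cup_union (isClosed_halfNhds _ _) (isClosed_halfNhds _ _)
    (union.symm ▸ top_cocycle) (union.symm ▸ isCocycle_cupProduct hz') near far

theorem HasNonzeroProduct.choose_add_le_card (h : HasNonzeroProduct (polyhedron Q) j)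
    {J : Finset I} (hJ : ∀ σ ∈ Q, σ ⊆ J) : (j + 2).choose 3 + (j + 1) ≤ J.card := by
  classical
  induction j generalizing Q J with
  | zero =>
    by_contra! hc
    obtain rfl : J = ∅ := Finset.card_eq_zero.1 (by simpa using hc)
    rw [polyhedron_eq_empty fun σ hσ => Finset.subset_empty.1 (hJ σ hσ)] at h
    exact not_hasNonzeroProduct_empty 0 h
  | succ j ih =>
    obtain ⟨σ, hσ, hcard⟩ := h.exists_lt_card
    have remaining : (j + 2).choose 3 + (j + 1) ≤ (J \ σ).card := ih (h.away hσ) <| by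
      rintro _ ⟨τ, hτ, rfl⟩ i hi
      simp only [Finset.mem_inter, Finset.mem_compl] at hi
      exact Finset.mem_sdiff.2 ⟨hJ τ hτ hi.2, hi.1⟩
    have pascal : (j + 1 + 2).choose 3 = (j + 1 + 1).choose 2 + (j + 2).choose 3 :=
      Nat.choose_succ_succ' (j + 2) 2
    rw [Finset.card_sdiff_of_subset (hJ σ hσ)] at remaining
    have := Finset.card_le_card (hJ σ hσ)
    omega

end AlexanderSpanier

/-! ### Contraction along flags of index sets -/

namespace NerveComparison

variable {I Y P : Type*}

section Contraction

variable [TopologicalSpace Y]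

/-- `c` is a contraction of `S` within itself to the point `y₁`. The time parameter ranges over all
of `ℝ`, so that no endpoint conditions arise in continuity proofs, but only `[0, 1]` matters. -/
structure IsContraction (S : Set Y) (c : ℝ → Y → Y) (y₁ : Y) : Prop where
  continuousOn : ContinuousOn (Function.uncurry c) (univ ×ˢ S)
  apply_zero : ∀ y ∈ S, c 0 y = y
  apply_one : ∀ y ∈ S, c 1 y = y₁
  mapsTo : ∀ s, MapsTo (c s) S S

theorem exists_isContraction {S : Set Y} [ContractibleSpace S] :
    ∃ c y₁, IsContraction S c y₁ := by
  classical
  obtain ⟨a, ⟨F⟩⟩ := id_nullhomotopic S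
  let c (s : ℝ) (y : Y) : Y := if hy : y ∈ S then F (projIcc 0 1 zero_le_one s, ⟨y, hy⟩) else y
  have apply_mem (s : ℝ) {y : Y} (hy : y ∈ S) :
      c s y = F (projIcc 0 1 zero_le_one s, ⟨y, hy⟩) := dif_pos hy
  refine ⟨c, a, ?_, fun y hy => ?_, fun y hy => ?_, fun s y hy => ?_⟩
  · rw [continuousOn_iff_continuous_domRestrict]
    have hF : Continuous fun z : ↥((univ : Set ℝ) ×ˢ S) =>
        (F (projIcc 0 1 zero_le_one z.1.1, ⟨z.1.2, z.2.2⟩) : Y) := by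
      fun_prop
    exact hF.congr fun z => (apply_mem _ z.2.2).symm
  · simp [apply_mem 0 hy]
  · simp [apply_mem 1 hy]
  · rw [apply_mem s hy]
    exact Subtype.coe_prop _

end Contraction

/-- The intersection of the members of the family `V` indexed by `σ`. -/
def commonPart (V : I → Set Y) (σ : Finset I) : Set Y := ⋂ i ∈ σ, V i

/-- The nerve of the family `V`: the finite sets of indices whose members have a common point. -/
def nerve (V : I → Set Y) : Set (Finset I) := {σ | (commonPart V σ).Nonempty}

theorem commonPart_antitone (V : I → Set Y) : Antitone (commonPart V) :=
  fun _ _ h => biInter_subset_biInter_left h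

theorem isOpen_commonPart [TopologicalSpace Y] {V : I → Set Y} (h : ∀ i, IsOpen (V i))
    (σ : Finset I) : IsOpen (commonPart V σ) :=
  isOpen_biInter_finset fun i _ => h i

/-- Each `c σ` with `σ` nonempty contracts the common part of `σ` to `y₁ σ`. -/
def IsContractionFamily [TopologicalSpace Y] (V : I → Set Y) (c : Finset I → ℝ → Y → Y)
    (y₁ : Finset I → Y) : Prop :=
  ∀ σ, σ.Nonempty → IsContraction (commonPart V σ) (c σ) (y₁ σ)

theorem exists_isContractionFamily [TopologicalSpace Y] [Nonempty Y] {V : I → Set Y}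
    (h : ∀ σ ∈ nerve V, σ.Nonempty → ContractibleSpace (commonPart V σ)) :
    ∃ c y₁, IsContractionFamily V c y₁ := by
  have contraction (σ : Finset I) :
      ∃ c y₁, σ.Nonempty → IsContraction (commonPart V σ) c y₁ := by
    obtain hempty | hne := (commonPart V σ).eq_empty_or_nonempty
    · refine ⟨fun _ y => y, Classical.arbitrary Y, fun _ => ?_⟩
      rw [hempty]
      exact ⟨by simp, by simp, by simp, by simp⟩
    · by_cases hσ : σ.Nonempty
      · have := h σ hne hσ
        obtain ⟨c, y₁, hc⟩ := exists_isContraction (S := commonPart V σ)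
        exact ⟨c, y₁, fun _ => hc⟩
      · exact ⟨fun _ y => y, Classical.arbitrary Y, fun h => absurd h hσ⟩
  choose c y₁ hc using contraction
  exact ⟨c, y₁, hc⟩

/-- One step of the process that contracts a point along a flag of index sets: the contraction `c σ`
is run for the time `s σ` provided that `σ` carries positive weight. -/
noncomputable def contractStep (c : Finset I → ℝ → Y → Y) (t s : Finset I → ℝ) (y : Y)
    (σ : Finset I) : Y :=
  if 0 < t σ then c σ (s σ) y else y

/-- The weights `t` are carried by a flag of nonempty sets. -/
structure IsFlagWeight (t : Finset I → ℝ) : Prop where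
  nonempty : ∀ σ, 0 < t σ → σ.Nonempty
  isChain : IsChain (· ⊆ ·) {σ | 0 < t σ}

/-- `y` lies in the domain of each contraction of the list `L` that carries positive weight. -/
def InDomains (V : I → Set Y) (t : Finset I → ℝ) (L : List (Finset I)) (y : Y) : Prop :=
  ∀ τ ∈ L, 0 < t τ → y ∈ commonPart V τ

/-- The list `L` is sorted by decreasing cardinality. -/
abbrev CardDecreasing (L : List (Finset I)) : Prop := L.Pairwise fun σ τ => τ.card ≤ σ.card

theorem exists_cardDecreasing (I : Type*) [Finite I] :
    ∃ L : List (Finset I), CardDecreasing L ∧ ∀ σ, σ ∈ L := by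
  classical
  have := Fintype.ofFinite I
  let r (σ τ : Finset I) : Prop := τ.card ≤ σ.card
  have : Std.Total r := ⟨fun _ _ => le_total _ _⟩
  have : IsTrans _ r := ⟨fun _ _ _ h h' => h'.trans h⟩
  exact ⟨(Finset.univ : Finset (Finset I)).toList.insertionSort r,
    List.pairwise_insertionSort r _, fun σ => by simp⟩

section Flag

variable [TopologicalSpace Y] {V : I → Set Y} {c : Finset I → ℝ → Y → Y} {y₁ : Finset I → Y}
  {t s : Finset I → ℝ} {σ : Finset I} {L L₁ L₂ : List (Finset I)} {y : Y}

theorem contractStep_of_eq_zero (hc : IsContractionFamily V c y₁) (ht : IsFlagWeight t)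
    (hs : s σ = 0) (hy : 0 < t σ → y ∈ commonPart V σ) :
    contractStep c t s y σ = y := by
  unfold contractStep
  split_ifs with h
  · rw [hs, (hc σ (ht.nonempty σ h)).apply_zero y (hy h)]
  · rfl

-- The sets that follow `σ` in the list are no larger, hence those of positive weight lie in `σ`.
theorem InDomains.contractStep (hc : IsContractionFamily V c y₁) (s : Finset I → ℝ)
    (ht : IsFlagWeight t) (hL : CardDecreasing (σ :: L)) (h : InDomains V t (σ :: L) y) :
    InDomains V t L (contractStep c t s y σ) := by
  intro τ hτ ht0
  unfold NerveComparison.contractStep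
  split_ifs with hσ
  · have τ_subset : τ ⊆ σ := (ht.isChain.total hσ ht0).elim
      (fun hle => (Finset.eq_of_subset_of_card_le hle ((List.pairwise_cons.1 hL).1 τ hτ)).ge) id
    exact commonPart_antitone V τ_subset
      ((hc σ (ht.nonempty σ hσ)).mapsTo (s σ) (h σ List.mem_cons_self hσ))
  · exact h τ (List.mem_cons_of_mem σ hτ) ht0

theorem InDomains.foldl (hc : IsContractionFamily V c y₁) (s : Finset I → ℝ)
    (ht : IsFlagWeight t) (hL : CardDecreasing (L₁ ++ L₂)) (h : InDomains V t (L₁ ++ L₂) y) :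
    InDomains V t L₂ (L₁.foldl (NerveComparison.contractStep c t s) y) := by
  induction L₁ generalizing y with
  | nil => exact h
  | cons σ L₁ ih => exact ih (List.pairwise_cons.1 hL).2 (h.contractStep hc s ht hL)

theorem foldl_contractStep_of_eq_zero (hc : IsContractionFamily V c y₁) (ht : IsFlagWeight t)
    (hs : ∀ σ, s σ = 0) (h : InDomains V t L y) : L.foldl (contractStep c t s) y = y := by
  induction L with
  | nil => rfl
  | cons σ L ih =>
    rw [List.foldl_cons, contractStep_of_eq_zero hc ht (hs σ) (h σ List.mem_cons_self)]
    exact ih fun τ hτ => h τ (List.mem_cons_of_mem σ hτ)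

theorem foldl_contractStep_of_eq_one (hc : IsContractionFamily V c y₁) (ht : IsFlagWeight t)
    (h0 : 0 < t σ) (h1 : s σ = 1) (hL : CardDecreasing (L₁ ++ σ :: L₂))
    (h : InDomains V t (L₁ ++ σ :: L₂) y) :
    (L₁ ++ σ :: L₂).foldl (contractStep c t s) y = L₂.foldl (contractStep c t s) (y₁ σ) := by
  have hy := h.foldl hc s ht hL σ List.mem_cons_self h0
  rw [List.foldl_append, List.foldl_cons]
  congr 1
  rw [contractStep, if_pos h0, h1, (hc σ (ht.nonempty σ h0)).apply_one _ hy]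

variable [TopologicalSpace P] {S : Set P} {T D : P → Finset I → ℝ} {f : P → Y} {p₀ : P}

-- Where the weight of `σ` is positive the contraction is continuous; where it vanishes, the weight
-- is below `1` nearby and the step is the identity.
theorem continuousWithinAt_contractStep (hV : ∀ i, IsOpen (V i))
    (hc : IsContractionFamily V c y₁) (hT : ContinuousOn (fun p => T p σ) S)
    (hD : ContinuousOn (fun p => D p σ) S) (hTD : ∀ p ∈ S, T p σ < 1 → D p σ = 0)
    (hflag : ∀ p ∈ S, IsFlagWeight (T p)) (hp₀ : p₀ ∈ S)
    (hf : ContinuousWithinAt f S p₀) (hfσ : ∀ p ∈ S, 0 < T p σ → f p ∈ commonPart V σ) :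
    ContinuousWithinAt (fun p => contractStep c (T p) (D p) (f p) σ) S p₀ := by
  obtain hpos | hle := lt_or_ge 0 (T p₀ σ)
  · have contraction := (hc σ ((hflag p₀ hp₀).nonempty σ hpos)).continuousOn.continuousAt
      (x := (D p₀ σ, f p₀)) ((isOpen_univ.prod (isOpen_commonPart hV σ)).mem_nhds
        ⟨mem_univ _, hfσ p₀ hp₀ hpos⟩)
    have composite : ContinuousWithinAt (fun p => c σ (D p σ) (f p)) S p₀ :=
      contraction.comp_continuousWithinAt (f := fun p => (D p σ, f p)) ((hD p₀ hp₀).prodMk hf)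
    refine composite.congr_of_eventuallyEq ?_ (if_pos hpos)
    filter_upwards [(hT p₀ hp₀).eventually (lt_mem_nhds hpos)] with p hp using if_pos hp
  · have step_eq (p : P) (hp : p ∈ S) (hlt : T p σ < 1) :
        contractStep c (T p) (D p) (f p) σ = f p :=
      contractStep_of_eq_zero hc (hflag p hp) (hTD p hp hlt) (hfσ p hp)
    have hlt : T p₀ σ < 1 := hle.trans_lt one_pos
    refine hf.congr_of_eventuallyEq ?_ (step_eq p₀ hp₀ hlt)
    filter_upwards [(hT p₀ hp₀).eventually (gt_mem_nhds hlt), self_mem_nhdsWithin] with p hp hpS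
      using step_eq p hpS hp

theorem continuousWithinAt_foldl_contractStep (hV : ∀ i, IsOpen (V i))
    (hc : IsContractionFamily V c y₁) (hT : ∀ σ, ContinuousOn (fun p => T p σ) S)
    (hD : ∀ σ, ContinuousOn (fun p => D p σ) S) (hTD : ∀ p ∈ S, ∀ σ, T p σ < 1 → D p σ = 0)
    (hflag : ∀ p ∈ S, IsFlagWeight (T p)) (hp₀ : p₀ ∈ S) (hL : CardDecreasing L)
    (hf : ContinuousWithinAt f S p₀)
    (h : ∀ p ∈ S, InDomains V (T p) L (f p)) :
    ContinuousWithinAt (fun p => L.foldl (contractStep c (T p) (D p)) (f p)) S p₀ := by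
  induction L generalizing f with
  | nil => exact hf
  | cons σ L ih =>
    exact ih (List.pairwise_cons.1 hL).2
      (continuousWithinAt_contractStep hV hc (hT σ) (hD σ) (fun p hp => hTD p hp σ) hflag hp₀ hf
        fun p hp => h p hp σ List.mem_cons_self)
      fun p hp => (h p hp).contractStep hc _ (hflag p hp) hL

end Flag

section Weights

variable [Fintype I] [DecidableEq I] {w : I → ℝ} {σ : Finset I}

/-- A continuous function of `w` that is positive exactly when `σ` is nonempty, `w` is positive on
`σ`, and `w` is larger on `σ` than off `σ`. -/
noncomputable def gap (w : I → ℝ) (σ : Finset I) : ℝ :=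
  if σ.Nonempty then (∏ i ∈ σ, max 0 (w i)) * ∏ i ∈ σ, ∏ j ∈ σᶜ, max 0 (w i - w j) else 0

theorem continuous_gap (σ : Finset I) : Continuous fun w : I → ℝ => gap w σ := by
  unfold gap
  split_ifs <;> fun_prop

theorem gap_nonneg (w : I → ℝ) (σ : Finset I) : 0 ≤ gap w σ := by
  unfold gap
  split_ifs
  · exact mul_nonneg (Finset.prod_nonneg fun i _ => le_max_left _ _)
      (Finset.prod_nonneg fun i _ => Finset.prod_nonneg fun i _ => le_max_left _ _)
  · exact le_rfl

theorem max_zero_ne_zero {a : ℝ} : max 0 a ≠ 0 ↔ 0 < a := by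
  rw [Ne, max_eq_left_iff, not_le]

theorem gap_pos : 0 < gap w σ ↔
    σ.Nonempty ∧ (∀ i ∈ σ, 0 < w i) ∧ ∀ i ∈ σ, ∀ j ∉ σ, w j < w i := by
  rw [(gap_nonneg w σ).lt_iff_ne', gap]
  split_ifs with h
  · simp only [h, true_and, mul_ne_zero_iff, Finset.prod_ne_zero_iff, Finset.mem_compl,
      max_zero_ne_zero, sub_pos]
  · simp only [h, false_and, ne_eq, not_true_eq_false]

/-- The gaps of `w` rescaled to total `3 * 2 ^ #I`, so that one of them exceeds `2`. -/
noncomputable def flagWeight (w : I → ℝ) (σ : Finset I) : ℝ :=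
  3 * Fintype.card (Finset I) * gap w σ / ∑ τ, gap w τ

theorem sum_gap_pos (hw : w ∈ stdSimplex ℝ I) : 0 < ∑ τ, gap w τ := by
  let support : Finset I := {i | 0 < w i}
  have mem_support (i : I) : i ∈ support ↔ 0 < w i := by simp [support]
  refine Finset.sum_pos' (fun _ _ => gap_nonneg _ _) ⟨support, Finset.mem_univ _, gap_pos.2
    ⟨?_, fun i => (mem_support i).1, fun i hi j hj => ?_⟩⟩
  · by_contra! hn
    have nonpos (i : I) : w i ≤ 0 :=
      not_lt.1 fun hi => Finset.notMem_empty i (hn ▸ (mem_support i).2 hi)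
    linarith [hw.2, Finset.sum_nonpos fun i (_ : i ∈ Finset.univ) => nonpos i]
  · rw [mem_support] at hi hj
    exact (not_lt.1 hj).trans_lt hi

theorem gap_pos_of_flagWeight_pos (h : 0 < flagWeight w σ) : 0 < gap w σ :=
  (gap_nonneg w σ).lt_of_ne' fun he => h.ne' (by simp [flagWeight, he])

theorem isFlagWeight_flagWeight (w : I → ℝ) : IsFlagWeight (flagWeight w) where
  nonempty σ hσ := (gap_pos.1 (gap_pos_of_flagWeight_pos hσ)).1
  isChain σ hσ τ hτ _ := by
    have hσ' := (gap_pos.1 (gap_pos_of_flagWeight_pos hσ)).2.2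
    have hτ' := (gap_pos.1 (gap_pos_of_flagWeight_pos hτ)).2.2
    by_contra! hc
    obtain ⟨i, hi, hi'⟩ := Finset.not_subset.1 hc.1
    obtain ⟨j, hj, hj'⟩ := Finset.not_subset.1 hc.2
    exact lt_asymm (hσ' i hi j hj') (hτ' j hj i hi')

theorem exists_two_lt_flagWeight (hw : w ∈ stdSimplex ℝ I) : ∃ σ, 2 < flagWeight w σ := by
  by_contra! hc
  have sum_le : ∑ σ, flagWeight w σ ≤ ∑ σ : Finset I, 2 := Finset.sum_le_sum fun σ _ => hc σ
  have sum_eq : ∑ σ, flagWeight w σ = 3 * Fintype.card (Finset I) := by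
    simp only [flagWeight, ← Finset.sum_div, ← Finset.mul_sum]
    rw [mul_div_assoc, div_self (sum_gap_pos hw).ne', mul_one]
  rw [sum_eq, Finset.sum_const, Finset.card_univ, nsmul_eq_mul] at sum_le
  have card_pos : (0 : ℝ) < Fintype.card (Finset I) := Nat.cast_pos.2 Fintype.card_pos
  linarith

theorem continuousOn_flagWeight (σ : Finset I) :
    ContinuousOn (fun w => flagWeight w σ) (stdSimplex ℝ I) :=
  (continuousOn_const.mul (continuous_gap σ).continuousOn).div
    (continuous_finsetSum _ fun τ _ => continuous_gap τ).continuousOn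
    fun _ hw => (sum_gap_pos hw).ne'

/-- The time for which `σ` is contracted: `0` for weights up to `1`, and `1` from weight `2` on. -/
noncomputable def contractionTime (w : I → ℝ) (σ : Finset I) : ℝ :=
  max 0 (min 1 (flagWeight w σ - 1))

theorem continuousOn_contractionTime (σ : Finset I) :
    ContinuousOn (fun w => contractionTime w σ) (stdSimplex ℝ I) :=
  continuousOn_const.sup (continuousOn_const.inf
    ((continuousOn_flagWeight σ).sub continuousOn_const))

theorem contractionTime_eq_zero (h : flagWeight w σ < 1) : contractionTime w σ = 0 :=
  max_eq_left ((min_le_right _ _).trans (by linarith))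

theorem contractionTime_eq_one (h : 2 < flagWeight w σ) : contractionTime w σ = 1 := by
  rw [contractionTime, min_eq_left (by linarith), max_eq_right zero_le_one]

end Weights

end NerveComparison

/-! ### Factorization through the nerve -/

namespace NerveComparison

open AlexanderSpanier

variable {I X Y : Type*} [Fintype I] {V : I → Set Y} {w : I → ℝ} {y : Y}

theorem exists_mem_of_mem_polyhedron_nerve (hw : w ∈ polyhedron (nerve V)) :
    ∃ y, ∀ i, 0 < w i → y ∈ V i := by
  obtain ⟨-, σ, ⟨y, hy⟩, h⟩ := hw
  refine ⟨y, fun i hi => mem_iInter₂.1 hy i ?_⟩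
  by_contra hiσ
  exact hi.ne' (h i hiσ)

theorem exists_continuous_mem_polyhedron_nerve [TopologicalSpace X] [NormalSpace X]
    [ParacompactSpace X] [TopologicalSpace Y] (hV : ∀ i, IsOpen (V i))
    (hcov : ⋃ i, V i = univ) {f : X → Y} (hf : Continuous f) :
    ∃ l : X → I → ℝ, Continuous l ∧ (∀ x, l x ∈ polyhedron (nerve V)) ∧
      ∀ x i, 0 < l x i → f x ∈ V i := by
  obtain ⟨ρ, hρ⟩ := PartitionOfUnity.exists_isSubordinate isClosed_univ (fun i => f ⁻¹' V i)
    (fun i => (hV i).preimage hf) (by rw [← preimage_iUnion, hcov, preimage_univ])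
  have mem_of_ne_zero (x : X) (i : I) (h : ρ i x ≠ 0) : f x ∈ V i := hρ i (subset_tsupport _ h)
  refine ⟨fun x i => ρ i x, continuous_pi fun i => (ρ i).continuous, fun x =>
    ⟨⟨fun i => ρ.nonneg i x, ?_⟩, Finset.univ.filter (ρ · x ≠ 0), ⟨f x, ?_⟩, ?_⟩,
    fun x i h => mem_of_ne_zero x i h.ne'⟩
  · rw [← finsum_eq_sum_of_fintype]
    exact ρ.sum_eq_one (mem_univ x)
  · exact mem_iInter₂.2 fun i hi => mem_of_ne_zero x i (Finset.mem_filter.1 hi).2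
  · simp

section Flow

variable [DecidableEq I] {c : Finset I → ℝ → Y → Y} {L L₁ L₂ : List (Finset I)}

theorem inDomains_flagWeight (h : ∀ i, 0 < w i → y ∈ V i) (L : List (Finset I)) :
    InDomains V (flagWeight w) L y :=
  fun _ _ ht => mem_iInter₂.2 fun i hi => h i ((gap_pos.1 (gap_pos_of_flagWeight_pos ht)).2.1 i hi)

/-- The endpoint of the contraction process with the weights of `w`, started at `y`. -/
noncomputable def flow (c : Finset I → ℝ → Y → Y) (L : List (Finset I)) (w : I → ℝ) (y : Y) : Y :=
  L.foldl (contractStep c (flagWeight w) (contractionTime w)) y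

variable [TopologicalSpace Y] {y₁ : Finset I → Y} {σ : Finset I} {y' : Y}

theorem flow_append_cons (hc : IsContractionFamily V c y₁) (hL : CardDecreasing (L₁ ++ σ :: L₂))
    (hσ : 2 < flagWeight w σ) (hy : ∀ i, 0 < w i → y ∈ V i) :
    flow c (L₁ ++ σ :: L₂) w y = flow c L₂ w (y₁ σ) :=
  foldl_contractStep_of_eq_one hc (isFlagWeight_flagWeight w) (two_pos.trans hσ)
    (contractionTime_eq_one hσ) hL (inDomains_flagWeight hy _)

theorem flow_eq_flow (hc : IsContractionFamily V c y₁) (hL : CardDecreasing L)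
    (mem_L : ∀ σ, σ ∈ L) (hw : w ∈ stdSimplex ℝ I) (hy : ∀ i, 0 < w i → y ∈ V i)
    (hy' : ∀ i, 0 < w i → y' ∈ V i) : flow c L w y = flow c L w y' := by
  obtain ⟨σ, hσ⟩ := exists_two_lt_flagWeight hw
  obtain ⟨L₁, L₂, rfl⟩ := List.append_of_mem (mem_L σ)
  rw [flow_append_cons hc hL hσ hy, flow_append_cons hc hL hσ hy']

-- Near each point some `σ` has weight above `2`, and running the process up to `σ` gives `y₁ σ`
-- whatever the starting points are, so these need not depend continuously on `w`.
theorem continuousOn_flow (hV : ∀ i, IsOpen (V i)) (hc : IsContractionFamily V c y₁)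
    (hL : CardDecreasing L) (mem_L : ∀ σ, σ ∈ L) {K : Set (I → ℝ)} (hK : K ⊆ stdSimplex ℝ I)
    {g : (I → ℝ) → Y} (hg : ∀ w ∈ K, ∀ i, 0 < w i → g w ∈ V i) :
    ContinuousOn (fun w => flow c L w (g w)) K := fun w hw => by
  obtain ⟨σ, hσ⟩ := exists_two_lt_flagWeight (hK hw)
  obtain ⟨L₁, L₂, rfl⟩ := List.append_of_mem (mem_L σ)
  have hL' : CardDecreasing (L₁ ++ [σ] ++ L₂) := by simpa using hL
  have initial_eq (w' : I → ℝ) (hw' : w' ∈ K) (hlt : 2 < flagWeight w' σ) :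
      flow c (L₁ ++ [σ]) w' (g w') = y₁ σ :=
    flow_append_cons hc (hL'.sublist (List.sublist_append_left _ _)) hlt (hg w' hw')
  have eventually_lt : ∀ᶠ w' in 𝓝[K] w, 2 < flagWeight w' σ :=
    ((continuousOn_flagWeight σ).mono hK w hw).eventually (lt_mem_nhds hσ)
  have initial_continuous : ContinuousWithinAt (fun w' => flow c (L₁ ++ [σ]) w' (g w')) K w := by
    refine (continuousWithinAt_const (b := y₁ σ)).congr_of_eventuallyEq ?_ (initial_eq w hw hσ)
    filter_upwards [eventually_lt, self_mem_nhdsWithin] with w' hlt hw' using initial_eq w' hw' hlt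
  have key := continuousWithinAt_foldl_contractStep hV hc
    (fun τ => (continuousOn_flagWeight τ).mono hK)
    (fun τ => (continuousOn_contractionTime τ).mono hK) (fun _ _ _ => contractionTime_eq_zero)
    (fun w' _ => isFlagWeight_flagWeight w') hw
    (hL'.sublist (List.sublist_append_right _ _)) initial_continuous fun w' hw' =>
      (inDomains_flagWeight (hg w' hw') _).foldl hc _ (isFlagWeight_flagWeight w') hL'
  simpa only [flow, ← List.foldl_append, List.append_assoc, List.singleton_append] using key

theorem continuous_foldl_contractStep_mul_time [TopologicalSpace X] (hV : ∀ i, IsOpen (V i))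
    (hc : IsContractionFamily V c y₁) (hL : CardDecreasing L) {f : X → Y} (hf : Continuous f)
    {l : X → I → ℝ} (hl : Continuous l) (hlw : ∀ x, l x ∈ stdSimplex ℝ I)
    (hlf : ∀ x i, 0 < l x i → f x ∈ V i) :
    Continuous fun z : ℝ × X =>
      L.foldl (contractStep c (flagWeight (l z.2)) fun σ => z.1 * contractionTime (l z.2) σ)
        (f z.2) := by
  have hl' : ContinuousOn (fun z : ℝ × X => l z.2) univ := (hl.comp continuous_snd).continuousOn
  have mapsTo : MapsTo (fun z : ℝ × X => l z.2) univ (stdSimplex ℝ I) := fun z _ => hlw z.2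
  rw [← continuousOn_univ]
  exact fun z hz => continuousWithinAt_foldl_contractStep hV hc
    (fun σ => (continuousOn_flagWeight σ).comp hl' mapsTo)
    (fun σ => continuousOn_fst.mul ((continuousOn_contractionTime σ).comp hl' mapsTo))
    (fun z _ σ h => by simp only [contractionTime_eq_zero h, mul_zero])
    (fun z _ => isFlagWeight_flagWeight _) hz hL (hf.comp continuous_snd).continuousWithinAt
    fun z _ => inDomains_flagWeight (hlf z.2) L

end Flow

theorem exists_factorization_polyhedron_nerve [TopologicalSpace X] [NormalSpace X]
    [ParacompactSpace X] [TopologicalSpace Y] [Nonempty Y]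
    (hV : ∀ i, IsOpen (V i)) (hcov : ⋃ i, V i = univ)
    (hcon : ∀ σ ∈ nerve V, σ.Nonempty → ContractibleSpace (commonPart V σ))
    {f : X → Y} (hf : Continuous f) :
    ∃ (l : X → I → ℝ) (G : (I → ℝ) → Y) (H : ℝ → X → Y), Continuous l ∧
      (∀ x, l x ∈ polyhedron (nerve V)) ∧ ContinuousOn G (polyhedron (nerve V)) ∧
      Continuous (Function.uncurry H) ∧ H 0 = f ∧ H 1 = G ∘ l := by
  classical
  obtain ⟨c, y₁, hc⟩ := exists_isContractionFamily hcon
  obtain ⟨L, hL, mem_L⟩ := exists_cardDecreasing I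
  obtain ⟨l, hl, hlw, hlf⟩ := exists_continuous_mem_polyhedron_nerve hV hcov hf
  have selection (w : I → ℝ) : ∃ y, w ∈ polyhedron (nerve V) → ∀ i, 0 < w i → y ∈ V i := by
    by_cases hw : w ∈ polyhedron (nerve V)
    · exact (exists_mem_of_mem_polyhedron_nerve hw).imp fun _ h _ => h
    · exact ⟨Classical.arbitrary Y, fun h => absurd h hw⟩
  choose g hg using selection
  refine ⟨l, fun w => flow c L w (g w), fun s x => L.foldl (contractStep c (flagWeight (l x))
    fun σ => s * contractionTime (l x) σ) (f x), hl, hlw,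
    continuousOn_flow hV hc hL mem_L (fun _ h => h.1) hg,
    continuous_foldl_contractStep_mul_time hV hc hL hf hl (fun x => (hlw x).1) hlf,
    funext fun x => ?_, funext fun x => ?_⟩
  · exact foldl_contractStep_of_eq_zero hc (isFlagWeight_flagWeight _) (fun σ => zero_mul _)
      (inDomains_flagWeight (hlf x) L)
  · simp only [one_mul]
    exact flow_eq_flow hc hL mem_L (hlw x).1 (hlf x) (hg (l x) (hlw x))

end NerveComparison

/-! ### Good covers -/

namespace AlexanderSpanier

variable {X W : Type*} [TopologicalSpace X] [TopologicalSpace W] {j : ℕ}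

theorem HasNonzeroProduct.of_cohomologous {S : Set X} {T : Set W} (h : HasNonzeroProduct S j)
    {f : X → W} (hf : ContinuousOn f S) (hfm : MapsTo f S T)
    {g : W → X} (hg : ContinuousOn g T) (hgm : MapsTo g T S)
    (hgf : ∀ p φ, IsCocycle S p φ → Cohomologous S p φ (pullback f (pullback g φ))) :
    HasNonzeroProduct T j := by
  obtain ⟨z, hz, hne⟩ := h
  refine ⟨fun i => pullback g (z i), fun i h1 h2 => (hz i h1 h2).pullback hg hgm, fun hc => hne ?_⟩
  rw [← pullback_cupProduct] at hc
  exact (hgf _ _ (isCocycle_cupProduct hz)).isCoboundary (hc.pullback hf hfm)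

theorem HasNonzeroProduct.univ_coe {S : Set X} (h : HasNonzeroProduct S j) :
    HasNonzeroProduct (univ : Set S) j := by
  classical
  obtain rfl | ⟨x, hx⟩ := S.eq_empty_or_nonempty
  · exact absurd h (not_hasNonzeroProduct_empty j)
  let r (y : X) : S := if hy : y ∈ S then ⟨y, hy⟩ else ⟨x, hx⟩
  have coe_r (y : X) (hy : y ∈ S) : (r y : X) = y := by simp only [r, dif_pos hy]
  have continuousOn_r : ContinuousOn r S := by
    rw [IsInducing.subtypeVal.continuousOn_iff]
    exact continuousOn_id.congr coe_r
  refine h.of_cohomologous continuousOn_r (mapsTo_univ _ _)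
    continuous_subtype_val.continuousOn (fun y _ => y.2) fun p φ _ => ?_
  refine (Cohomologous.refl (φ := φ)).congr fun t ht => ?_
  change φ t + φ t = φ t + φ fun i => r (t i)
  simp only [coe_r _ (ht _)]

theorem IsCocycle.cohomologous_pullback_of_homotopic [CompactSpace X] {f g : C(X, W)}
    (h : f.Homotopic g) {p : ℕ} {φ : Cochain W} (hφ : IsCocycle univ p φ) :
    Cohomologous univ p (pullback f φ) (pullback g φ) := by
  obtain ⟨K⟩ := h
  have key := hφ.cohomologous_pullback (A := univ) isCompact_univ
    (H := fun s x => K (projIcc 0 1 zero_le_one s, x))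
    (K.continuous.comp ((continuous_projIcc.comp continuous_fst).prodMk
      continuous_snd)).continuousOn fun _ _ => mapsTo_univ _ _
  have left_eq : (fun x => K (projIcc 0 1 zero_le_one (0 : ℝ), x)) = f :=
    funext fun x => by rw [projIcc_left]; exact K.apply_zero x
  have right_eq : (fun x => K (projIcc 0 1 zero_le_one (1 : ℝ), x)) = g :=
    funext fun x => by rw [projIcc_right]; exact K.apply_one x
  rwa [left_eq, right_eq] at key

open NerveComparison in
theorem HasNonzeroProduct.choose_add_le_card_of_homotopyEquiv [CompactSpace X] [T2Space X]
    [Nonempty X] (h : HasNonzeroProduct (univ : Set X) j) {Y : Type*} [TopologicalSpace Y]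
    (e : ContinuousMap.HomotopyEquiv X Y) {I : Type*} [Fintype I] {V : I → Set Y}
    (hV : ∀ i, IsOpen (V i)) (hcov : ⋃ i, V i = univ)
    (hcon : ∀ σ ∈ nerve V, σ.Nonempty → ContractibleSpace (commonPart V σ)) :
    (j + 2).choose 3 + (j + 1) ≤ Fintype.card I := by
  have : Nonempty Y := .map e.toFun ‹_›
  obtain ⟨l, G, H, hl, hlm, hG, hH, H_zero, H_one⟩ :=
    exists_factorization_polyhedron_nerve hV hcov hcon e.toFun.continuous
  have polyhedron_nerve : HasNonzeroProduct (polyhedron (nerve V)) j := by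
    refine h.of_cohomologous hl.continuousOn (fun x _ => hlm x) (g := e.invFun ∘ G)
      (e.invFun.continuous.comp_continuousOn hG) (mapsTo_univ _ _) fun p φ hφ => ?_
    have left_inv : Cohomologous univ p (pullback (e.invFun.comp e.toFun) φ) φ :=
      hφ.cohomologous_pullback_of_homotopic e.left_inv
    have factorization := hφ.cohomologous_pullback (A := univ) isCompact_univ
      (H := fun s x => e.invFun (H s x)) (e.invFun.continuous.comp hH).continuousOn
      fun _ _ => mapsTo_univ _ _
    rw [H_zero, H_one] at factorization
    exact Cohomologous.trans (Cohomologous.symm left_inv) factorization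
  exact polyhedron_nerve.choose_add_le_card fun σ _ => Finset.subset_univ σ

end AlexanderSpanier

namespace SpecialOrthogonal

open AlexanderSpanier Matrix

variable (n : ℕ)

theorem standardSO_self : standardSO n n = specialOrthogonalGroup (Fin n) ℝ := by
  ext A
  rw [SetLike.mem_coe, mem_specialOrthogonalGroup_iff, mem_orthogonalGroup_iff']
  exact ⟨fun h => ⟨h.1, h.2.1⟩, fun h => ⟨h.1, h.2, fun i hi => absurd i.2 hi.not_gt⟩⟩

instance compactSpace_specialOrthogonalGroup : CompactSpace (specialOrthogonalGroup (Fin n) ℝ) :=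
  isCompact_iff_compactSpace.1 (standardSO_self n ▸ isCompact_standardSO n n)

theorem hasNonzeroProduct_specialOrthogonalGroup [NeZero n] :
    HasNonzeroProduct (univ : Set (specialOrthogonalGroup (Fin n) ℝ)) (n - 1) := by
  have h := (cohomology_standardSO (n := n) (Nat.sub_one_lt (NeZero.ne n))).2
  rw [Nat.sub_one_add_one (NeZero.ne n), standardSO_self] at h
  exact h.univ_coe

end SpecialOrthogonal

open NerveComparison in
theorem IsGoodCover.contractibleSpace_commonPart {Y : Type*} [TopologicalSpace Y]
    {U : Finset (Set Y)} (hU : IsGoodCover U) {σ : Finset U}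
    (hσ : σ ∈ nerve (fun s : U => (s : Set Y))) (hne : σ.Nonempty) :
    ContractibleSpace (commonPart (fun s : U => (s : Set Y)) σ) := by
  have e : commonPart (fun s : U => (s : Set Y)) σ =
      ⋂₀ ((σ.map (Function.Embedding.subtype _) : Finset (Set Y)) : Set (Set Y)) := by
    ext y
    simp [commonPart]
  rw [nerve, mem_ofPred_eq, e] at hσ
  rw [e]
  exact hU.2.2 _ (Finset.map_subtype_subset σ) (by simpa using hne) hσ

theorem stmt12_general (n : ℕ) (Y : Type*) [TopologicalSpace Y]
    (h : Nonempty (ContinuousMap.HomotopyEquiv ↥(Matrix.specialOrthogonalGroup (Fin n) ℝ) Y))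
    (U : Finset (Set Y)) (hU : IsGoodCover U) :
    (n + 1).choose 3 + n ≤ U.card := by
  obtain rfl | hn := n.eq_zero_or_pos
  · exact Nat.zero_le _
  have : NeZero n := ⟨hn.ne'⟩
  obtain ⟨e⟩ := h
  have bound := (SpecialOrthogonal.hasNonzeroProduct_specialOrthogonalGroup n)
    |>.choose_add_le_card_of_homotopyEquiv e (V := fun s : U => (s : Set Y)) (fun s => hU.1 s s.2)
      (by rw [← hU.2.1, sUnion_eq_iUnion]; rfl) fun _ => hU.contractibleSpace_commonPart
  rwa [Fintype.card_coe, show n - 1 + 2 = n + 1 by omega, Nat.sub_add_cancel hn] at bound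

theorem cubic_div_six_le_choose_add {n m : ℕ} (hn : 4 ≤ n) (hm : m = n / 2) :
    (4 * m ^ 3 + 3 * m ^ 2 + 5 * m + 12) / 6 ≤ (n + 1).choose 3 + n := by
  have two_m_le : 2 * m ≤ n := by omega
  have choose_le : (2 * m + 1).choose 3 ≤ (n + 1).choose 3 := Nat.choose_le_choose 3 (by omega)
  obtain ⟨a, rfl⟩ : ∃ a, m = a + 2 := ⟨m - 2, by omega⟩
  have six_mul_choose : (2 * a + 5) * (2 * a + 4) * (2 * a + 3) = 6 * (2 * a + 5).choose 3 := by
    have h := Nat.descFactorial_eq_factorial_mul_choose (2 * a + 5) 3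
    rw [show Nat.factorial 3 = 6 from rfl] at h
    simp only [← h, Nat.descFactorial_succ, Nat.descFactorial_zero, Nat.add_one_sub_one,
      show 2 * a + 5 - 2 = 2 * a + 3 by omega, Nat.sub_zero]
    ring
  have cubic_le : 4 * (a + 2) ^ 3 + 3 * (a + 2) ^ 2 + 5 * (a + 2) + 12 ≤
      (2 * a + 5) * (2 * a + 4) * (2 * a + 3) + 6 * (2 * (a + 2)) := by
    nlinarith [Nat.zero_le (a ^ 3), Nat.zero_le (a ^ 2)]
  rw [show 2 * (a + 2) + 1 = 2 * a + 5 by ring] at choose_le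
  omega

/-- The covering type of the special orthogonal group `SO(n)` is at least
`(4m³+3m²+5m+12)/6` with `m = ⌊n/2⌋`: every good cover of any space homotopy equivalent
to `SO(n)` has at least that many members.  (The numerator is divisible by 6, so `/` is
exact; `n / 2` is natural (floor) division.) -/
theorem stmt12 (n : ℕ) (hn : 4 ≤ n) (m : ℕ) (hm : m = n / 2)
    (Y : Type*) [TopologicalSpace Y]
    (h : Nonempty (ContinuousMap.HomotopyEquiv ↥(Matrix.specialOrthogonalGroup (Fin n) ℝ) Y))
    (U : Finset (Set Y)) (hU : IsGoodCover U) :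
    (4 * m ^ 3 + 3 * m ^ 2 + 5 * m + 12) / 6 ≤ U.card :=
  (cubic_div_six_le_choose_add hn hm).trans (stmt12_general n Y h U hU)
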